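/- arXiv:1504.03457 — 2 statements merged into one kernel-verified Lean document; each statement's English description precedes it below -/
import Mathlib

section
/- Let T > 0 and let g : ℝ × [0,∞) → ℝ be continuous and T-periodic in its first variable. Let N > 0 be an integer and assume there exists a constant η̂ such that μ_N x − η̂ ≤ g(t,x) ≤ μ_{N+1} x + η̂ for every t ∈ [0,T] and every x > 0. Assume moreover that for every τ ∈ [0,T]: ∫₀ᵀ limsup_{x→+∞} ( g(t,x) − μ_{N+1} x ) ψ_{N+1}(t+τ) dt < 0 and ∫₀ᵀ liminf_{x→+∞} ( g(t,x) − μ_N x ) ψ_N(t+τ) dt > 0. Then there exists a T-periodic 0-bouncing solution of the equation x'' + g(t,x) = 0. -/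
open Real Filter Set

/-- A `w`-bouncing solution of `x'' + p(t,x) = 0` (Bonheure–Fabry), defined on all of `ℝ`. -/
def IsBouncingSolution (w : ℝ) (p : ℝ → ℝ → ℝ) (x : ℝ → ℝ) : Prop :=
  Continuous x ∧
  (∀ t, w ≤ x t) ∧
  (∀ t0, w < x t0 →
    ∃ x' : ℝ → ℝ, (∀ᶠ s in nhds t0, HasDerivAt x (x' s) s) ∧
      HasDerivAt x' (-(p t0 (x t0))) t0) ∧
  (∀ t0, x t0 = w → (∀ᶠ s in nhdsWithin t0 {t0}ᶜ, w < x s) →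
    ∃ v : ℝ, HasDerivWithinAt x v (Iic t0) t0 ∧ HasDerivWithinAt x (-v) (Ici t0) t0) ∧
  (∀ t0 v, x t0 = w → v ≠ 0 →
    (HasDerivWithinAt x v (Iic t0) t0 ∨ HasDerivWithinAt x v (Ici t0) t0) →
    ∀ᶠ s in nhdsWithin t0 {t0}ᶜ, w < x s) ∧
  (∀ a b : ℝ, a < b → (∀ t ∈ Ioo a b, x t = w) → ∀ t ∈ Ioo a b, 0 ≤ p t w)

/-- `μ_j = (jπ/T)²`, the asymptote of the `j`-th Dancer–Fučík curve. -/
noncomputable def muEig (T : ℝ) (j : ℕ) : ℝ := ((j : ℝ) * π / T) ^ 2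

/-- `ψ_j(t) = sin(√μ_j t)` on `[0, T/j]`, extended by `(T/j)`-periodicity. -/
noncomputable def psiEig (T : ℝ) (j : ℕ) (t : ℝ) : ℝ :=
  Real.sin (Real.sqrt (muEig T j) * (Int.fract (t / (T / (j : ℝ))) * (T / (j : ℝ))))


lemma int_const_of_continuous {a b : ℝ} (hab : a ≤ b) (J : ℝ → ℝ) (hJ : ContinuousOn J (Icc a b))
    (hInt : ∀ w ∈ Icc a b, ∃ n : ℤ, J w = 2 * π * n) : J a = J b := by
  have hpre : IsPreconnected (Icc a b) := isPreconnected_Icc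
  have hc : ContinuousOn (fun w => J w / (2 * π)) (Icc a b) := hJ.div_const _
  have key : ∀ w ∈ Icc a b, ∃ n : ℤ, J w / (2 * π) = n := by
    intro w hw
    obtain ⟨n, hn⟩ := hInt w hw
    refine ⟨n, ?_⟩
    rw [hn]; field_simp
  by_contra hne
  -- image is an interval
  have hival := intermediate_value_uIcc (f := fun w => J w / (2 * π)) (a := a) (b := b)
    (by rwa [uIcc_of_le hab])
  rw [uIcc_of_le hab] at hival
  obtain ⟨n, hn⟩ := key a ⟨le_rfl, hab⟩
  obtain ⟨m, hm⟩ := key b ⟨hab, le_rfl⟩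
  rw [hn, hm] at hival
  have hnm : n ≠ m := by
    rintro rfl
    apply hne
    have : J a / (2 * π) = J b / (2 * π) := by rw [hn, hm]
    have h2 : (2 * π) ≠ 0 := by positivity
    field_simp at this
    exact this
  rcases lt_or_gt_of_ne hnm with h | h
  · have h1 : (n : ℝ) + 1 ≤ m := by exact_mod_cast h
    have : (n : ℝ) + 1 / 2 ∈ uIcc (n : ℝ) m := by
      rw [uIcc_of_le (by linarith)]; constructor <;> linarith
    obtain ⟨w, hw, hw'⟩ := hival this
    obtain ⟨k, hk⟩ := key w hw
    simp only at hw'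
    rw [hk] at hw'
    have h3 : (2 * k : ℝ) = 2 * n + 1 := by linarith
    have : (2 * k : ℤ) = 2 * n + 1 := by exact_mod_cast h3
    omega
  · have h1 : (m : ℝ) + 1 ≤ n := by exact_mod_cast h
    have : (m : ℝ) + 1 / 2 ∈ uIcc (n : ℝ) m := by
      rw [uIcc_of_ge (by linarith)]; constructor <;> linarith
    obtain ⟨w, hw, hw'⟩ := hival this
    obtain ⟨k, hk⟩ := key w hw
    simp only at hw'
    rw [hk] at hw'
    have h3 : (2 * k : ℝ) = 2 * m + 1 := by linarith
    have : (2 * k : ℤ) = 2 * m + 1 := by exact_mod_cast h3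
    omega

/-- Poincaré–Bohl fixed point theorem in the plane. -/
lemma poincare_bohl (P : ℂ → ℂ) (hP : Continuous P) (R : ℝ) (hR : 0 < R)
    (h : ∀ z : ℂ, ‖z‖ = R → ∀ l : ℝ, 1 ≤ l → P z ≠ l * z) :
    ∃ z : ℂ, ‖z‖ ≤ R ∧ P z = z := by
  by_contra hno
  push Not at hno
  let r : ℂ → ℂ := fun z => ((R / max R ‖z‖ : ℝ) : ℂ) * z
  let s : ℂ → ℝ := fun z => max 0 (min 1 (2 - ‖z‖ / R))
  have hmax : ∀ z : ℂ, max R ‖z‖ ≠ 0 := fun z => (lt_of_lt_of_le hR (le_max_left _ _)).ne'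
  have hr : Continuous r := by
    have : Continuous fun z : ℂ => R / max R ‖z‖ :=
      continuous_const.div (by fun_prop) hmax
    fun_prop
  have hs : Continuous s := by fun_prop
  let Q : C(ℂ, ℂ) := ⟨fun z => r z - s z * P (r z), by fun_prop⟩
  have hQ : ∀ z, Q z ∈ ({0}ᶜ : Set ℂ) := by
    intro z hz
    have hz : r z - s z * P (r z) = 0 := hz
    rcases le_total ‖z‖ R with hzR | hzR
    · have h1 : r z = z := by simp [r, max_eq_left hzR, hR.ne']
      have h2 : s z = 1 := by
        have : ‖z‖ / R ≤ 1 := by rw [div_le_one hR]; exact hzR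
        simp only [s]
        rw [min_eq_left (by linarith), max_eq_right zero_le_one]
      rw [h1, h2] at hz
      apply hno z hzR
      simp at hz
      exact (sub_eq_zero.mp hz).symm
    · have hz0 : 0 < ‖z‖ := lt_of_lt_of_le hR hzR
      have h1 : ‖r z‖ = R := by
        simp only [r, max_eq_right hzR]
        rw [norm_mul, Complex.norm_real, Real.norm_of_nonneg (by positivity)]
        field_simp
      have h0 : 0 ≤ s z := le_max_left _ _
      have h2 : s z ≤ 1 := max_le zero_le_one (min_le_left _ _)
      rcases h0.eq_or_lt with h0 | h0
      · rw [← h0] at hz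
        simp at hz
        rw [hz] at h1; simp at h1; exact hR.ne h1
      · apply h (r z) h1 (1 / s z) (by rw [le_div_iff₀ h0]; linarith)
        have : (s z : ℂ) ≠ 0 := by exact_mod_cast h0.ne'
        push_cast
        field_simp
        linear_combination -hz
  have he : Complex.exp (Complex.log (Q 0)) = Q 0 := Complex.exp_log (hQ 0)
  obtain ⟨F, ⟨-, hF⟩, -⟩ := Complex.isCoveringMapOn_exp.existsUnique_continuousMap_lifts Q
    (a₀ := 0) he hQ
  -- on the circle of radius `2 * R`, `Q z = z / 2`
  have hQc : ∀ θ : ℝ, Q (2 * R * Complex.exp (θ * Complex.I)) = R * Complex.exp (θ * Complex.I) := by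
    intro θ
    have hn : ‖(2 * R * Complex.exp (θ * Complex.I) : ℂ)‖ = 2 * R := by
      rw [norm_mul, Complex.norm_exp_ofReal_mul_I, norm_mul, Complex.norm_real]
      simp [abs_of_pos hR]
    have h1 : s (2 * R * Complex.exp (θ * Complex.I)) = 0 := by
      simp only [s]
      rw [hn]
      have : 2 * R / R = 2 := by field_simp
      rw [this]; simp
    change r _ - s _ * P (r _) = _
    rw [h1]
    simp only [r]
    rw [hn, max_eq_right (by linarith)]
    have : (R : ℂ) ≠ 0 := by exact_mod_cast hR.ne'
    push_cast
    field_simp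
    simp
  have hexp : ∀ z, Complex.exp (F z) = Q z := fun z => congrFun hF z
  let J : ℝ → ℝ := fun θ => (F (2 * R * Complex.exp (θ * Complex.I))).im - θ
  have hJc : Continuous J := by
    have : Continuous fun θ : ℝ => (2 * R * Complex.exp (θ * Complex.I) : ℂ) := by fun_prop
    have := F.continuous.comp this
    exact (Complex.continuous_im.comp this).sub continuous_id
  have hJi : ∀ θ : ℝ, ∃ n : ℤ, J θ = 2 * π * n := by
    intro θ
    have h1 : Complex.exp (F (2 * R * Complex.exp (θ * Complex.I))) =
        Complex.exp (Real.log R + θ * Complex.I) := by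
      rw [hexp, hQc, Complex.exp_add, ← Complex.ofReal_exp, Real.exp_log hR]
    rw [Complex.exp_eq_exp_iff_exists_int] at h1
    obtain ⟨n, hn⟩ := h1
    refine ⟨n, ?_⟩
    simp only [J]
    rw [hn]
    simp
    ring
  have := int_const_of_continuous (a := 0) (b := 2 * π) (by positivity) J hJc.continuousOn
    (fun w _ => hJi w)
  simp only [J] at this
  have h3 : Complex.exp (((2 * π : ℝ) : ℂ) * Complex.I) = 1 := by
    push_cast; exact Complex.exp_two_pi_mul_I
  rw [h3] at this
  simp at this
  linarith [Real.pi_pos]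


lemma tendsto_int_bdd {E : Type*} [NormedAddCommGroup E] [NormedSpace ℝ E] {a b : ℝ}
    (f : ℕ → ℝ → E) (g : ℝ → E)
    (hf : ∀ k, ContinuousOn (f k) (uIcc a b)) (C : ℝ) (hb : ∀ k, ∀ t ∈ uIcc a b, ‖f k t‖ ≤ C)
    (hl : ∀ t ∈ uIcc a b, Tendsto (fun k => f k t) atTop (nhds (g t))) :
    Tendsto (fun k => ∫ t in a..b, f k t) atTop (nhds (∫ t in a..b, g t)) := by
  apply intervalIntegral.tendsto_integral_filter_of_dominated_convergence (fun _ => C)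
  · refine Eventually.of_forall fun k => ?_
    exact ((hf k).mono uIoc_subset_uIcc).aestronglyMeasurable measurableSet_uIoc
  · refine Eventually.of_forall fun k => ?_
    refine Eventually.of_forall fun t ht => hb k t (uIoc_subset_uIcc ht)
  · exact intervalIntegrable_const
  · exact Eventually.of_forall fun t ht => hl t (uIoc_subset_uIcc ht)

lemma ascoli_extract {a b : ℝ} (hab : a ≤ b) (f : ℕ → ℝ → ℂ) (K : NNReal) (M : ℝ)
    (hL : ∀ k, LipschitzOnWith K (f k) (Icc a b)) (hM : ∀ k, ∀ t ∈ Icc a b, ‖f k t‖ ≤ M) :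
    ∃ φ : ℕ → ℕ, StrictMono φ ∧ ∃ Z : ℝ → ℂ, Continuous Z ∧
      ∀ t ∈ Icc a b, Tendsto (fun k => f (φ k) t) atTop (nhds (Z t)) := by
  let G : ℕ → BoundedContinuousFunction (Icc a b) ℂ := fun k =>
    BoundedContinuousFunction.mkOfCompact ⟨fun t => f k t.1, (hL k).continuousOn.domRestrict⟩
  have hcomp : IsCompact (closure (range G)) := by
    apply BoundedContinuousFunction.arzela_ascoli (Metric.closedBall (0 : ℂ) M)
      (isCompact_closedBall _ _)
    · rintro _ t ⟨k, rfl⟩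
      rw [mem_closedBall_zero_iff]
      exact hM k t.1 t.2
    · have : UniformEquicontinuous (fun (g : range G) (t : Icc a b) => (g : BoundedContinuousFunction (Icc a b) ℂ) t) := by
        apply LipschitzWith.uniformEquicontinuous _ K
        rintro ⟨_, k, rfl⟩
        exact fun x y => hL k x.2 y.2
      exact this.equicontinuous
  obtain ⟨g, -, φ, hφ, hlim⟩ := hcomp.tendsto_subseq (fun k => subset_closure (mem_range_self k) : ∀ k, G k ∈ closure (range G))
  refine ⟨φ, hφ, IccExtend hab g, g.continuous.Icc_extend' , ?_⟩
  intro t ht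
  rw [IccExtend_of_mem hab g ht]
  exact (BoundedContinuousFunction.tendsto_iff_tendstoUniformly.mp hlim).tendsto_at ⟨t, ht⟩

/-- Tonelli delayed approximations. -/
noncomputable def dly (F : ℝ → ℂ → ℂ) (δ : ℝ) : ℕ → ℂ → ℝ → ℂ
  | 0, z, _ => z
  | m + 1, z, t => z + ∫ s in (0 : ℝ)..t, F s (dly F δ m z (max (s - δ) 0))

lemma dly_cont (F : ℝ → ℂ → ℂ) (hF : Continuous (Function.uncurry F)) (δ : ℝ) (m : ℕ) :
    Continuous (Function.uncurry (dly F δ m)) := by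
  induction m with
  | zero => exact continuous_fst
  | succ m ih =>
    have h1 : Continuous (Function.uncurry fun (z : ℂ) (s : ℝ) => F s (dly F δ m z (max (s - δ) 0))) := by
      have : Continuous fun q : ℂ × ℝ => (q.2, Function.uncurry (dly F δ m) (q.1, max (q.2 - δ) 0)) := by
        fun_prop
      exact hF.comp this
    have h2 := intervalIntegral.continuous_parametric_primitive_of_continuous (μ := MeasureTheory.volume) (a₀ := 0) h1
    exact continuous_fst.add h2

lemma dly_cont_t (F : ℝ → ℂ → ℂ) (hF : Continuous (Function.uncurry F)) (δ : ℝ) (m : ℕ) (z : ℂ) :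
    Continuous (dly F δ m z) :=
  (dly_cont F hF δ m).comp (by fun_prop : Continuous fun t : ℝ => (z, t))

lemma dly_integrand (F : ℝ → ℂ → ℂ) (hF : Continuous (Function.uncurry F)) (δ : ℝ) (m : ℕ) (z : ℂ) :
    Continuous fun s => F s (dly F δ m z (max (s - δ) 0)) := by
  have h := dly_cont_t F hF δ m z
  have : Continuous fun s : ℝ => (s, dly F δ m z (max (s - δ) 0)) := by fun_prop
  exact hF.comp this

lemma dly_stable (F : ℝ → ℂ → ℂ) {δ : ℝ} (hδ : 0 ≤ δ) (m : ℕ) (z : ℂ) :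
    ∀ t, 0 ≤ t → t ≤ m * δ → dly F δ (m + 1) z t = dly F δ m z t := by
  induction m with
  | zero =>
    intro t h0 h1
    have : t = 0 := by simp at h1; linarith
    simp [dly, this]
  | succ m ih =>
    intro t h0 h1
    rw [dly, dly]
    congr 1
    apply intervalIntegral.integral_congr
    intro s hs
    rw [uIcc_of_le h0] at hs
    simp only
    rw [ih _ (le_max_right _ _)]
    apply max_le
    · push_cast at h1
      linarith [hs.2]
    · positivity

lemma dly_bound (F : ℝ → ℂ → ℂ) (hF : Continuous (Function.uncurry F)) {K : ℝ} (hK : 0 ≤ K)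
    (hG : ∀ t z, ‖F t z‖ ≤ K * (1 + ‖z‖)) {δ : ℝ} (hδ : 0 ≤ δ) (m : ℕ) (z : ℂ) :
    ∀ t, 0 ≤ t → 1 + ‖dly F δ m z t‖ ≤ (1 + ‖z‖) * exp (K * t) := by
  induction m with
  | zero =>
    intro t ht
    have : 1 ≤ exp (K * t) := one_le_exp (by positivity)
    simp only [dly]
    nlinarith [norm_nonneg z]
  | succ m ih =>
    intro t ht
    rw [dly]
    have h1 : ‖∫ s in (0 : ℝ)..t, F s (dly F δ m z (max (s - δ) 0))‖ ≤
        ∫ s in (0 : ℝ)..t, (1 + ‖z‖) * (K * exp (K * s)) := by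
      apply intervalIntegral.norm_integral_le_of_norm_le ht
      · refine Eventually.of_forall fun s hs => ?_
        refine (hG _ _).trans ?_
        have h2 := ih (max (s - δ) 0) (le_max_right _ _)
        have h3 : exp (K * max (s - δ) 0) ≤ exp (K * s) := by
          apply exp_le_exp.mpr
          apply mul_le_mul_of_nonneg_left _ hK
          exact max_le (by linarith) hs.1.le
        calc K * (1 + ‖dly F δ m z (max (s - δ) 0)‖) ≤ K * ((1 + ‖z‖) * exp (K * s)) := by
              apply mul_le_mul_of_nonneg_left _ hK
              refine h2.trans ?_
              apply mul_le_mul_of_nonneg_left h3 (by positivity)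
          _ = _ := by ring
      · apply Continuous.intervalIntegrable; fun_prop
    have h2 : ∫ s in (0 : ℝ)..t, (1 + ‖z‖) * (K * exp (K * s)) = (1 + ‖z‖) * (exp (K * t) - 1) := by
      rw [intervalIntegral.integral_const_mul]
      congr 1
      have : ∀ s ∈ uIcc 0 t, HasDerivAt (fun s => exp (K * s)) (K * exp (K * s)) s := by
        intro s _
        have := ((hasDerivAt_id s).const_mul K).exp
        simpa [mul_comm] using this
      rw [intervalIntegral.integral_eq_sub_of_hasDerivAt this
        (Continuous.intervalIntegrable (by fun_prop) _ _)]
      simp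
    rw [h2] at h1
    have := norm_add_le z (∫ s in (0 : ℝ)..t, F s (dly F δ m z (max (s - δ) 0)))
    nlinarith

lemma ode_dichotomy (F : ℝ → ℂ → ℂ) (hF : Continuous (Function.uncurry F)) {K : ℝ} (hK : 0 ≤ K)
    (hG : ∀ t z, ‖F t z‖ ≤ K * (1 + ‖z‖)) {T : ℝ} (hT : 0 < T) {R : ℝ} (hR : 0 < R)
    (hbad : ∀ Z : ℝ → ℂ, Continuous Z →
      (∀ t ∈ Icc (0 : ℝ) T, Z t = Z 0 + ∫ s in (0 : ℝ)..t, F s (Z s)) →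
      ‖Z 0‖ = R → ∀ l : ℝ, 1 ≤ l → Z T ≠ l * Z 0) :
    ∃ Z : ℝ → ℂ, Continuous Z ∧
      (∀ t ∈ Icc (0 : ℝ) T, Z t = Z 0 + ∫ s in (0 : ℝ)..t, F s (Z s)) ∧ ‖Z 0‖ ≤ R ∧ Z T = Z 0 := by
  let δ : ℕ → ℝ := fun k => T / (k + 1)
  have hδ0 : ∀ k, 0 ≤ δ k := fun k => by positivity
  have hδ : Tendsto δ atTop (nhds 0) := by
    have := (tendsto_one_div_add_atTop_nhds_zero_nat (𝕜 := ℝ)).const_mul T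
    simpa [δ, div_eq_mul_inv] using this
  let S : Set (ℂ × ℂ) := {q | (‖q.1‖ = R ∧ (R : ℂ) ^ 2 * q.2 = ((q.2 * (starRingEnd ℂ) q.1).re : ℂ) * q.1 ∧
    R ^ 2 ≤ (q.2 * (starRingEnd ℂ) q.1).re) ∨ q.2 = q.1}
  have hS : IsClosed S := by
    have c1 : IsClosed {q : ℂ × ℂ | ‖q.1‖ = R} := isClosed_eq (by fun_prop) continuous_const
    have c2 : IsClosed {q : ℂ × ℂ | (R : ℂ) ^ 2 * q.2 =
        ((q.2 * (starRingEnd ℂ) q.1).re : ℂ) * q.1} :=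
      isClosed_eq (by fun_prop) (by fun_prop)
    have c3 : IsClosed {q : ℂ × ℂ | R ^ 2 ≤ (q.2 * (starRingEnd ℂ) q.1).re} :=
      isClosed_le (by fun_prop) (by fun_prop)
    have c4 : IsClosed {q : ℂ × ℂ | q.2 = q.1} := isClosed_eq continuous_snd continuous_fst
    exact (c1.inter (c2.inter c3)).union c4
  have step : ∀ k : ℕ, ∃ z : ℂ, ‖z‖ ≤ R ∧ (z, dly F (δ k) (k + 1) z T) ∈ S := by
    intro k
    by_cases hb : ∃ z : ℂ, ‖z‖ = R ∧ ∃ l : ℝ, 1 ≤ l ∧ dly F (δ k) (k + 1) z T = l * z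
    · obtain ⟨z, hz, l, hl, hzl⟩ := hb
      refine ⟨z, hz.le, Or.inl ⟨hz, ?_⟩⟩
      have : (dly F (δ k) (k + 1) z T * (starRingEnd ℂ) z) = ((l * R ^ 2 : ℝ) : ℂ) := by
        rw [hzl, mul_assoc, Complex.mul_conj, Complex.normSq_eq_norm_sq, hz]
        push_cast; ring
      simp only
      rw [this, Complex.ofReal_re, hzl]
      constructor
      · push_cast; ring
      · nlinarith [sq_nonneg R]
    · push Not at hb
      obtain ⟨z, hz, hzz⟩ := poincare_bohl (fun z => dly F (δ k) (k + 1) z T)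
        ((dly_cont F hF (δ k) (k + 1)).comp (by fun_prop : Continuous fun z : ℂ => (z, T))) R hR
        (fun z hz l hl => hb z hz l hl)
      exact ⟨z, hz, Or.inr hzz⟩
  choose z hzR hzS using step
  let Y : ℕ → ℝ → ℂ := fun k => dly F (δ k) (k + 1) (z k)
  let M : ℝ := (1 + R) * exp (K * T)
  have hM0 : 0 ≤ M := by positivity
  have hYM : ∀ k, ∀ t ∈ Icc (0 : ℝ) T, 1 + ‖Y k t‖ ≤ M := by
    intro k t ht
    refine (dly_bound F hF hK hG (hδ0 k) (k + 1) (z k) t ht.1).trans ?_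
    apply mul_le_mul (by linarith [hzR k]) _ (exp_nonneg _) (by positivity)
    exact exp_le_exp.mpr (mul_le_mul_of_nonneg_left ht.2 hK)
  have hYeq : ∀ k, ∀ t ∈ Icc (0 : ℝ) T,
      Y k t = z k + ∫ s in (0 : ℝ)..t, F s (Y k (max (s - δ k) 0)) := by
    intro k t ht
    have := dly_stable F (hδ0 k) (k + 1) (z k) t ht.1 (by
      simp only [δ]; push_cast
      rw [mul_div_cancel₀ _ (by positivity)]; exact ht.2)
    simp only [Y]
    rw [← this, dly]
  have hmem : ∀ k, ∀ s ∈ Icc (0 : ℝ) T, max (s - δ k) 0 ∈ Icc (0 : ℝ) T := by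
    intro k s hs
    exact ⟨le_max_right _ _, max_le (by linarith [hδ0 k, hs.2]) hT.le⟩
  have hInt : ∀ k, ∀ s ∈ Icc (0 : ℝ) T, ‖F s (Y k (max (s - δ k) 0))‖ ≤ K * M := by
    intro k s hs
    exact (hG _ _).trans (mul_le_mul_of_nonneg_left (hYM k _ (hmem k s hs)) hK)
  have hcont : ∀ k, Continuous fun s => F s (Y k (max (s - δ k) 0)) := fun k =>
    dly_integrand F hF (δ k) (k + 1) (z k)
  have hKM : 0 ≤ K * M := by positivity
  have hLip : ∀ k, LipschitzOnWith (Real.toNNReal (K * M)) (Y k) (Icc 0 T) := by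
    intro k
    apply LipschitzOnWith.of_dist_le_mul
    intro x hx y hy
    rw [Real.coe_toNNReal _ hKM, dist_eq_norm, Real.dist_eq, hYeq k x hx, hYeq k y hy,
      add_sub_add_left_eq_sub, intervalIntegral.integral_interval_sub_left
      ((hcont k).intervalIntegrable _ _) ((hcont k).intervalIntegrable _ _)]
    apply intervalIntegral.norm_integral_le_of_norm_le_const
    intro s hs
    apply hInt
    have := uIoc_subset_uIcc hs
    exact (convex_Icc 0 T).ordConnected.uIcc_subset hy hx this
  obtain ⟨φ, hφ, Z, hZ, hlim⟩ := ascoli_extract hT.le Y _ M hLip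
    (fun k t ht => by linarith [hYM k t ht])
  have h0 : (0 : ℝ) ∈ Icc (0 : ℝ) T := ⟨le_rfl, hT.le⟩
  have hTT : T ∈ Icc (0 : ℝ) T := ⟨hT.le, le_rfl⟩
  have hY0 : ∀ k, Y k 0 = z k := by
    intro k; rw [hYeq k 0 h0]; simp
  have hz0 : Tendsto (fun k => z (φ k)) atTop (nhds (Z 0)) := by
    have := hlim 0 h0
    simpa only [hY0] using this
  have hZeq : ∀ t ∈ Icc (0 : ℝ) T, Z t = Z 0 + ∫ s in (0 : ℝ)..t, F s (Z s) := by
    intro t ht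
    have hsub : uIcc 0 t ⊆ Icc 0 T := by rw [uIcc_of_le ht.1]; exact Icc_subset_Icc_right ht.2
    have h1 := hlim t ht
    have h2 : Tendsto (fun k => ∫ s in (0 : ℝ)..t, F s (Y (φ k) (max (s - δ (φ k)) 0))) atTop
        (nhds (∫ s in (0 : ℝ)..t, F s (Z s))) := by
      apply tendsto_int_bdd _ _ (fun k => (hcont (φ k)).continuousOn) (K * M)
      · intro k s hs
        exact hInt _ _ (hsub hs)
      · intro s hs
        have hs' := hsub hs
        have h3 : Tendsto (fun k => Y (φ k) (max (s - δ (φ k)) 0)) atTop (nhds (Z s)) := by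
          have h4 := hlim s hs'
          rw [tendsto_iff_dist_tendsto_zero] at h4 ⊢
          have h5 : Tendsto (fun k => K * M * δ (φ k) + dist (Y (φ k) s) (Z s)) atTop (nhds 0) := by
            have := ((hδ.comp hφ.tendsto_atTop).const_mul (K * M)).add h4
            simpa using this
          refine squeeze_zero (fun _ => dist_nonneg) (fun k => ?_) h5
          refine (dist_triangle _ (Y (φ k) s) _).trans ?_
          gcongr
          have h6 := (hLip (φ k)).dist_le_mul _ (hmem (φ k) s hs') s hs'
          rw [Real.coe_toNNReal _ hKM] at h6
          refine h6.trans ?_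
          gcongr
          rw [Real.dist_eq, abs_le]
          have := hδ0 (φ k)
          constructor
          · linarith [le_max_left (s - δ (φ k)) 0]
          · linarith [max_le (by linarith : s - δ (φ k) ≤ s) hs'.1]
        exact ((hF.tendsto (s, Z s)).comp (tendsto_const_nhds.prodMk_nhds h3))
    have h3 := hz0.add h2
    refine tendsto_nhds_unique h1 (h3.congr fun k => ?_)
    exact (hYeq (φ k) t ht).symm
  have hSlim : (Z 0, Z T) ∈ S := by
    refine hS.mem_of_tendsto (hz0.prodMk_nhds (hlim T hTT)) (Eventually.of_forall fun k => hzS (φ k))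
  have hZR : ‖Z 0‖ ≤ R := le_of_tendsto hz0.norm (Eventually.of_forall fun k => hzR (φ k))
  refine ⟨Z, hZ, hZeq, hZR, ?_⟩
  rcases hSlim with ⟨h1, h2, h3⟩ | h
  · exfalso
    simp only at h1 h2 h3
    refine hbad Z hZ hZeq h1 ((Z T * (starRingEnd ℂ) (Z 0)).re / R ^ 2) ?_ ?_
    · rw [le_div_iff₀ (by positivity)]; linarith
    · have : (R : ℂ) ≠ 0 := by exact_mod_cast hR.ne'
      push_cast
      field_simp
      linear_combination h2
  · exact h


noncomputable def SSf (L : ℝ) (z : ℂ) : ℝ := Real.sqrt (z.re ^ 2 + z.im ^ 2 + 4 * L ^ 2)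
noncomputable def AAf (L : ℝ) (z : ℂ) : ℝ := (SSf L z + z.re) / 2
noncomputable def BBf (L : ℝ) (z : ℂ) : ℝ := (SSf L z - z.re) / 2
noncomputable def XXf (L : ℝ) (z : ℂ) : ℝ := Real.sqrt (BBf L z)

/-- The desingularised planar vector field. -/
noncomputable def FFf (f : ℝ → ℝ → ℝ) (L : ℝ) (t : ℝ) (z : ℂ) : ℂ :=
  ⟨-z.im * (f t (XXf L z) / XXf L z) - z.im, 2 * AAf L z - 2 * (XXf L z * f t (XXf L z))⟩

lemma SSf_cont : Continuous (fun q : ℝ × ℂ => SSf q.1 q.2) := by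
  unfold SSf; fun_prop
lemma AAf_cont : Continuous (fun q : ℝ × ℂ => AAf q.1 q.2) := by
  have := SSf_cont
  unfold AAf; fun_prop
lemma BBf_cont : Continuous (fun q : ℝ × ℂ => BBf q.1 q.2) := by
  have := SSf_cont
  unfold BBf; fun_prop
lemma XXf_cont : Continuous (fun q : ℝ × ℂ => XXf q.1 q.2) := by
  have := BBf_cont
  unfold XXf; fun_prop

lemma SSf_sq (L : ℝ) (z : ℂ) : SSf L z ^ 2 = z.re ^ 2 + z.im ^ 2 + 4 * L ^ 2 :=
  Real.sq_sqrt (by positivity)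
lemma SSf_nonneg (L : ℝ) (z : ℂ) : 0 ≤ SSf L z := Real.sqrt_nonneg _
lemma abs_re_le_SSf (L : ℝ) (z : ℂ) : |z.re| ≤ SSf L z := by
  apply Real.abs_le_sqrt; nlinarith [sq_nonneg z.im, sq_nonneg L]
lemma AAf_nonneg (L : ℝ) (z : ℂ) : 0 ≤ AAf L z := by
  have := (abs_le.mp (abs_re_le_SSf L z)).1; unfold AAf; linarith
lemma BBf_nonneg (L : ℝ) (z : ℂ) : 0 ≤ BBf L z := by
  have := (abs_le.mp (abs_re_le_SSf L z)).2; unfold BBf; linarith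
lemma AB_eq (L : ℝ) (z : ℂ) : AAf L z * BBf L z = z.im ^ 2 / 4 + L ^ 2 := by
  have := SSf_sq L z; unfold AAf BBf; linear_combination this / 4
lemma A_add_B (L : ℝ) (z : ℂ) : AAf L z + BBf L z = SSf L z := by unfold AAf BBf; ring
lemma A_sub_B (L : ℝ) (z : ℂ) : AAf L z - BBf L z = z.re := by unfold AAf BBf; ring
lemma BBf_pos {L : ℝ} (hL : 0 < L) (z : ℂ) : 0 < BBf L z := by
  rcases (BBf_nonneg L z).eq_or_lt with h | h
  · have := AB_eq L z
    rw [← h] at this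
    nlinarith [sq_nonneg z.im, sq_pos_of_pos hL]
  · exact h
lemma XXf_pos {L : ℝ} (hL : 0 < L) (z : ℂ) : 0 < XXf L z := Real.sqrt_pos.mpr (BBf_pos hL z)
lemma XXf_sq (L : ℝ) (z : ℂ) : XXf L z ^ 2 = BBf L z := Real.sq_sqrt (BBf_nonneg L z)
lemma norm_sq_re_im (z : ℂ) : ‖z‖ ^ 2 = z.re ^ 2 + z.im ^ 2 := by
  rw [← Complex.normSq_eq_norm_sq, Complex.normSq_apply]; ring
lemma SSf_zero (z : ℂ) : SSf 0 z = ‖z‖ := by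
  unfold SSf
  rw [← norm_sq_re_im]; simp
lemma norm_le_SSf (L : ℝ) (z : ℂ) : ‖z‖ ≤ SSf L z := by
  apply Real.le_sqrt_of_sq_le; rw [norm_sq_re_im]; nlinarith [sq_nonneg L]
lemma SSf_le {L : ℝ} (hL : 0 ≤ L) (z : ℂ) : SSf L z ≤ ‖z‖ + 2 * L := by
  apply Real.sqrt_le_iff.mpr
  constructor
  · positivity
  · nlinarith [norm_sq_re_im z, norm_nonneg z]
lemma im_div_le {L : ℝ} (hL : 0 < L) (z : ℂ) : |z.im / XXf L z| ≤ 2 * √(AAf L z) := by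
  have hx := XXf_pos hL z
  have h1 : (z.im / XXf L z) ^ 2 ≤ (2 * √(AAf L z)) ^ 2 := by
    rw [div_pow, mul_pow, Real.sq_sqrt (AAf_nonneg L z), div_le_iff₀ (by positivity), XXf_sq]
    nlinarith [AB_eq L z, sq_nonneg L]
  exact abs_le_of_sq_le_sq h1 (by positivity)

lemma FFf_cont {f : ℝ → ℝ → ℝ} (hf : Continuous (Function.uncurry f)) {L : ℝ} (hL : 0 < L) :
    Continuous (Function.uncurry (FFf f L)) := by
  have hA : Continuous fun q : ℝ × ℂ => AAf L q.2 :=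
    AAf_cont.comp (by fun_prop : Continuous fun q : ℝ × ℂ => (L, q.2))
  have hX : Continuous fun q : ℝ × ℂ => XXf L q.2 :=
    XXf_cont.comp (by fun_prop : Continuous fun q : ℝ × ℂ => (L, q.2))
  have hff : Continuous fun q : ℝ × ℂ => f q.1 (XXf L q.2) :=
    hf.comp (by fun_prop : Continuous fun q : ℝ × ℂ => (q.1, XXf L q.2))
  have hd : Continuous fun q : ℝ × ℂ => f q.1 (XXf L q.2) / XXf L q.2 :=
    hff.div hX fun q => (XXf_pos hL q.2).ne'
  have : Function.uncurry (FFf f L) = fun q : ℝ × ℂ =>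
      ((-q.2.im * (f q.1 (XXf L q.2) / XXf L q.2) - q.2.im : ℝ) : ℂ) +
      ((2 * AAf L q.2 - 2 * (XXf L q.2 * f q.1 (XXf L q.2)) : ℝ) : ℂ) * Complex.I := by
    funext q
    apply Complex.ext <;> simp [Function.uncurry, FFf]
  rw [this]
  fun_prop

lemma FFf_growth {f : ℝ → ℝ → ℝ} {K : ℝ} (hK : 0 ≤ K) (hG : ∀ t x, 0 ≤ x → |f t x| ≤ K * (1 + x))
    {L : ℝ} (hL : 0 < L) (hL1 : L ≤ 1) (t : ℝ) (z : ℂ) :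
    ‖FFf f L t z‖ ≤ (18 * K + 9) * (1 + ‖z‖) := by
  have h1 := Complex.norm_le_abs_re_add_abs_im (FFf f L t z)
  have hx := XXf_pos hL z
  have hS := SSf_le hL.le z
  have hA := AAf_nonneg L z
  have hB := BBf_nonneg L z
  have hAB := A_add_B L z
  have hg := hG t (XXf L z) hx.le
  have hx2 := XXf_sq L z
  have ha2 := Real.sq_sqrt hA
  have ha0 := Real.sqrt_nonneg (AAf L z)
  have him : |z.im| ≤ SSf L z := by
    apply Real.abs_le_sqrt; nlinarith [sq_nonneg z.re, sq_nonneg L]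
  have e1 : |(FFf f L t z).re| ≤ 2 * √(AAf L z) * (K * (1 + XXf L z)) + SSf L z := by
    have : (FFf f L t z).re = -(z.im / XXf L z * f t (XXf L z)) - z.im := by
      simp only [FFf]; ring
    rw [this]
    refine (abs_sub _ _).trans ?_
    rw [abs_neg, abs_mul]
    have := mul_le_mul (im_div_le hL z) hg (abs_nonneg _) (by positivity)
    linarith
  have e2 : |(FFf f L t z).im| ≤ 2 * SSf L z + 2 * (XXf L z * (K * (1 + XXf L z))) := by
    simp only [FFf]
    refine (abs_sub _ _).trans ?_
    rw [abs_mul, abs_mul, abs_mul, abs_of_nonneg hA, abs_of_pos hx, abs_two]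
    have := mul_le_mul_of_nonneg_left hg hx.le
    linarith
  set a := √(AAf L z)
  set x := XXf L z
  have q1 : a * (1 + x) ≤ SSf L z + 1 := by nlinarith [sq_nonneg (a - x), sq_nonneg (a - 1)]
  have q2 : x * (1 + x) ≤ 2 * (SSf L z + 1) := by nlinarith [sq_nonneg (x - 1)]
  have q3 : 2 * a * (K * (1 + x)) ≤ 2 * (K * (SSf L z + 1)) := by
    have := mul_le_mul_of_nonneg_left q1 hK; linarith
  have q4 : 2 * (x * (K * (1 + x))) ≤ 4 * (K * (SSf L z + 1)) := by
    have := mul_le_mul_of_nonneg_left q2 hK; linarith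
  have q5 : K * (SSf L z + 1) ≤ K * (3 * (1 + ‖z‖)) := by
    apply mul_le_mul_of_nonneg_left _ hK; linarith [norm_nonneg z]
  linarith [norm_nonneg z]

/-- Solutions (in integral form) of the desingularised system on `[a,b]`. -/
def IsSolL (f : ℝ → ℝ → ℝ) (L a b : ℝ) (Z : ℝ → ℂ) : Prop :=
  Continuous Z ∧ ∀ t ∈ Icc a b, Z t = Z a + ∫ s in a..t, FFf f L s (Z s)

lemma solL_deriv {f : ℝ → ℝ → ℝ} (hf : Continuous (Function.uncurry f)) {L a b : ℝ}
    (hL : 0 < L) {Z : ℝ → ℂ} (hZ : IsSolL f L a b Z) {t : ℝ} (ht : t ∈ Ioo a b) :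
    HasDerivAt Z (FFf f L t (Z t)) t := by
  have hc : Continuous fun s => FFf f L s (Z s) :=
    (FFf_cont hf hL).comp (continuous_id.prodMk hZ.1)
  have h1 : HasDerivAt (fun t => Z a + ∫ s in a..t, FFf f L s (Z s)) (FFf f L t (Z t)) t := by
    have := (hc.integral_hasStrictDerivAt a t).hasDerivAt
    exact this.const_add _
  apply h1.congr_of_eventuallyEq
  filter_upwards [Ioo_mem_nhds ht.1 ht.2] with s hs
  exact hZ.2 s ⟨hs.1.le, hs.2.le⟩

lemma solL_im {f : ℝ → ℝ → ℝ} (hf : Continuous (Function.uncurry f)) {L a b : ℝ}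
    (hL : 0 < L) {Z : ℝ → ℂ} (hZ : IsSolL f L a b Z) {t : ℝ} (ht : t ∈ Ioo a b) :
    HasDerivAt (fun t => (Z t).im)
      (2 * AAf L (Z t) - 2 * (XXf L (Z t) * f t (XXf L (Z t)))) t := by
  have := Complex.imCLM.hasFDerivAt.comp_hasDerivAt t (solL_deriv hf hL hZ ht)
  exact this

lemma solL_re {f : ℝ → ℝ → ℝ} (hf : Continuous (Function.uncurry f)) {L a b : ℝ}
    (hL : 0 < L) {Z : ℝ → ℂ} (hZ : IsSolL f L a b Z) {t : ℝ} (ht : t ∈ Ioo a b) :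
    HasDerivAt (fun t => (Z t).re)
      (-(Z t).im * (f t (XXf L (Z t)) / XXf L (Z t)) - (Z t).im) t := by
  have := Complex.reCLM.hasFDerivAt.comp_hasDerivAt t (solL_deriv hf hL hZ ht)
  exact this

lemma solL_SS {f : ℝ → ℝ → ℝ} (hf : Continuous (Function.uncurry f)) {L a b : ℝ}
    (hL : 0 < L) {Z : ℝ → ℂ} (hZ : IsSolL f L a b Z) {t : ℝ} (ht : t ∈ Ioo a b) :
    HasDerivAt (fun t => SSf L (Z t))
      ((Z t).im - (Z t).im * (f t (XXf L (Z t)) / XXf L (Z t))) t := by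
  have h1 := solL_re hf hL hZ ht
  have h2 := solL_im hf hL hZ ht
  have hx := XXf_pos hL (Z t)
  have hSp : 0 < (Z t).re ^ 2 + (Z t).im ^ 2 + 4 * L ^ 2 := by positivity
  have h3 := (((h1.pow 2).add (h2.pow 2)).add_const (4 * L ^ 2)).sqrt hSp.ne'
  have hS : 0 < SSf L (Z t) := Real.sqrt_pos.mpr hSp
  refine h3.congr_deriv ?_
  have hx2 := XXf_sq L (Z t)
  have e1 : 2 * AAf L (Z t) - (Z t).re = SSf L (Z t) := by unfold AAf; ring
  have e2 : (Z t).re + 2 * XXf L (Z t) ^ 2 = SSf L (Z t) := by rw [hx2]; unfold BBf; ring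
  change _ / (2 * SSf L (Z t)) = _
  set x := XXf L (Z t)
  rw [div_eq_iff (by positivity)]
  field_simp
  simp
  linear_combination (2 * (Z t).im * x) * e1 - (2 * (Z t).im * f t x) * e2

lemma solL_BB {f : ℝ → ℝ → ℝ} (hf : Continuous (Function.uncurry f)) {L a b : ℝ}
    (hL : 0 < L) {Z : ℝ → ℂ} (hZ : IsSolL f L a b Z) {t : ℝ} (ht : t ∈ Ioo a b) :
    HasDerivAt (fun t => BBf L (Z t)) ((Z t).im) t := by
  have := ((solL_SS hf hL hZ ht).sub (solL_re hf hL hZ ht)).div_const 2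
  refine this.congr_deriv ?_
  ring

lemma solL_AA {f : ℝ → ℝ → ℝ} (hf : Continuous (Function.uncurry f)) {L a b : ℝ}
    (hL : 0 < L) {Z : ℝ → ℂ} (hZ : IsSolL f L a b Z) {t : ℝ} (ht : t ∈ Ioo a b) :
    HasDerivAt (fun t => AAf L (Z t)) (-(Z t).im * (f t (XXf L (Z t)) / XXf L (Z t))) t := by
  have := ((solL_SS hf hL hZ ht).add (solL_re hf hL hZ ht)).div_const 2
  refine this.congr_deriv ?_
  ring

lemma cont_of {L : ℝ} {Z : ℝ → ℂ} (H : ℝ × ℂ → ℝ) (hH : Continuous H) (hZ : Continuous Z) :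
    Continuous fun t => H (L, Z t) :=
  hH.comp (continuous_const.prodMk hZ)

lemma fX_cont {f : ℝ → ℝ → ℝ} (hf : Continuous (Function.uncurry f)) {L : ℝ} {Z : ℝ → ℂ}
    (hZ : Continuous Z) : Continuous fun t => f t (XXf L (Z t)) :=
  hf.comp (continuous_id.prodMk (cont_of _ XXf_cont hZ))

lemma solL_dB {f : ℝ → ℝ → ℝ} (hf : Continuous (Function.uncurry f)) {L a b : ℝ}
    (hL : 0 < L) {Z : ℝ → ℂ} (hZ : IsSolL f L a b Z) {s t : ℝ} (hs : s ∈ Icc a b) (ht : t ∈ Icc a b) (hst : s ≤ t) :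
    BBf L (Z t) - BBf L (Z s) = ∫ r in s..t, (Z r).im := by
  have := hZ.1
  rw [intervalIntegral.integral_eq_sub_of_hasDerivAt_of_le (f := fun t => BBf L (Z t)) hst
    (cont_of _ BBf_cont hZ.1).continuousOn
    (fun r hr => solL_BB hf hL hZ ⟨hs.1.trans_lt hr.1, hr.2.trans_le ht.2⟩)
    (Continuous.intervalIntegrable (by fun_prop) _ _)]

lemma solL_dC {f : ℝ → ℝ → ℝ} (hf : Continuous (Function.uncurry f)) {L a b : ℝ}
    (hL : 0 < L) {Z : ℝ → ℂ} (hZ : IsSolL f L a b Z) {s t : ℝ} (hs : s ∈ Icc a b) (ht : t ∈ Icc a b) (hst : s ≤ t) :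
    (Z t).im - (Z s).im = ∫ r in s..t, (2 * AAf L (Z r) - 2 * (XXf L (Z r) * f r (XXf L (Z r)))) := by
  have := hZ.1
  have h1 := cont_of (L := L) _ AAf_cont hZ.1
  have h2 := cont_of (L := L) _ XXf_cont hZ.1
  have h3 := fX_cont (L := L) hf hZ.1
  rw [intervalIntegral.integral_eq_sub_of_hasDerivAt_of_le (f := fun t => (Z t).im) hst
    (by fun_prop)
    (fun r hr => solL_im hf hL hZ ⟨hs.1.trans_lt hr.1, hr.2.trans_le ht.2⟩)
    (Continuous.intervalIntegrable (by fun_prop) _ _)]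

lemma solL_log {f : ℝ → ℝ → ℝ} (hf : Continuous (Function.uncurry f)) {L a b : ℝ}
    (hL : 0 < L) {Z : ℝ → ℂ} (hZ : IsSolL f L a b Z) {m : ℝ} (hm : 0 ≤ m) {s t : ℝ} (hs : s ∈ Icc a b)
    (ht : t ∈ Icc a b) (hst : s ≤ t) :
    |Real.log (AAf L (Z t) + m * BBf L (Z t) + 1) - Real.log (AAf L (Z s) + m * BBf L (Z s) + 1)| ≤
      ∫ r in s..t, 2 * √(AAf L (Z r)) * |f r (XXf L (Z r)) - m * XXf L (Z r)| /
        (AAf L (Z r) + m * BBf L (Z r) + 1) := by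
  have hZc := hZ.1
  have h1 := cont_of (L := L) _ AAf_cont hZ.1
  have h2 := cont_of (L := L) _ XXf_cont hZ.1
  have h3 := fX_cont (L := L) hf hZ.1
  have h4 := cont_of (L := L) _ BBf_cont hZ.1
  simp only at h1 h2 h3 h4
  have hpos : ∀ r, 0 < AAf L (Z r) + m * BBf L (Z r) + 1 := fun r => by
    have := AAf_nonneg L (Z r)
    have := BBf_nonneg L (Z r)
    positivity
  have hd : Continuous fun r => (-(Z r).im * (f r (XXf L (Z r)) / XXf L (Z r)) + m * (Z r).im) /
      (AAf L (Z r) + m * BBf L (Z r) + 1) := by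
    have : Continuous fun r => f r (XXf L (Z r)) / XXf L (Z r) :=
      h3.div h2 fun r => (XXf_pos hL _).ne'
    exact Continuous.div (by fun_prop) (by fun_prop) fun r => (hpos r).ne'
  rw [← intervalIntegral.integral_eq_sub_of_hasDerivAt_of_le
    (f := fun t => Real.log (AAf L (Z t) + m * BBf L (Z t) + 1)) hst
    (ContinuousOn.log (by fun_prop) fun r _ => (hpos r).ne')
    (fun r hr => by
      have hr' : r ∈ Ioo a b := ⟨hs.1.trans_lt hr.1, hr.2.trans_le ht.2⟩
      exact (((solL_AA hf hL hZ hr').add ((solL_BB hf hL hZ hr').const_mul m)).add_const 1).log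
        (hpos r).ne')
    (hd.intervalIntegrable _ _)]
  rw [← Real.norm_eq_abs]
  apply intervalIntegral.norm_integral_le_of_norm_le hst
  · refine Eventually.of_forall fun r _ => ?_
    rw [Real.norm_eq_abs, abs_div, abs_of_pos (hpos r)]
    apply div_le_div_of_nonneg_right _ (hpos r).le
    have hx := XXf_pos hL (Z r)
    have : -(Z r).im * (f r (XXf L (Z r)) / XXf L (Z r)) + m * (Z r).im =
        -(((Z r).im / XXf L (Z r)) * (f r (XXf L (Z r)) - m * XXf L (Z r))) := by
      field_simp; ring
    rw [this, abs_neg, abs_mul]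
    exact mul_le_mul_of_nonneg_right (im_div_le hL _) (abs_nonneg _)
  · apply Continuous.intervalIntegrable
    exact Continuous.div (by fun_prop) (by fun_prop) fun r => (hpos r).ne'

lemma solL_conv {f : ℝ → ℝ → ℝ} (hf : Continuous (Function.uncurry f)) {L a b : ℝ}
    (hL : 0 < L) {Z : ℝ → ℂ} (hZ : IsSolL f L a b Z) :
    ConvexOn ℝ (Icc a b) (fun t => XXf L (Z t) + ∫ s in a..t, ∫ r in a..s, f r (XXf L (Z r))) := by
  have h2 := cont_of (L := L) _ XXf_cont hZ.1
  have h3 := fX_cont (L := L) hf hZ.1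
  have hI : ∀ t, HasDerivAt (fun s => ∫ r in a..s, f r (XXf L (Z r))) (f t (XXf L (Z t))) t :=
    fun t => (h3.integral_hasStrictDerivAt a t).hasDerivAt
  have hIc : Continuous (fun s => ∫ r in a..s, f r (XXf L (Z r))) :=
    continuous_iff_continuousAt.mpr fun t => (hI t).continuousAt
  have hII : ∀ t, HasDerivAt (fun t => ∫ s in a..t, ∫ r in a..s, f r (XXf L (Z r)))
      (∫ r in a..t, f r (XXf L (Z r))) t :=
    fun t => (hIc.integral_hasStrictDerivAt a t).hasDerivAt
  have hIIc : Continuous (fun t => ∫ s in a..t, ∫ r in a..s, f r (XXf L (Z r))) :=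
    continuous_iff_continuousAt.mpr fun t => (hII t).continuousAt
  have hx1 : ∀ t ∈ Ioo a b, HasDerivAt (fun t => XXf L (Z t)) ((Z t).im / (2 * XXf L (Z t))) t :=
    fun t ht => (solL_BB hf hL hZ ht).sqrt (BBf_pos hL _).ne'
  apply convexOn_of_hasDerivWithinAt2_nonneg (convex_Icc a b)
    (f' := fun t => (Z t).im / (2 * XXf L (Z t)) + ∫ r in a..t, f r (XXf L (Z r)))
    (f'' := fun t => L ^ 2 / XXf L (Z t) ^ 3)
  · exact (h2.add hIIc).continuousOn
  · intro t ht
    rw [interior_Icc] at ht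
    exact ((hx1 t ht).add (hII t)).hasDerivWithinAt
  · intro t ht
    rw [interior_Icc] at ht
    have hx := XXf_pos hL (Z t)
    have := ((solL_im hf hL hZ ht).div ((hx1 t ht).const_mul 2) (by positivity)).add (hI t)
    refine HasDerivAt.hasDerivWithinAt (this.congr_deriv ?_)
    have hAB := AB_eq L (Z t)
    rw [← XXf_sq] at hAB
    set x := XXf L (Z t)
    field_simp
    linear_combination 4 * hAB
  · intro t _
    have hx := XXf_pos hL (Z t)
    positivity


/-- The relations satisfied by solutions which survive the limit `L → 0`. -/
structure IS (f : ℝ → ℝ → ℝ) (L a b : ℝ) (Z : ℝ → ℂ) : Prop where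
  cont : Continuous Z
  dB : ∀ s ∈ Icc a b, ∀ t ∈ Icc a b, s ≤ t →
    BBf L (Z t) - BBf L (Z s) = ∫ r in s..t, (Z r).im
  dC : ∀ s ∈ Icc a b, ∀ t ∈ Icc a b, s ≤ t →
    (Z t).im - (Z s).im = ∫ r in s..t, (2 * AAf L (Z r) - 2 * (XXf L (Z r) * f r (XXf L (Z r))))
  dlog : ∀ m, 0 ≤ m → ∀ s ∈ Icc a b, ∀ t ∈ Icc a b, s ≤ t →
    |Real.log (AAf L (Z t) + m * BBf L (Z t) + 1) - Real.log (AAf L (Z s) + m * BBf L (Z s) + 1)| ≤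
      ∫ r in s..t, 2 * √(AAf L (Z r)) * |f r (XXf L (Z r)) - m * XXf L (Z r)| /
        (AAf L (Z r) + m * BBf L (Z r) + 1)
  conv : ConvexOn ℝ (Icc a b)
    (fun t => XXf L (Z t) + ∫ s in a..t, ∫ r in a..s, f r (XXf L (Z r)))

lemma IsSolL.toIS {f : ℝ → ℝ → ℝ} (hf : Continuous (Function.uncurry f)) {L a b : ℝ} (hL : 0 < L)
    {Z : ℝ → ℂ} (hZ : IsSolL f L a b Z) : IS f L a b Z :=
  ⟨hZ.1, fun _ hs _ ht hst => solL_dB hf hL hZ hs ht hst,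
    fun _ hs _ ht hst => solL_dC hf hL hZ hs ht hst,
    fun _ hm _ hs _ ht hst => solL_log hf hL hZ hm hs ht hst, solL_conv hf hL hZ⟩

lemma lim_int {a b : ℝ} (Lk : ℕ → ℝ) (hLk : ∀ k, Lk k ∈ Icc (0 : ℝ) 1)
    (hL0 : Tendsto Lk atTop (nhds 0)) (Zk : ℕ → ℝ → ℂ) (hZk : ∀ k, Continuous (Zk k)) {M : ℝ}
    (hM : ∀ k, ∀ t ∈ Icc a b, ‖Zk k t‖ ≤ M) (Z : ℝ → ℂ)
    (hlim : ∀ t ∈ Icc a b, Tendsto (fun k => Zk k t) atTop (nhds (Z t)))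
    (H : ℝ × ℝ × ℂ → ℝ) (hH : ContinuousOn H ((Icc (0:ℝ) 1) ×ˢ (univ : Set (ℝ × ℂ)))) :
    (∃ C, ∀ k, ∀ t ∈ Icc a b, ‖H (Lk k, t, Zk k t)‖ ≤ C) ∧
    ∀ s ∈ Icc a b, ∀ t ∈ Icc a b,
      Tendsto (fun k => ∫ r in s..t, H (Lk k, r, Zk k r)) atTop (nhds (∫ r in s..t, H (0, r, Z r))) := by
  have hK : IsCompact ((Icc (0:ℝ) 1) ×ˢ ((Icc a b) ×ˢ (Metric.closedBall (0 : ℂ) M))) :=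
    isCompact_Icc.prod (isCompact_Icc.prod (isCompact_closedBall _ _))
  obtain ⟨C, hC⟩ := hK.exists_bound_of_continuousOn
    (hH.mono (prod_mono (subset_refl _) (subset_univ _)))
  have hCb : ∀ k, ∀ t ∈ Icc a b, ‖H (Lk k, t, Zk k t)‖ ≤ C := fun k t ht =>
    hC _ ⟨hLk k, ht, by simpa using hM k t ht⟩
  refine ⟨⟨C, hCb⟩, fun s hs t ht => ?_⟩
  have hsub : uIcc s t ⊆ Icc a b := by
    rw [← uIcc_of_le (hs.1.trans hs.2)]
    exact uIcc_subset_uIcc (by rwa [uIcc_of_le (hs.1.trans hs.2)]) (by rwa [uIcc_of_le (hs.1.trans hs.2)])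
  apply tendsto_int_bdd _ _ _ C (fun k r hr => hCb k r (hsub hr))
  · intro r hr
    have h1 : Tendsto (fun k => (Lk k, r, Zk k r)) atTop
        (nhdsWithin (0, r, Z r) ((Icc (0:ℝ) 1) ×ˢ (univ : Set (ℝ × ℂ)))) := by
      apply tendsto_nhdsWithin_iff.mpr
      refine ⟨hL0.prodMk_nhds (tendsto_const_nhds.prodMk_nhds (hlim r (hsub hr))), ?_⟩
      exact Eventually.of_forall fun k => ⟨hLk k, mem_univ _⟩
    exact (hH (0, r, Z r) ⟨by simp, mem_univ _⟩).tendsto.comp h1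
  · intro k
    apply hH.comp (f := fun r => (Lk k, r, Zk k r))
    · have := hZk k
      fun_prop
    · exact fun r _ => ⟨hLk k, mem_univ _⟩

lemma IS_limit {f : ℝ → ℝ → ℝ} (hf : Continuous (Function.uncurry f)) {a b : ℝ}
    (Lk : ℕ → ℝ) (hLk : ∀ k, Lk k ∈ Icc (0 : ℝ) 1)
    (hL0 : Tendsto Lk atTop (nhds 0)) (Zk : ℕ → ℝ → ℂ) (hI : ∀ k, IS f (Lk k) a b (Zk k)) {M : ℝ}
    (hM : ∀ k, ∀ t ∈ Icc a b, ‖Zk k t‖ ≤ M) (Z : ℝ → ℂ) (hZ : Continuous Z)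
    (hlim : ∀ t ∈ Icc a b, Tendsto (fun k => Zk k t) atTop (nhds (Z t))) : IS f 0 a b Z := by
  have hInt := lim_int Lk hLk hL0 Zk (fun k => (hI k).cont) hM Z hlim
  have hA : Continuous fun q : ℝ × ℝ × ℂ => AAf q.1 q.2.2 :=
    AAf_cont.comp (by fun_prop : Continuous fun q : ℝ × ℝ × ℂ => (q.1, q.2.2))
  have hB : Continuous fun q : ℝ × ℝ × ℂ => BBf q.1 q.2.2 :=
    BBf_cont.comp (by fun_prop : Continuous fun q : ℝ × ℝ × ℂ => (q.1, q.2.2))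
  have hX : Continuous fun q : ℝ × ℝ × ℂ => XXf q.1 q.2.2 :=
    XXf_cont.comp (by fun_prop : Continuous fun q : ℝ × ℝ × ℂ => (q.1, q.2.2))
  have hF : Continuous fun q : ℝ × ℝ × ℂ => f q.2.1 (XXf q.1 q.2.2) :=
    hf.comp (by fun_prop : Continuous fun q : ℝ × ℝ × ℂ => (q.2.1, XXf q.1 q.2.2))
  have hpt : ∀ (H : ℝ × ℝ × ℂ → ℝ), Continuous H → ∀ t ∈ Icc a b,
      Tendsto (fun k => H (Lk k, t, Zk k t)) atTop (nhds (H (0, t, Z t))) := by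
    intro H hH t ht
    exact (hH.tendsto _).comp (hL0.prodMk_nhds (tendsto_const_nhds.prodMk_nhds (hlim t ht)))
  have hpos : ∀ m : ℝ, 0 ≤ m → ∀ q : ℝ × ℝ × ℂ, 0 < AAf q.1 q.2.2 + m * BBf q.1 q.2.2 + 1 := by
    intro m hm q
    have := AAf_nonneg q.1 q.2.2
    have := BBf_nonneg q.1 q.2.2
    positivity
  refine ⟨hZ, ?_, ?_, ?_, ?_⟩
  · intro s hs t ht hst
    have h1 := (hpt _ hB t ht).sub (hpt _ hB s hs)
    have h2 := (hInt (fun q => q.2.2.im) (by fun_prop)).2 s hs t ht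
    refine tendsto_nhds_unique h1 (h2.congr fun k => ?_)
    exact ((hI k).dB s hs t ht hst).symm
  · intro s hs t ht hst
    have hc : Continuous fun q : ℝ × ℝ × ℂ => q.2.2.im := by fun_prop
    have h1 := (hpt _ hc t ht).sub (hpt _ hc s hs)
    have h2 := (hInt (fun q => 2 * AAf q.1 q.2.2 - 2 * (XXf q.1 q.2.2 * f q.2.1 (XXf q.1 q.2.2)))
      (by fun_prop)).2 s hs t ht
    refine tendsto_nhds_unique h1 (h2.congr fun k => ?_)
    exact ((hI k).dC s hs t ht hst).symm
  · intro m hm s hs t ht hst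
    have hc : Continuous fun q : ℝ × ℝ × ℂ => Real.log (AAf q.1 q.2.2 + m * BBf q.1 q.2.2 + 1) :=
      Continuous.log (by fun_prop) fun q => (hpos m hm q).ne'
    have hd : Continuous fun q : ℝ × ℝ × ℂ => 2 * √(AAf q.1 q.2.2) *
        |f q.2.1 (XXf q.1 q.2.2) - m * XXf q.1 q.2.2| / (AAf q.1 q.2.2 + m * BBf q.1 q.2.2 + 1) :=
      Continuous.div (by fun_prop) (by fun_prop) fun q => (hpos m hm q).ne'
    have h1 := ((hpt _ hc t ht).sub (hpt _ hc s hs)).abs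
    have h2 := (hInt _ hd.continuousOn).2 s hs t ht
    exact le_of_tendsto_of_tendsto' h1 h2 fun k => (hI k).dlog m hm s hs t ht hst
  · have hJ : ∀ t ∈ Icc a b, Tendsto (fun k => XXf (Lk k) (Zk k t) +
        ∫ s in a..t, ∫ r in a..s, f r (XXf (Lk k) (Zk k r))) atTop
        (nhds (XXf 0 (Z t) + ∫ s in a..t, ∫ r in a..s, f r (XXf 0 (Z r)))) := by
      intro t ht
      refine (hpt _ hX t ht).add ?_
      obtain ⟨⟨C, hC⟩, h2⟩ := hInt _ hF.continuousOn
      have hsub : uIcc a t ⊆ Icc a b := by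
        rw [uIcc_of_le ht.1]; exact Icc_subset_Icc_right ht.2
      apply tendsto_int_bdd _ _ _ (C * (b - a))
      · intro k s hs
        have hs' := hsub hs
        have : ‖∫ r in a..s, f r (XXf (Lk k) (Zk k r))‖ ≤ C * |s - a| := by
          apply intervalIntegral.norm_integral_le_of_norm_le_const
          intro r hr
          apply hC k r
          rw [uIoc_of_le hs'.1] at hr
          exact ⟨hr.1.le, hr.2.trans hs'.2⟩
        refine this.trans ?_
        have hC0 : 0 ≤ C := (norm_nonneg _).trans (hC k s hs')
        rw [abs_of_nonneg (by linarith [hs'.1])]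
        exact mul_le_mul_of_nonneg_left (by linarith [hs'.2]) hC0
      · intro s hs
        exact h2 a ⟨le_refl _, ht.1.trans ht.2⟩ s (hsub hs)
      · intro k
        have h3 := fX_cont (L := Lk k) hf (hI k).cont
        refine Continuous.continuousOn ?_
        exact continuous_iff_continuousAt.mpr fun t =>
          ((h3.integral_hasStrictDerivAt a t).hasDerivAt).continuousAt
    refine ⟨convex_Icc a b, ?_⟩
    intro x hx y hy p q hp hq hpq
    exact le_of_tendsto_of_tendsto' (hJ _ ((convex_Icc a b) hx hy hp hq hpq))
      (((hJ x hx).const_smul p).add ((hJ y hy).const_smul q))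
      fun k => (hI k).conv.2 hx hy hp hq hpq

/-- A priori growth bounds. -/
lemma IS_growth {f : ℝ → ℝ → ℝ} (hf : Continuous (Function.uncurry f)) {K : ℝ} (hK : 0 ≤ K)
    (hG : ∀ t x, 0 ≤ x → |f t x| ≤ K * (1 + x)) {L a b : ℝ} {Z : ℝ → ℂ} (hI : IS f L a b Z)
    {s t : ℝ} (hs : s ∈ Icc a b) (ht : t ∈ Icc a b) :
    SSf L (Z t) + 1 ≤ exp ((4 * K + 2) * (b - a)) * (SSf L (Z s) + 1) := by
  have key : ∀ s ∈ Icc a b, ∀ t ∈ Icc a b, s ≤ t →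
      |Real.log (SSf L (Z t) + 1) - Real.log (SSf L (Z s) + 1)| ≤ (4 * K + 2) * (b - a) := by
    intro s hs t ht hst
    have h := hI.dlog 1 zero_le_one s hs t ht hst
    simp only [one_mul, A_add_B] at h
    refine h.trans ?_
    have : ‖∫ r in s..t, 2 * √(AAf L (Z r)) * |f r (XXf L (Z r)) - XXf L (Z r)| / (SSf L (Z r) + 1)‖
        ≤ (4 * K + 2) * |t - s| := by
      apply intervalIntegral.norm_integral_le_of_norm_le_const
      intro r _
      have hA := AAf_nonneg L (Z r)
      have hB := BBf_nonneg L (Z r)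
      have hx : 0 ≤ XXf L (Z r) := Real.sqrt_nonneg _
      have hx2 := XXf_sq L (Z r)
      have ha2 := Real.sq_sqrt hA
      have ha0 := Real.sqrt_nonneg (AAf L (Z r))
      have hAB := A_add_B L (Z r)
      have hg := hG r (XXf L (Z r)) hx
      have hS := SSf_nonneg L (Z r)
      rw [Real.norm_eq_abs, abs_div, abs_of_pos (by positivity : 0 < SSf L (Z r) + 1),
        div_le_iff₀ (by positivity), abs_mul, abs_abs, abs_of_nonneg (by positivity)]
      have h5 : |f r (XXf L (Z r)) - XXf L (Z r)| ≤ (K + 1) * (1 + XXf L (Z r)) := by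
        refine (abs_sub _ _).trans ?_
        rw [abs_of_nonneg hx]; linarith
      have h6 := mul_le_mul_of_nonneg_left h5 ha0
      set a := √(AAf L (Z r))
      set x := XXf L (Z r)
      have q1 : a * (1 + x) ≤ SSf L (Z r) + 1 := by nlinarith [sq_nonneg (a - x), sq_nonneg (a - 1)]
      have := mul_le_mul_of_nonneg_left q1 (by positivity : 0 ≤ K + 1)
      nlinarith
    refine (le_abs_self _).trans (this.trans ?_)
    apply mul_le_mul_of_nonneg_left _ (by positivity)
    rw [abs_of_nonneg (by linarith)]; linarith [hs.1, ht.2]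
  have h1 : |Real.log (SSf L (Z t) + 1) - Real.log (SSf L (Z s) + 1)| ≤ (4 * K + 2) * (b - a) := by
    rcases le_total s t with h | h
    · exact key s hs t ht h
    · rw [abs_sub_comm]; exact key t ht s hs h
  have p1 : 0 < SSf L (Z t) + 1 := by linarith [SSf_nonneg L (Z t)]
  have p2 : 0 < SSf L (Z s) + 1 := by linarith [SSf_nonneg L (Z s)]
  rw [← Real.exp_log p1, ← Real.exp_log p2, ← Real.exp_add, Real.exp_le_exp]
  linarith [(abs_le.mp h1).2]

/-- Compactness: extract a limit `L → 0`. -/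
lemma IS_compact {f : ℝ → ℝ → ℝ} (hf : Continuous (Function.uncurry f)) {K : ℝ} (hK : 0 ≤ K)
    (hG : ∀ t x, 0 ≤ x → |f t x| ≤ K * (1 + x)) {T R : ℝ} (hT : 0 < T)
    (Lk : ℕ → ℝ) (hLk : ∀ k, Lk k ∈ Ioc (0 : ℝ) 1)
    (hL0 : Tendsto Lk atTop (nhds 0)) (Zk : ℕ → ℝ → ℂ) (hI : ∀ k, IsSolL f (Lk k) 0 T (Zk k))
    (hR : ∀ k, ‖Zk k 0‖ ≤ R) :
    ∃ M, (∀ k, ∀ t ∈ Icc 0 T, ‖Zk k t‖ ≤ M) ∧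
    ∃ φ : ℕ → ℕ, StrictMono φ ∧ ∃ Z : ℝ → ℂ, IS f 0 0 T Z ∧
      ∀ t ∈ Icc 0 T, Tendsto (fun k => Zk (φ k) t) atTop (nhds (Z t)) := by
  have hM : ∀ k, ∀ t ∈ Icc 0 T, ‖Zk k t‖ ≤ exp ((4 * K + 2) * (T - 0)) * (R + 2 + 1) := by
    intro k t ht
    have h1 := IS_growth hf hK hG ((hI k).toIS hf (hLk k).1) (s := 0) ⟨le_refl _, hT.le⟩ ht
    have h2 := norm_le_SSf (Lk k) (Zk k t)
    have h3 := SSf_le (hLk k).1.le (Zk k 0)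
    have h4 := (hLk k).2
    have h5 := hR k
    have h6 : exp ((4 * K + 2) * (T - 0)) * (SSf (Lk k) (Zk k 0) + 1) ≤
      exp ((4 * K + 2) * (T - 0)) * (R + 2 + 1) :=
      mul_le_mul_of_nonneg_left (by linarith) (exp_pos _).le
    linarith
  set M := exp ((4 * K + 2) * (T - 0)) * (R + 2 + 1)
  refine ⟨M, hM, ?_⟩
  have hM0 : 0 ≤ M := (norm_nonneg _).trans (hM 0 0 ⟨le_refl _, hT.le⟩)
  obtain ⟨φ, hφ, Z, hZ, hlim⟩ := ascoli_extract hT.le Zk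
    (⟨(18 * K + 9) * (1 + M), by positivity⟩ : NNReal) M (by
      intro k
      apply LipschitzOnWith.of_dist_le_mul
      intro s hs t ht
      have hc : Continuous fun s => FFf f (Lk k) s (Zk k s) :=
        (FFf_cont hf (hLk k).1).comp (continuous_id.prodMk (hI k).1)
      rw [dist_eq_norm, (hI k).2 s hs, (hI k).2 t ht, add_sub_add_left_eq_sub,
        intervalIntegral.integral_interval_sub_left (hc.intervalIntegrable _ _)
        (hc.intervalIntegrable _ _), dist_eq_norm, Real.norm_eq_abs]
      apply intervalIntegral.norm_integral_le_of_norm_le_const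
      intro r hr
      have hr' : r ∈ Icc 0 T := by
        have := uIoc_subset_uIcc hr
        rw [uIcc, mem_Icc] at this
        exact ⟨(le_inf ht.1 hs.1).trans this.1, this.2.trans (sup_le ht.2 hs.2)⟩
      refine (FFf_growth hK hG (hLk k).1 (hLk k).2 r _).trans ?_
      exact mul_le_mul_of_nonneg_left (by linarith [hM k r hr']) (by positivity)) hM
  refine ⟨φ, hφ, Z, ?_, hlim⟩
  exact IS_limit hf (fun k => Lk (φ k)) (fun k => Ioc_subset_Icc_self (hLk _))
    (hL0.comp hφ.tendsto_atTop) (fun k => Zk (φ k)) (fun k => (hI _).toIS hf (hLk _).1)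
    (fun k => hM _) Z hZ hlim


noncomputable def SG (ω : ℝ) (z : ℂ) : ℝ := AAf 0 z + ω ^ 2 * BBf 0 z
noncomputable def KK (f : ℝ → ℝ → ℝ) (ω t : ℝ) (z : ℂ) : ℝ :=
  2 * ω * (AAf 0 z + XXf 0 z * f t (XXf 0 z)) / SG ω z

lemma AAf0_cont : Continuous (AAf 0) :=
  AAf_cont.comp (by fun_prop : Continuous fun z : ℂ => ((0 : ℝ), z))
lemma BBf0_cont : Continuous (BBf 0) :=
  BBf_cont.comp (by fun_prop : Continuous fun z : ℂ => ((0 : ℝ), z))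
lemma XXf0_cont : Continuous (XXf 0) :=
  XXf_cont.comp (by fun_prop : Continuous fun z : ℂ => ((0 : ℝ), z))
lemma SG_cont : Continuous (Function.uncurry SG) := by
  have h1 : Continuous fun q : ℝ × ℂ => AAf 0 q.2 := AAf0_cont.comp continuous_snd
  have h2 : Continuous fun q : ℝ × ℂ => BBf 0 q.2 := BBf0_cont.comp continuous_snd
  change Continuous fun q : ℝ × ℂ => AAf 0 q.2 + q.1 ^ 2 * BBf 0 q.2
  fun_prop
lemma AB0 (z : ℂ) : z.im ^ 2 = 4 * (AAf 0 z * BBf 0 z) := by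
  rw [AB_eq]; ring
lemma AB0_norm (z : ℂ) : AAf 0 z + BBf 0 z = ‖z‖ := by rw [A_add_B, SSf_zero]
lemma SG_nonneg (ω : ℝ) (z : ℂ) : 0 ≤ SG ω z := by
  have := AAf_nonneg 0 z
  have := BBf_nonneg 0 z
  unfold SG; positivity
lemma SG_pos {ω : ℝ} (hω : 0 < ω) {z : ℂ} (hz : z ≠ 0) : 0 < SG ω z := by
  have h1 := AAf_nonneg 0 z
  have h2 := BBf_nonneg 0 z
  have h3 := AB0_norm z
  have h4 := norm_pos_iff.mpr hz
  unfold SG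
  rcases h1.eq_or_lt with h | h
  · have : 0 < BBf 0 z := by linarith
    positivity
  · positivity
lemma KK_eq (f : ℝ → ℝ → ℝ) {ω : ℝ} (hω : 0 < ω) (t : ℝ) {z : ℂ} (hz : z ≠ 0) :
    KK f ω t z = 2 * ω + 2 * ω * (XXf 0 z * (f t (XXf 0 z) - ω ^ 2 * XXf 0 z) / SG ω z) := by
  have h := SG_pos hω hz
  unfold KK
  field_simp
  unfold SG
  rw [← XXf_sq 0 z]
  ring

/-- clamp to `[0,T]` -/
noncomputable def clp (T t : ℝ) : ℝ := max 0 (min t T)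
lemma clp_cont (T : ℝ) : Continuous (clp T) := by unfold clp; fun_prop
lemma clp_mem {T : ℝ} (hT : 0 ≤ T) (t : ℝ) : clp T t ∈ Icc 0 T :=
  ⟨le_max_left _ _, max_le hT (min_le_right _ _)⟩
lemma clp_eq {T t : ℝ} (ht : t ∈ Icc 0 T) : clp T t = t := by
  unfold clp; rw [min_eq_left ht.2, max_eq_right ht.1]

lemma IS.hasDerivAt_of {u v : ℝ → ℝ} (hv : Continuous v) {a b t : ℝ} (ht : t ∈ Ioo a b)
    (h : ∀ s ∈ Icc a b, ∀ t ∈ Icc a b, s ≤ t → u t - u s = ∫ r in s..t, v r) :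
    HasDerivAt u (v t) t := by
  have h1 : HasDerivAt (fun t => u a + ∫ s in a..t, v s) (v t) t :=
    ((hv.integral_hasStrictDerivAt a t).hasDerivAt).const_add _
  apply h1.congr_of_eventuallyEq
  filter_upwards [Ioo_mem_nhds ht.1 ht.2] with s hs
  have := h a ⟨le_refl _, (ht.1.trans ht.2).le⟩ s ⟨hs.1.le, hs.2.le⟩ hs.1.le
  linarith

lemma IS.derivB {f : ℝ → ℝ → ℝ} {a b : ℝ} {Z : ℝ → ℂ}
    (hI : IS f 0 a b Z) {t : ℝ} (ht : t ∈ Ioo a b) :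
    HasDerivAt (fun t => BBf 0 (Z t)) (Z t).im t := by
  have := hI.cont
  exact IS.hasDerivAt_of (u := fun t => BBf 0 (Z t)) (v := fun t => (Z t).im) (by fun_prop) ht hI.dB

lemma IS.derivC {f : ℝ → ℝ → ℝ} (hf : Continuous (Function.uncurry f)) {a b : ℝ} {Z : ℝ → ℂ}
    (hI : IS f 0 a b Z) {t : ℝ} (ht : t ∈ Ioo a b) :
    HasDerivAt (fun t => (Z t).im)
      (2 * AAf 0 (Z t) - 2 * (XXf 0 (Z t) * f t (XXf 0 (Z t)))) t := by
  have h1 := cont_of (L := 0) _ AAf_cont hI.cont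
  have h2 := cont_of (L := 0) _ XXf_cont hI.cont
  have h3 := fX_cont (L := 0) hf hI.cont
  exact IS.hasDerivAt_of (u := fun t => (Z t).im)
    (v := fun r => (2 * AAf 0 (Z r) - 2 * (XXf 0 (Z r) * f r (XXf 0 (Z r)))))
    (by fun_prop) ht hI.dC

lemma IS.derivA {f : ℝ → ℝ → ℝ} (hf : Continuous (Function.uncurry f)) {a b : ℝ} {Z : ℝ → ℂ}
    (hI : IS f 0 a b Z) {t : ℝ} (ht : t ∈ Ioo a b) (hB : BBf 0 (Z t) ≠ 0) :
    HasDerivAt (fun t => AAf 0 (Z t)) (-(Z t).im * (f t (XXf 0 (Z t)) / XXf 0 (Z t))) t := by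
  have hBc := cont_of (L := 0) _ BBf_cont hI.cont
  have h1 := ((hI.derivC hf ht).pow 2).div ((hI.derivB ht).const_mul 4) (by simpa using hB)
  have h2 : (fun t => AAf 0 (Z t)) =ᶠ[nhds t]
      ((fun t => (Z t).im) ^ 2 / fun t => 4 * BBf 0 (Z t)) := by
    filter_upwards [hBc.continuousAt.eventually_ne hB] with s hs
    have := AB0 (Z s)
    change BBf 0 (Z s) ≠ 0 at hs
    simp only [Pi.div_apply, Pi.pow_apply]
    rw [this]; field_simp
  refine (h1.congr_of_eventuallyEq h2).congr_deriv ?_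
  have hx : XXf 0 (Z t) ≠ 0 := by
    intro h; apply hB; rw [← XXf_sq, h]; norm_num
  have h4 := AB0 (Z t)
  rw [← XXf_sq] at h4 ⊢
  simp only [Pi.pow_apply]
  set x := XXf 0 (Z t)
  field_simp
  linear_combination (-(1:ℝ)) * (Z t).im * h4

lemma IS.zeros_countable {f : ℝ → ℝ → ℝ} (hf : Continuous (Function.uncurry f)) {a b : ℝ} {Z : ℝ → ℂ}
    (hI : IS f 0 a b Z) (hpos : ∀ t ∈ Icc a b, Z t ≠ 0) :
    {t | t ∈ Ioo a b ∧ BBf 0 (Z t) = 0}.Countable := by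
  set S := {t | t ∈ Ioo a b ∧ BBf 0 (Z t) = 0}
  refine (countable_setOfPred_isolated_right_within (s := S)).mono ?_
  rintro t ⟨ht, hB⟩
  have hA : 0 < AAf 0 (Z t) := by
    have h1 := AB0_norm (Z t)
    have h2 := norm_pos_iff.mpr (hpos t (Ioo_subset_Icc_self ht))
    linarith
  have hx : XXf 0 (Z t) = 0 := by unfold XXf; rw [hB, Real.sqrt_zero]
  have hd := hI.derivC hf ht
  rw [hx] at hd
  have hne := hd.eventually_ne (c := 0) (by simp; exact hA.ne')
  have h3 : ∀ᶠ z in nhdsWithin t (S ∩ Ioi t), (Z z).im ≠ 0 :=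
    hne.filter_mono (nhdsWithin_mono _ fun z hz => ne_of_gt hz.2)
  refine ⟨⟨ht, hB⟩, Filter.empty_mem_iff_bot.mp ?_⟩
  filter_upwards [h3, self_mem_nhdsWithin] with s hs hs2
  apply hs
  have := AB0 (Z s)
  rw [hs2.1.2] at this
  simpa using this

lemma IS.angle {f : ℝ → ℝ → ℝ} (hf : Continuous (Function.uncurry f)) {T : ℝ} (hT : 0 < T)
    {Z : ℝ → ℂ} (hI : IS f 0 0 T Z) (hpos : ∀ t ∈ Icc 0 T, Z t ≠ 0) {ω : ℝ} (hω : 0 < ω) :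
    ContinuousOn (fun t => KK f ω t (Z t)) (Icc 0 T) ∧
    ∃ θ ∈ Icc 0 (2 * π), ∀ t ∈ Icc 0 T,
      AAf 0 (Z t) - ω ^ 2 * BBf 0 (Z t) = SG ω (Z t) * cos (θ + ∫ s in 0..t, KK f ω s (Z s)) ∧
      ω * (Z t).im = SG ω (Z t) * sin (θ + ∫ s in 0..t, KK f ω s (Z s)) := by
  have hc := hI.cont
  have hcl := clp_cont T
  have hA : Continuous fun t => AAf 0 (Z t) := AAf0_cont.comp hc
  have hB : Continuous fun t => BBf 0 (Z t) := BBf0_cont.comp hc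
  have hX : Continuous fun t => XXf 0 (Z t) := XXf0_cont.comp hc
  have hF : Continuous fun t => f t (XXf 0 (Z t)) := hf.comp (continuous_id.prodMk hX)
  have hS : Continuous fun t => SG ω (Z t) := SG_cont.comp (continuous_const.prodMk hc)
  have hSp : ∀ t ∈ Icc 0 T, 0 < SG ω (Z t) := fun t ht => SG_pos hω (hpos t ht)
  have hkc : ContinuousOn (fun t => KK f ω t (Z t)) (Icc 0 T) := by
    apply ContinuousOn.div (by fun_prop) hS.continuousOn fun t ht => (hSp t ht).ne'
  refine ⟨hkc, ?_⟩
  set k : ℝ → ℝ := fun t => KK f ω (clp T t) (Z (clp T t)) with hk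
  have hkcont : Continuous k := hkc.comp_continuous hcl (clp_mem hT.le)
  set φ : ℝ → ℝ := fun t => ∫ s in 0..t, k s with hφ
  have hφ' : ∀ t, HasDerivAt φ (k t) t := fun t => (hkcont.integral_hasStrictDerivAt 0 t).hasDerivAt
  have hφc : Continuous φ := continuous_iff_continuousAt.mpr fun t => (hφ' t).continuousAt
  have hcosc : Continuous fun t => cos (φ t) := Real.continuous_cos.comp hφc
  have hsinc : Continuous fun t => sin (φ t) := Real.continuous_sin.comp hφc
  have hφe : ∀ t ∈ Icc 0 T, φ t = ∫ s in 0..t, KK f ω s (Z s) := by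
    intro t ht
    apply intervalIntegral.integral_congr
    intro s hs
    rw [uIcc_of_le ht.1] at hs
    simp only [hk]
    rw [clp_eq ⟨hs.1, hs.2.trans ht.2⟩]
  set P : ℝ → ℝ := fun t => (AAf 0 (Z t) - ω ^ 2 * BBf 0 (Z t)) / SG ω (Z t) with hP
  set Q : ℝ → ℝ := fun t => (ω * (Z t).im) / SG ω (Z t) with hQ
  have hPc : ContinuousOn P (Icc 0 T) :=
    ContinuousOn.div (by fun_prop) hS.continuousOn fun t ht => (hSp t ht).ne'
  have hQc : ContinuousOn Q (Icc 0 T) :=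
    ContinuousOn.div (by fun_prop) hS.continuousOn fun t ht => (hSp t ht).ne'
  have hPQ' : ∀ t ∈ Ioo 0 T, BBf 0 (Z t) ≠ 0 →
      HasDerivAt P (-(k t) * Q t) t ∧ HasDerivAt Q (k t * P t) t := by
    intro t ht hB0
    have ht' := Ioo_subset_Icc_self ht
    have dA := hI.derivA hf ht hB0
    have dB := hI.derivB ht
    have dC := hI.derivC hf ht
    have dS : HasDerivAt (fun t => SG ω (Z t))
        (-(Z t).im * (f t (XXf 0 (Z t)) / XXf 0 (Z t)) + ω ^ 2 * (Z t).im) t :=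
      dA.add (dB.const_mul (ω ^ 2))
    have hS0 := (hSp t ht').ne'
    have hx : XXf 0 (Z t) ≠ 0 := by
      intro h; apply hB0; rw [← XXf_sq, h]; norm_num
    have h4 := AB0 (Z t)
    rw [← XXf_sq] at h4
    have hSd : SG ω (Z t) = AAf 0 (Z t) + ω ^ 2 * XXf 0 (Z t) ^ 2 := by rw [XXf_sq]; rfl
    constructor
    · refine ((dA.sub (dB.const_mul (ω ^ 2))).div dS hS0).congr_deriv ?_
      simp only [hk, hQ, clp_eq ht', KK, Pi.sub_apply]
      rw [← XXf_sq]
      set x := XXf 0 (Z t)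
      set A := AAf 0 (Z t)
      rw [hSd] at hS0 ⊢
      field_simp
      ring
    · refine ((dC.const_mul ω).div dS hS0).congr_deriv ?_
      simp only [hk, hP, clp_eq ht', KK]
      rw [← XXf_sq]
      set x := XXf 0 (Z t)
      set A := AAf 0 (Z t)
      rw [hSd] at hS0 ⊢
      field_simp
      linear_combination (f t x - ω ^ 2 * x) * h4
  have hcount := hI.zeros_countable hf hpos
  have hV : ∀ t ∈ Icc 0 T, P t * cos (φ t) + Q t * sin (φ t) = P 0 ∧
      Q t * cos (φ t) - P t * sin (φ t) = Q 0 := by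
    intro t ht
    have hφ0 : φ 0 = 0 := by simp [hφ]
    have hsub : Icc 0 t ⊆ Icc 0 T := Icc_subset_Icc_right ht.2
    constructor
    · have := MeasureTheory.integral_eq_of_hasDerivAt_off_countable_of_le
        (fun t => P t * cos (φ t) + Q t * sin (φ t)) (fun _ => (0:ℝ)) ht.1 hcount
        (((hPc.mono hsub).mul hcosc.continuousOn).add ((hQc.mono hsub).mul hsinc.continuousOn))
        (by
          rintro s ⟨hs1, hs2⟩
          have hs : s ∈ Ioo 0 T := ⟨hs1.1, hs1.2.trans_le ht.2⟩
          obtain ⟨p1, p2⟩ := hPQ' s hs (fun h => hs2 ⟨hs, h⟩)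
          refine ((p1.mul (hφ' s).cos).add (p2.mul (hφ' s).sin)).congr_deriv ?_
          ring) (by simp)
      simp [hφ0] at this
      linarith
    · have := MeasureTheory.integral_eq_of_hasDerivAt_off_countable_of_le
        (fun t => Q t * cos (φ t) - P t * sin (φ t)) (fun _ => (0:ℝ)) ht.1 hcount
        (((hQc.mono hsub).mul hcosc.continuousOn).sub ((hPc.mono hsub).mul hsinc.continuousOn))
        (by
          rintro s ⟨hs1, hs2⟩
          have hs : s ∈ Ioo 0 T := ⟨hs1.1, hs1.2.trans_le ht.2⟩
          obtain ⟨p1, p2⟩ := hPQ' s hs (fun h => hs2 ⟨hs, h⟩)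
          refine ((p2.mul (hφ' s).cos).sub (p1.mul (hφ' s).sin)).congr_deriv ?_
          ring) (by simp)
      simp [hφ0] at this
      linarith
  -- initial angle
  obtain ⟨θ, hθ, hθc, hθs⟩ : ∃ θ ∈ Icc 0 (2 * π), P 0 = cos θ ∧ Q 0 = sin θ := by
    have h0 : (0:ℝ) ∈ Icc 0 T := ⟨le_refl _, hT.le⟩
    have h1 : P 0 ^ 2 + Q 0 ^ 2 = 1 := by
      have hS0 := (hSp 0 h0).ne'
      have h4 := AB0 (Z 0)
      simp only [hP, hQ]
      rw [div_pow, div_pow, ← add_div, div_eq_one_iff_eq (by positivity)]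
      unfold SG
      linear_combination ω ^ 2 * h4
    have hz : ‖(⟨P 0, Q 0⟩ : ℂ)‖ = 1 := by
      have := norm_sq_re_im ⟨P 0, Q 0⟩
      simp only [h1] at this
      nlinarith [norm_nonneg (⟨P 0, Q 0⟩ : ℂ)]
    have hzn : (⟨P 0, Q 0⟩ : ℂ) ≠ 0 := by
      intro h; rw [h] at hz; simp at hz
    set α := Complex.arg ⟨P 0, Q 0⟩
    have c1 : cos α = P 0 := by rw [Complex.cos_arg hzn, hz]; simp
    have s1 : sin α = Q 0 := by rw [Complex.sin_arg, hz]; simp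
    have a1 : -π < α := Complex.neg_pi_lt_arg _
    have a2 : α ≤ π := Complex.arg_le_pi _
    rcases le_total 0 α with h | h
    · exact ⟨α, ⟨h, by linarith [Real.pi_pos]⟩, c1.symm, s1.symm⟩
    · refine ⟨α + 2 * π, ⟨by linarith, by linarith⟩, ?_, ?_⟩
      · rw [Real.cos_add_two_pi, c1]
      · rw [Real.sin_add_two_pi, s1]
  refine ⟨θ, hθ, fun t ht => ?_⟩
  obtain ⟨v1, v2⟩ := hV t ht
  rw [← hφe t ht]
  have hS0 := (hSp t ht).ne'
  have cs := Real.sin_sq_add_cos_sq (φ t)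
  have e1 : P t = cos (θ + φ t) := by
    rw [cos_add, ← hθc, ← hθs, ← v1, ← v2]; linear_combination (-P t) * cs
  have e2 : Q t = sin (θ + φ t) := by
    rw [sin_add, ← hθc, ← hθs, ← v1, ← v2]; linear_combination (-Q t) * cs
  rw [← e1, ← e2]
  simp only [hP, hQ]
  constructor <;> field_simp


lemma AAf0_smul {l : ℝ} (hl : 0 ≤ l) (z : ℂ) : AAf 0 (l * z) = l * AAf 0 z := by
  unfold AAf; rw [SSf_zero, SSf_zero, norm_mul, Complex.norm_of_nonneg hl, Complex.re_ofReal_mul]; ring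
lemma BBf0_smul {l : ℝ} (hl : 0 ≤ l) (z : ℂ) : BBf 0 (l * z) = l * BBf 0 z := by
  unfold BBf; rw [SSf_zero, SSf_zero, norm_mul, Complex.norm_of_nonneg hl, Complex.re_ofReal_mul]; ring
lemma SG_smul (ω : ℝ) {l : ℝ} (hl : 0 ≤ l) (z : ℂ) : SG ω (l * z) = l * SG ω z := by
  unfold SG; rw [AAf0_smul hl, BBf0_smul hl]; ring

lemma J_const {f : ℝ → ℝ → ℝ} (hf : Continuous (Function.uncurry f)) {T : ℝ} (hT : 0 < T)
    {Z : ℝ → ℂ} (hI : IS f 0 0 T Z) (hpos : ∀ t ∈ Icc 0 T, Z t ≠ 0) {l : ℝ} (hl : 0 < l)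
    (hZ : Z T = l * Z 0) {ω₁ ω₂ : ℝ} (h1 : 0 < ω₁) (h12 : ω₁ ≤ ω₂) :
    ∃ n : ℤ, (∫ s in 0..T, KK f ω₁ s (Z s)) = 2 * π * n ∧
      (∫ s in 0..T, KK f ω₂ s (Z s)) = 2 * π * n := by
  have h0 : (0:ℝ) ∈ Icc 0 T := ⟨le_refl _, hT.le⟩
  have hT' : T ∈ Icc 0 T := ⟨hT.le, le_refl _⟩
  have hInt : ∀ ω, 0 < ω → ∃ n : ℤ, (∫ s in 0..T, KK f ω s (Z s)) = 2 * π * n := by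
    intro ω hω
    obtain ⟨-, θ, -, h⟩ := hI.angle hf hT hpos hω
    obtain ⟨c0, s0⟩ := h 0 h0
    obtain ⟨c1, s1⟩ := h T hT'
    rw [hZ, SG_smul ω hl.le] at c1 s1
    rw [AAf0_smul hl.le, BBf0_smul hl.le] at c1
    rw [Complex.im_ofReal_mul] at s1
    have hS := SG_pos hω (hpos 0 h0)
    simp only [intervalIntegral.integral_same, add_zero] at c0 s0
    set φ := ∫ s in 0..T, KK f ω s (Z s)
    have hlS : l * SG ω (Z 0) ≠ 0 := by positivity
    have e1 : cos (θ + φ) = cos θ := by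
      apply mul_left_cancel₀ hlS
      linear_combination l * c0 - c1
    have e2 : sin (θ + φ) = sin θ := by
      apply mul_left_cancel₀ hlS
      linear_combination l * s0 - s1
    have e3 : cos φ = 1 := by
      have : φ = (θ + φ) - θ := by ring
      rw [this, cos_sub, e1, e2]
      linear_combination Real.sin_sq_add_cos_sq θ
    obtain ⟨n, hn⟩ := (Real.cos_eq_one_iff φ).mp e3
    exact ⟨n, by rw [← hn]; ring⟩
  have hc := hI.cont
  have hcl := clp_cont T
  have hcont : Continuous fun ω => ∫ s in 0..T, KK f (max ω ω₁) (clp T s) (Z (clp T s)) := by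
    apply intervalIntegral.continuous_parametric_intervalIntegral_of_continuous'
    have hX : Continuous fun q : ℝ × ℝ => XXf 0 (Z (clp T q.2)) :=
      XXf0_cont.comp (hc.comp (hcl.comp continuous_snd))
    have hA : Continuous fun q : ℝ × ℝ => AAf 0 (Z (clp T q.2)) :=
      AAf0_cont.comp (hc.comp (hcl.comp continuous_snd))
    have hF : Continuous fun q : ℝ × ℝ => f (clp T q.2) (XXf 0 (Z (clp T q.2))) :=
      hf.comp ((hcl.comp continuous_snd).prodMk hX)
    have hS : Continuous fun q : ℝ × ℝ => SG (max q.1 ω₁) (Z (clp T q.2)) :=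
      SG_cont.comp ((by fun_prop : Continuous fun q : ℝ × ℝ => max q.1 ω₁).prodMk
        (hc.comp (hcl.comp continuous_snd)))
    exact Continuous.div (by fun_prop) hS fun q =>
      (SG_pos (h1.trans_le (le_max_right _ _)) (hpos _ (clp_mem hT.le _))).ne'
  have heq : ∀ ω ∈ Icc ω₁ ω₂, (∫ s in 0..T, KK f (max ω ω₁) (clp T s) (Z (clp T s))) =
      ∫ s in 0..T, KK f ω s (Z s) := by
    intro ω hω
    rw [max_eq_left hω.1]
    apply intervalIntegral.integral_congr
    intro s hs
    rw [uIcc_of_le hT.le] at hs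
    simp only
    rw [clp_eq hs]
  have hJ := int_const_of_continuous h12 (fun ω => ∫ s in 0..T, KK f ω s (Z s))
    (hcont.continuousOn.congr fun ω hω => (heq ω hω).symm)
    (fun ω hω => hInt ω (h1.trans_le hω.1))
  obtain ⟨n, hn⟩ := hInt ω₁ h1
  exact ⟨n, hn, by rw [← hJ, hn]⟩

/-- The basic integrand. -/
noncomputable def DD (e : ℝ → ℝ → ℝ) (ω t : ℝ) (z : ℂ) : ℝ := XXf 0 z * e t (XXf 0 z) / SG ω z

lemma sqrt_facts {ω : ℝ} (hω : 0 < ω) (z : ℂ) :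
    √(AAf 0 z) ≤ √(SG ω z) ∧ ω * XXf 0 z ≤ √(SG ω z) := by
  have hA := AAf_nonneg 0 z
  have hB := BBf_nonneg 0 z
  constructor
  · apply Real.sqrt_le_sqrt
    unfold SG
    have : 0 ≤ ω ^ 2 * BBf 0 z := by positivity
    linarith
  · apply Real.le_sqrt_of_sq_le
    rw [mul_pow, XXf_sq]; unfold SG; linarith

lemma LL_est {f : ℝ → ℝ → ℝ} (hf : Continuous (Function.uncurry f)) {T : ℝ} (hT : 0 < T)
    {Z : ℝ → ℂ} (hI : IS f 0 0 T Z) {ω σ η K q : ℝ} (hω : 0 < ω) (hσ : σ ^ 2 = 1)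
    (hη : 0 ≤ η) (hK : 0 ≤ K) (hq : 0 < q) (e : ℝ → ℝ → ℝ)
    (he : ∀ t x, e t x = σ * (f t x - ω ^ 2 * x))
    (hel : ∀ t x, 0 ≤ x → -η ≤ e t x) (heu : ∀ t x, 0 ≤ x → e t x + η ≤ K * (1 + x))
    (hqS : ∀ t ∈ Icc 0 T, q ^ 4 ≤ SG ω (Z t))
    (hD : ∫ t in 0..T, DD e ω t (Z t) ≤ 0) :
    (∃ θ ∈ Icc 0 (2 * π), ∀ t ∈ Icc 0 T, ∃ α, |α - (θ / 2 + ω * t)| ≤ 2 * η * T / q ^ 2 ∧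
      ω * XXf 0 (Z t) = √(SG ω (Z t)) * |sin α|) ∧
    ∀ t ∈ Icc 0 T, |Real.log (SG ω (Z t) + 1) - Real.log (SG ω (Z 0) + 1)| ≤
      2 * (η * T / (ω * q) + (K + η) * T / q ^ 2 + K * T / q) := by
  have hSp : ∀ t ∈ Icc 0 T, 0 < SG ω (Z t) := fun t ht => (by positivity : 0 < q ^ 4).trans_le (hqS t ht)
  have hpos : ∀ t ∈ Icc 0 T, Z t ≠ 0 := by
    intro t ht h
    have := hSp t ht
    rw [h] at this
    simp [SG, AAf, BBf, SSf_zero] at this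
  have hc := hI.cont
  have hX : Continuous fun t => XXf 0 (Z t) := XXf0_cont.comp hc
  have hA : Continuous fun t => AAf 0 (Z t) := AAf0_cont.comp hc
  have hF : Continuous fun t => f t (XXf 0 (Z t)) := hf.comp (continuous_id.prodMk hX)
  have hS : Continuous fun t => SG ω (Z t) := SG_cont.comp (continuous_const.prodMk hc)
  have hE : Continuous fun t => e t (XXf 0 (Z t)) := by
    simp only [he]; fun_prop
  have hDc : ContinuousOn (fun t => DD e ω t (Z t)) (Icc 0 T) :=
    ContinuousOn.div (hX.mul hE).continuousOn hS.continuousOn fun t ht => (hSp t ht).ne'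
  have hDi : ∀ t ∈ Icc 0 T, IntervalIntegrable (fun t => DD e ω t (Z t)) MeasureTheory.volume 0 t := by
    intro t ht
    apply ContinuousOn.intervalIntegrable
    rw [uIcc_of_le ht.1]
    exact hDc.mono (Icc_subset_Icc_right ht.2)
  have hT' : T ∈ Icc 0 T := ⟨hT.le, le_refl _⟩
  have hs : ∀ t ∈ Icc 0 T, q ^ 2 ≤ √(SG ω (Z t)) := by
    intro t ht
    apply Real.le_sqrt_of_sq_le
    have := hqS t ht
    nlinarith
  have hx0 : ∀ t, 0 ≤ XXf 0 (Z t) := fun t => Real.sqrt_nonneg _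
  have hxS : ∀ t ∈ Icc 0 T, XXf 0 (Z t) / SG ω (Z t) ≤ 1 / (ω * q ^ 2) := by
    intro t ht
    have h1 := (sqrt_facts hω (Z t)).2
    have h2 := hs t ht
    have h3 := Real.sq_sqrt (hSp t ht).le
    rw [div_le_div_iff₀ (hSp t ht) (by positivity), ← h3]
    set s := √(SG ω (Z t))
    have : 0 ≤ s := Real.sqrt_nonneg _
    nlinarith [mul_le_mul h1 h2 (by positivity) this]
  constructor
  · obtain ⟨-, θ, hθ, h⟩ := hI.angle hf hT hpos hω
    refine ⟨θ, hθ, fun t ht => ?_⟩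
    obtain ⟨h1, -⟩ := h t ht
    have hφ : (∫ s in 0..t, KK f ω s (Z s)) = 2 * ω * t + 2 * ω * (σ * ∫ s in 0..t, DD e ω s (Z s)) := by
      rw [← intervalIntegral.integral_const_mul, ← intervalIntegral.integral_const_mul]
      have : 2 * ω * t = ∫ s in 0..t, 2 * ω := by simp; ring
      rw [this, ← intervalIntegral.integral_add (by simp) (((hDi t ht).const_mul σ).const_mul (2 * ω))]
      apply intervalIntegral.integral_congr
      intro s hs
      rw [uIcc_of_le ht.1] at hs
      have hs' : s ∈ Icc 0 T := ⟨hs.1, hs.2.trans ht.2⟩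
      simp only
      rw [KK_eq f hω s (hpos s hs'), DD, he]
      linear_combination (-2 * ω * (XXf 0 (Z s) * (f s (XXf 0 (Z s)) - ω ^ 2 * XXf 0 (Z s)) / SG ω (Z s))) * hσ
    have hb : |∫ s in 0..t, DD e ω s (Z s)| ≤ 2 * η * T / (ω * q ^ 2) := by
      have hpt : ∀ s ∈ Icc 0 T, |DD e ω s (Z s)| ≤ DD e ω s (Z s) + 2 * η / (ω * q ^ 2) := by
        intro s hs
        have h3 : -(η / (ω * q ^ 2)) ≤ DD e ω s (Z s) := by
          have h4 := mul_le_mul_of_nonneg_left (hel s _ (hx0 s)) (div_nonneg (hx0 s) (hSp s hs).le)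
          have h5 := mul_le_mul_of_nonneg_left (hxS s hs) hη
          have h6 : DD e ω s (Z s) = XXf 0 (Z s) / SG ω (Z s) * e s (XXf 0 (Z s)) := by
            unfold DD; ring
          rw [h6]
          have h7 : η * (1 / (ω * q ^ 2)) = η / (ω * q ^ 2) := by ring
          linarith
        have h7 : 2 * η / (ω * q ^ 2) = 2 * (η / (ω * q ^ 2)) := by ring
        have h8 : 0 ≤ η / (ω * q ^ 2) := by positivity
        rw [h7, abs_le]
        constructor <;> linarith
      have i1 : IntervalIntegrable (fun s => |DD e ω s (Z s)|) MeasureTheory.volume 0 T := (hDi T hT').abs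
      have i2 : IntervalIntegrable (fun s => DD e ω s (Z s) + 2 * η / (ω * q ^ 2)) MeasureTheory.volume 0 T :=
        (hDi T hT').add (by simp)
      calc |∫ s in 0..t, DD e ω s (Z s)| ≤ ∫ s in 0..t, |DD e ω s (Z s)| :=
            intervalIntegral.abs_integral_le_integral_abs ht.1
        _ ≤ ∫ s in 0..T, |DD e ω s (Z s)| := by
            apply intervalIntegral.integral_mono_interval (le_refl _) ht.1 ht.2 _ i1
            exact Eventually.of_forall fun s => abs_nonneg _
        _ ≤ ∫ s in 0..T, (DD e ω s (Z s) + 2 * η / (ω * q ^ 2)) :=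
            intervalIntegral.integral_mono_on hT.le i1 i2 hpt
        _ ≤ 2 * η * T / (ω * q ^ 2) := by
            rw [intervalIntegral.integral_add (hDi T hT') (by simp)]
            simp only [intervalIntegral.integral_const, smul_eq_mul, sub_zero]
            have : T * (2 * η / (ω * q ^ 2)) = 2 * η * T / (ω * q ^ 2) := by ring
            linarith
    refine ⟨(θ + ∫ s in 0..t, KK f ω s (Z s)) / 2, ?_, ?_⟩
    · rw [hφ]
      have : (θ + (2 * ω * t + 2 * ω * (σ * ∫ s in 0..t, DD e ω s (Z s)))) / 2 - (θ / 2 + ω * t) =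
        ω * (σ * ∫ s in 0..t, DD e ω s (Z s)) := by ring
      rw [this, abs_mul, abs_mul, abs_of_pos hω]
      have hσ1 : |σ| = 1 := by
        have : |σ| ^ 2 = 1 := by rw [sq_abs, hσ]
        nlinarith [abs_nonneg σ]
      rw [hσ1, one_mul]
      refine (mul_le_mul_of_nonneg_left hb hω.le).trans (le_of_eq ?_)
      field_simp
    · set φ := ∫ s in 0..t, KK f ω s (Z s)
      have h2 : cos (θ + φ) = 1 - 2 * sin ((θ + φ) / 2) ^ 2 := by
        have : θ + φ = 2 * ((θ + φ) / 2) := by ring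
        rw [this, cos_two_mul, cos_sq']
        have : 2 * ((θ + φ) / 2) / 2 = (θ + φ) / 2 := by ring
        rw [this]; ring
      have h3 : (ω * XXf 0 (Z t)) ^ 2 = (√(SG ω (Z t)) * |sin ((θ + φ) / 2)|) ^ 2 := by
        rw [mul_pow, mul_pow, XXf_sq, Real.sq_sqrt (hSp t ht).le, sq_abs]
        rw [h2] at h1
        have : AAf 0 (Z t) = SG ω (Z t) - ω ^ 2 * BBf 0 (Z t) := by unfold SG; ring
        rw [this] at h1
        linarith
      exact (sq_eq_sq₀ (mul_nonneg hω.le (hx0 t)) (by positivity)).mp h3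
  · intro t ht
    have h1 := hI.dlog (ω ^ 2) (by positivity) 0 ⟨le_refl _, hT.le⟩ t ht ht.1
    change |Real.log (SG ω (Z t) + 1) - Real.log (SG ω (Z 0) + 1)| ≤ _ at h1
    refine h1.trans ?_
    set G : ℝ → ℝ := fun r => 2 * √(AAf 0 (Z r)) * |f r (XXf 0 (Z r)) - ω ^ 2 * XXf 0 (Z r)| /
        (SG ω (Z r) + 1) with hG
    have hGc : Continuous G :=
      Continuous.div (by fun_prop) (by fun_prop) fun r => by
        have := SG_nonneg ω (Z r)
        positivity
    have hpt : ∀ r ∈ Icc 0 T, G r ≤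
        (2 * q) * DD e ω r (Z r) + 2 * (η / (ω * q) + (K + η) / q ^ 2 + K / q) := by
      intro r hr
      have hSr := hSp r hr
      obtain ⟨a1, a2⟩ := sqrt_facts hω (Z r)
      have a3 := hs r hr
      have a4 := hxS r hr
      have a5 := hx0 r
      have a6 := hel r _ a5
      have a7 := heu r _ a5
      have hsq := Real.sq_sqrt hSr.le
      have habs : |f r (XXf 0 (Z r)) - ω ^ 2 * XXf 0 (Z r)| ≤ (e r (XXf 0 (Z r)) + η) + η := by
        have e1 : |e r (XXf 0 (Z r))| = |f r (XXf 0 (Z r)) - ω ^ 2 * XXf 0 (Z r)| := by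
          rw [he, abs_mul]
          have hσ1 : |σ| = 1 := by
            have : |σ| ^ 2 = 1 := by rw [sq_abs, hσ]
            nlinarith [abs_nonneg σ]
          rw [hσ1, one_mul]
        rw [← e1, abs_le]
        constructor <;> linarith
      have ha0 := Real.sqrt_nonneg (AAf 0 (Z r))
      simp only [hG, DD]
      set a := √(AAf 0 (Z r))
      set x := XXf 0 (Z r)
      set E := e r x
      set s := √(SG ω (Z r))
      set S := SG ω (Z r)
      have hs0 : 0 < s := Real.sqrt_pos.mpr hSr
      have b1 : 2 * a * |f r x - ω ^ 2 * x| / (S + 1) ≤ 2 * ((E + η) / s + η / s) := by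
        calc 2 * a * |f r x - ω ^ 2 * x| / (S + 1) ≤ 2 * s * ((E + η) + η) / S := by
              have hE2 : 0 ≤ E + η + η := by linarith
              gcongr
              linarith
          _ = 2 * ((E + η) / s + η / s) := by rw [← hsq]; field_simp
      have b2 : η / s ≤ η / q ^ 2 := by gcongr
      have b3 : (E + η) / s ≤ q * (x * (E + η) / S) + K / q ^ 2 + K / q := by
        have hE0 : 0 ≤ E + η := by linarith
        rcases le_total s (q * x) with h | h
        · have : (E + η) / s ≤ q * (x * (E + η) / S) := by
            have : (E + η) / s = s * (E + η) / S := by rw [← hsq]; field_simp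
            rw [this, ← mul_div_assoc, ← mul_assoc]
            gcongr
          have : 0 ≤ K / q ^ 2 := by positivity
          have : 0 ≤ K / q := by positivity
          linarith
        · have c1 : 0 ≤ q * (x * (E + η) / S) := by positivity
          have c2 : (E + η) / s ≤ K * (1 + x) / s := by gcongr
          have c3 : K * (1 + x) / s = K / s + K * (x / s) := by ring
          have c4 : K / s ≤ K / q ^ 2 := by gcongr
          have c5 : x / s ≤ 1 / q := by
            rw [div_le_div_iff₀ hs0 hq]; linarith
          have c6 := mul_le_mul_of_nonneg_left c5 hK
          have c7 : K * (1 / q) = K / q := by ring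
          linarith
      have b4 : q * (x * (E + η) / S) ≤ q * (x * E / S) + η / (ω * q) := by
        have d1 : q * (x * (E + η) / S) = q * (x * E / S) + q * η * (x / S) := by ring
        have d2 := mul_le_mul_of_nonneg_left a4 (by positivity : 0 ≤ q * η)
        have d3 : q * η * (1 / (ω * q ^ 2)) = η / (ω * q) := by field_simp
        linarith
      have b5 : (K + η) / q ^ 2 = K / q ^ 2 + η / q ^ 2 := by ring
      linarith
    have hG0 : ∀ r, 0 ≤ G r := fun r => by
      have := SG_nonneg ω (Z r)
      simp only [hG]; positivity
    have i2 : IntervalIntegrable (fun r => (2 * q) * DD e ω r (Z r) +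
        2 * (η / (ω * q) + (K + η) / q ^ 2 + K / q)) MeasureTheory.volume 0 T :=
      ((hDi T hT').const_mul _).add (by simp)
    calc ∫ r in 0..t, G r ≤ ∫ r in 0..T, G r := by
          apply intervalIntegral.integral_mono_interval (le_refl _) ht.1 ht.2 _
            (hGc.intervalIntegrable _ _)
          exact Eventually.of_forall hG0
      _ ≤ ∫ r in 0..T, ((2 * q) * DD e ω r (Z r) + 2 * (η / (ω * q) + (K + η) / q ^ 2 + K / q)) :=
          intervalIntegral.integral_mono_on hT.le (hGc.intervalIntegrable _ _) i2 hpt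
      _ ≤ _ := by
          rw [intervalIntegral.integral_add ((hDi T hT').const_mul _) (by simp),
            intervalIntegral.integral_const_mul]
          simp only [intervalIntegral.integral_const, smul_eq_mul, sub_zero]
          have d1 := mul_nonneg_of_nonpos_of_nonpos hD (by linarith : -(2 * q) ≤ 0)
          have d2 : T * (2 * (η / (ω * q) + (K + η) / q ^ 2 + K / q)) =
            2 * (η * T / (ω * q) + (K + η) * T / q ^ 2 + K * T / q) := by ring
          linarith


lemma LL_main {f : ℝ → ℝ → ℝ} (hf : Continuous (Function.uncurry f)) {K₀ : ℝ} (hK₀ : 0 ≤ K₀)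
    (hG : ∀ t x, 0 ≤ x → |f t x| ≤ K₀ * (1 + x)) {T : ℝ} (hT : 0 < T)
    {ω σ η K : ℝ} (hω : 0 < ω) (hσ : σ ^ 2 = 1)
    (hη : 0 ≤ η) (hK : 0 ≤ K) (e : ℝ → ℝ → ℝ)
    (he : ∀ t x, e t x = σ * (f t x - ω ^ 2 * x))
    (hel : ∀ t x, 0 ≤ x → -η ≤ e t x) (heu : ∀ t x, 0 ≤ x → e t x + η ≤ K * (1 + x))
    (ℓ : ℝ → ℝ) (hℓ : ∀ t ∈ Icc 0 T, ∀ c < ℓ t, ∀ᶠ x in atTop, c ≤ e t x)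
    (hInt : ∀ β ∈ Icc 0 π, 0 < ∫ t in (0:ℝ)..T, ℓ t * |sin (ω * t + β)|) :
    ∃ R₀ > 0, ∀ Z : ℝ → ℂ, IS f 0 0 T Z → R₀ ≤ ‖Z 0‖ →
      (∀ t ∈ Icc 0 T, Z t ≠ 0) ∧ 0 < ∫ t in (0:ℝ)..T, DD e ω t (Z t) := by
  set E := exp ((4 * K₀ + 2) * (T - 0)) with hE
  have hEp : 0 < E := exp_pos _
  set c := min 1 (ω ^ 2) with hc
  have hcp : 0 < c := lt_min one_pos (by positivity)
  have hlow : ∀ z : ℂ, c * ‖z‖ ≤ SG ω z := by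
    intro z
    have h1 := AAf_nonneg 0 z
    have h2 := BBf_nonneg 0 z
    rw [← AB0_norm, SG, mul_add]
    have h3 : c ≤ 1 := min_le_left _ _
    have h4 : c ≤ ω ^ 2 := min_le_right _ _
    nlinarith [mul_le_mul_of_nonneg_right h3 h1, mul_le_mul_of_nonneg_right h4 h2]
  have h00 : (0:ℝ) ∈ Icc 0 T := ⟨le_refl _, hT.le⟩
  have hbig : ∀ (q : ℝ) (Z : ℝ → ℂ), IS f 0 0 T Z → E * (1 + q / c) ≤ ‖Z 0‖ →
      ∀ t ∈ Icc 0 T, q ≤ SG ω (Z t) := by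
    intro q Z hI hR t ht
    have h1 := IS_growth hf hK₀ hG hI ht h00
    rw [SSf_zero, SSf_zero] at h1
    have h2 : E * (1 + q / c) ≤ E * (‖Z t‖ + 1) := by linarith
    have h3 := le_of_mul_le_mul_left h2 hEp
    have h4 : q / c ≤ ‖Z t‖ := by linarith
    rw [div_le_iff₀ hcp] at h4
    linarith [hlow (Z t)]
  by_contra hcon
  push Not at hcon
  have hex : ∀ k : ℕ, ∃ Z : ℝ → ℂ, IS f 0 0 T Z ∧
      (∀ t ∈ Icc 0 T, ((k:ℝ) + 1) ^ 4 ≤ SG ω (Z t)) ∧ ∫ t in (0:ℝ)..T, DD e ω t (Z t) ≤ 0 := by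
    intro k
    obtain ⟨Z, hI, hR, hZ⟩ := hcon (E * (1 + ((k:ℝ) + 1) ^ 4 / c)) (by positivity)
    have hq := hbig _ Z hI hR
    refine ⟨Z, hI, hq, hZ ?_⟩
    intro t ht h
    have h1 := hq t ht
    rw [h] at h1
    simp [SG, AAf, BBf, SSf_zero] at h1
    have : 0 < ((k:ℝ) + 1) ^ 4 := by positivity
    linarith
  choose Z₀ hI₀ hq₀ hD₀ using hex
  have hest := fun k => LL_est hf hT (hI₀ k) hω hσ hη hK (by positivity : 0 < (k:ℝ) + 1) e he hel heu
    (hq₀ k) (hD₀ k)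
  choose θ₀ hθ₀ hα₀ using fun k => (hest k).1
  obtain ⟨θ, hθ, φ, hφ, hθlim⟩ := isCompact_Icc.tendsto_subseq hθ₀
  -- pass to the subsequence
  set q : ℕ → ℝ := fun k => (φ k : ℝ) + 1 with hqdef
  set Z : ℕ → ℝ → ℂ := fun k => Z₀ (φ k) with hZdef
  have hq1 : ∀ k, 1 ≤ q k := fun k => by simp [hqdef]
  have hq0 : ∀ k, 0 < q k := fun k => one_pos.trans_le (hq1 k)
  have hqlim : Tendsto q atTop atTop :=
    tendsto_atTop_add_const_right _ _ (tendsto_natCast_atTop_atTop.comp hφ.tendsto_atTop)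
  have hqinv : Tendsto (fun k => (q k)⁻¹) atTop (nhds 0) := tendsto_inv_atTop_zero.comp hqlim
  have hqS : ∀ k, ∀ t ∈ Icc 0 T, q k ^ 4 ≤ SG ω (Z k t) := fun k => hq₀ (φ k)
  have hq4 : ∀ k, q k ≤ q k ^ 4 := fun k => le_self_pow₀ (hq1 k) (by norm_num)
  have hS1 : ∀ k, ∀ t ∈ Icc 0 T, 1 ≤ SG ω (Z k t) := fun k t ht =>
    (hq1 k).trans ((hq4 k).trans (hqS k t ht))
  have hSp : ∀ k, ∀ t ∈ Icc 0 T, 0 < SG ω (Z k t) := fun k t ht => one_pos.trans_le (hS1 k t ht)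
  have hSlim : ∀ t ∈ Icc 0 T, Tendsto (fun k => SG ω (Z k t)) atTop atTop := fun t ht =>
    tendsto_atTop_mono (fun k => (hq4 k).trans (hqS k t ht)) hqlim
  have hαlim : ∀ t ∈ Icc 0 T, Tendsto (fun k => ω * XXf 0 (Z k t) / √(SG ω (Z k t))) atTop
      (nhds |sin (ω * t + θ / 2)|) := by
    intro t ht
    choose α hα1 hα2 using fun k => hα₀ (φ k) t ht
    have h1 : Tendsto (fun k => α k - (θ₀ (φ k) / 2 + ω * t)) atTop (nhds 0) := by
      rw [tendsto_zero_iff_abs_tendsto_zero]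
      have hz : Tendsto (fun k => 2 * η * T * ((q k)⁻¹) ^ 2) atTop (nhds 0) := by
        simpa using (hqinv.pow 2).const_mul (2 * η * T)
      refine squeeze_zero (fun k => abs_nonneg _) (fun k => ?_) hz
      refine (hα1 k).trans (le_of_eq ?_)
      simp only [hqdef]
      field_simp
    have h2 : Tendsto α atTop (nhds (ω * t + θ / 2)) := by
      have := h1.add ((hθlim.div_const 2).add_const (ω * t))
      simp only [Function.comp, sub_add_cancel, zero_add] at this
      rwa [add_comm (θ / 2)] at this
    have h3 := ((Real.continuous_sin.tendsto _).comp h2).abs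
    refine h3.congr fun k => ?_
    have : 0 < √(SG ω (Z k t)) := Real.sqrt_pos.mpr (hSp k t ht)
    rw [eq_div_iff this.ne', mul_comm]
    exact (hα2 k).symm
  set κ : ℕ → ℝ := fun k => 2 * (η * T / (ω * q k) + (K + η) * T / q k ^ 2 + K * T / q k) with hκ
  have hκlim : Tendsto κ atTop (nhds 0) := by
    have : Tendsto (fun k => 2 * (η * T / ω * (q k)⁻¹ + (K + η) * T * (q k)⁻¹ ^ 2 + K * T * (q k)⁻¹))
        atTop (nhds (2 * (η * T / ω * 0 + (K + η) * T * 0 ^ 2 + K * T * 0))) :=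
      (((hqinv.const_mul _).add ((hqinv.pow 2).const_mul _)).add (hqinv.const_mul _)).const_mul 2
    simp only [ne_eq, OfNat.ofNat_ne_zero, not_false_eq_true, zero_pow, mul_zero, add_zero] at this
    refine this.congr fun k => ?_
    have := hq0 k
    simp only [hκ]
    field_simp
  have hκb : ∀ k, κ k ≤ 2 * (η * T / ω + (K + η) * T + K * T) := by
    intro k
    have h1 := hq1 k
    have h2 : 1 ≤ q k ^ 2 := one_le_pow₀ h1
    have a1 : η * T / (ω * q k) ≤ η * T / ω := by
      apply div_le_div_of_nonneg_left (by positivity) hω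
      nlinarith
    have a2 : (K + η) * T / q k ^ 2 ≤ (K + η) * T := div_le_self (by positivity) h2
    have a3 : K * T / q k ≤ K * T := div_le_self (by positivity) h1
    simp only [hκ]; linarith
  set κm := 2 * (η * T / ω + (K + η) * T + K * T)
  have hlog : ∀ k, ∀ t ∈ Icc 0 T,
      |Real.log (SG ω (Z k t) + 1) - Real.log (SG ω (Z k 0) + 1)| ≤ κ k := fun k => (hest (φ k)).2
  have hratio : ∀ k, ∀ t ∈ Icc 0 T, (SG ω (Z k 0) + 1) / SG ω (Z k t) =
      exp (-(Real.log (SG ω (Z k t) + 1) - Real.log (SG ω (Z k 0) + 1))) * (1 + (SG ω (Z k t))⁻¹) := by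
    intro k t ht
    have h1 := hSp k t ht
    have h2 := hSp k 0 h00
    rw [neg_sub, exp_sub, exp_log (by positivity), exp_log (by positivity)]
    field_simp
  have hratiolim : ∀ t ∈ Icc 0 T,
      Tendsto (fun k => √((SG ω (Z k 0) + 1) / SG ω (Z k t))) atTop (nhds 1) := by
    intro t ht
    have h1 : Tendsto (fun k => Real.log (SG ω (Z k t) + 1) - Real.log (SG ω (Z k 0) + 1)) atTop
        (nhds 0) := by
      rw [tendsto_zero_iff_abs_tendsto_zero]
      exact squeeze_zero (fun k => abs_nonneg _) (fun k => hlog k t ht) hκlim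
    have h2 := ((Real.continuous_exp.tendsto _).comp h1.neg).mul
      ((tendsto_inv_atTop_zero.comp (hSlim t ht)).const_add 1)
    have h3 := (Real.continuous_sqrt.tendsto _).comp h2
    simp only [neg_zero, exp_zero, add_zero, mul_one, Real.sqrt_one] at h3
    refine h3.congr fun k => ?_
    simp only [Function.comp]
    rw [hratio k t ht]
  have hratiob : ∀ k, ∀ t ∈ Icc 0 T, √((SG ω (Z k 0) + 1) / SG ω (Z k t)) ≤ √(exp κm * 2) := by
    intro k t ht
    apply Real.sqrt_le_sqrt
    rw [hratio k t ht]
    have h1 := hS1 k t ht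
    have h2 : (SG ω (Z k t))⁻¹ ≤ 1 := inv_le_one_of_one_le₀ h1
    have h3 := hlog k t ht
    have h4 := hκb k
    have h5 : exp (-(Real.log (SG ω (Z k t) + 1) - Real.log (SG ω (Z k 0) + 1))) ≤ exp κm := by
      apply exp_le_exp.mpr
      linarith [(abs_le.mp h3).1]
    have h6 : 0 ≤ (SG ω (Z k t))⁻¹ := inv_nonneg.mpr (by linarith)
    exact mul_le_mul h5 (by linarith) (by linarith) (exp_pos _).le
  have hx0 : ∀ k t, 0 ≤ XXf 0 (Z k t) := fun k t => Real.sqrt_nonneg _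
  -- the weights
  set cc : ℕ → ℝ → ℝ := fun k t =>
    √((SG ω (Z k 0) + 1) / SG ω (Z k t)) * ((ω * XXf 0 (Z k t) / √(SG ω (Z k t))) / ω) with hcc
  set w : ℝ → ℝ := fun t => |sin (ω * t + θ / 2)| / ω with hw
  have hw0 : ∀ t, 0 ≤ w t := fun t => by simp only [hw]; positivity
  have hcc0 : ∀ k t, 0 ≤ cc k t := fun k t => by
    have := hx0 k t
    simp only [hcc]; positivity
  have hcclim : ∀ t ∈ Icc 0 T, Tendsto (fun k => cc k t) atTop (nhds (w t)) := by
    intro t ht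
    have := (hratiolim t ht).mul ((hαlim t ht).div_const ω)
    rwa [one_mul] at this
  have hccb : ∀ k, ∀ t ∈ Icc 0 T, cc k t ≤ √(exp κm * 2) * (1 / ω) := by
    intro k t ht
    have h1 := (sqrt_facts hω (Z k t)).2
    have h2 : 0 < √(SG ω (Z k t)) := Real.sqrt_pos.mpr (hSp k t ht)
    have h3 : ω * XXf 0 (Z k t) / √(SG ω (Z k t)) ≤ 1 := (div_le_one h2).mpr h1
    have h4 := hx0 k t
    apply mul_le_mul (hratiob k t ht) _ (by positivity) (by positivity)
    gcongr
  set Cc := √(exp κm * 2) * (1 / ω)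
  have hcce : ∀ k, ∀ t ∈ Icc 0 T, √(SG ω (Z k 0) + 1) * DD e ω t (Z k t) =
      cc k t * e t (XXf 0 (Z k t)) := by
    intro k t ht
    have h2 : 0 < √(SG ω (Z k t)) := Real.sqrt_pos.mpr (hSp k t ht)
    have h3 := Real.sq_sqrt (hSp k t ht).le
    simp only [hcc, DD]
    rw [Real.sqrt_div (by linarith [hSp k 0 h00])]
    have : XXf 0 (Z k t) * e t (XXf 0 (Z k t)) / SG ω (Z k t) =
      XXf 0 (Z k t) * e t (XXf 0 (Z k t)) / (√(SG ω (Z k t)) ^ 2) := by rw [h3]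
    rw [this]
    field_simp
  set h : ℕ → ℝ → ℝ := fun k t => √(SG ω (Z k 0) + 1) * DD e ω t (Z k t) with hh
  have hhc : ∀ k, ContinuousOn (h k) (Icc 0 T) := by
    intro k
    have hcZ := (hI₀ (φ k)).cont
    have hX : Continuous fun t => XXf 0 (Z k t) := XXf0_cont.comp hcZ
    have hF : Continuous fun t => f t (XXf 0 (Z k t)) := hf.comp (continuous_id.prodMk hX)
    have hS : Continuous fun t => SG ω (Z k t) := SG_cont.comp (continuous_const.prodMk hcZ)
    have hE : Continuous fun t => e t (XXf 0 (Z k t)) := by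
      simp only [he]; fun_prop
    exact continuousOn_const.mul
      (ContinuousOn.div (hX.mul hE).continuousOn hS.continuousOn fun t ht => (hSp k t ht).ne')
  have hhi : ∀ k, IntervalIntegrable (h k) MeasureTheory.volume 0 T := fun k =>
    ContinuousOn.intervalIntegrable (by rw [uIcc_of_le hT.le]; exact hhc k)
  have hhint : ∀ k, ∫ t in (0:ℝ)..T, h k t ≤ 0 := by
    intro k
    simp only [hh]
    rw [intervalIntegral.integral_const_mul]
    exact mul_nonpos_of_nonneg_of_nonpos (Real.sqrt_nonneg _) (hD₀ (φ k))
  have hhlow : ∀ k, ∀ t ∈ Icc 0 T, -(cc k t * η) ≤ h k t := by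
    intro k t ht
    simp only [hh]
    rw [hcce k t ht]
    have := mul_le_mul_of_nonneg_left (hel t _ (hx0 k t)) (hcc0 k t)
    linarith
  have hkey : ∀ t ∈ Icc 0 T, ∀ a < ℓ t * w t, ∀ᶠ k in atTop, a < h k t := by
    intro t ht a ha
    rcases (hw0 t).eq_or_lt with hw1 | hw1
    · have h1 : Tendsto (fun k => -(cc k t * η)) atTop (nhds 0) := by
        have := ((hcclim t ht).mul_const η).neg
        rw [← hw1] at this
        simpa using this
      rw [← hw1, mul_zero] at ha
      filter_upwards [h1.eventually (lt_mem_nhds ha)] with k hk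
      exact hk.trans_le (hhlow k t ht)
    · obtain ⟨d, hd1, hd2⟩ := exists_between ((div_lt_iff₀ hw1).mpr ha)
      have h1 : Tendsto (fun k => cc k t * d) atTop (nhds (w t * d)) := (hcclim t ht).mul_const d
      have h2 : a < w t * d := by
        rw [div_lt_iff₀ hw1] at hd1; linarith
      have hXlim : Tendsto (fun k => XXf 0 (Z k t)) atTop atTop := by
        have hsin : 0 < |sin (ω * t + θ / 2)| / ω := hw1
        have h3 := (Real.tendsto_sqrt_atTop.comp (hSlim t ht)).atTop_mul_pos hsin
          ((hαlim t ht).div_const ω)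
        refine h3.congr fun k => ?_
        have h4 : 0 < √(SG ω (Z k t)) := Real.sqrt_pos.mpr (hSp k t ht)
        simp only [Function.comp]
        field_simp
      filter_upwards [h1.eventually (lt_mem_nhds h2), hXlim.eventually (hℓ t ht d hd2)] with k hk1 hk2
      refine hk1.trans_le ?_
      simp only [hh]
      rw [hcce k t ht]
      exact mul_le_mul_of_nonneg_left hk2 (hcc0 k t)
  have hβ : θ / 2 ∈ Icc 0 π := ⟨by linarith [hθ.1], by linarith [hθ.2]⟩
  have hpos := hInt _ hβ
  have hLw : (∫ t in (0:ℝ)..T, ℓ t * w t) = (∫ t in (0:ℝ)..T, ℓ t * |sin (ω * t + θ / 2)|) / ω := by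
    rw [← intervalIntegral.integral_div]
    apply intervalIntegral.integral_congr
    intro t _
    simp only [hw]; ring
  have hLpos : 0 < ∫ t in (0:ℝ)..T, ℓ t * w t := by rw [hLw]; positivity
  have hLi : IntervalIntegrable (fun t => ℓ t * w t) MeasureTheory.volume 0 T := by
    by_contra hno
    rw [intervalIntegral.integral_undef hno] at hLpos
    exact lt_irrefl _ hLpos
  have hm : Tendsto (fun k => ∫ t in (0:ℝ)..T, min (h k t) (ℓ t * w t)) atTop
      (nhds (∫ t in (0:ℝ)..T, ℓ t * w t)) := by
    apply intervalIntegral.tendsto_integral_filter_of_dominated_convergence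
      (fun t => |ℓ t * w t| + Cc * η)
    · refine Eventually.of_forall fun k => ?_
      exact (hhi k).def'.aestronglyMeasurable.inf hLi.def'.aestronglyMeasurable
    · refine Eventually.of_forall fun k => Eventually.of_forall fun t ht => ?_
      rw [uIoc_of_le hT.le] at ht
      have ht' : t ∈ Icc 0 T := Ioc_subset_Icc_self ht
      have h1 := hhlow k t ht'
      have h2 := mul_le_mul_of_nonneg_right (hccb k t ht') hη
      have h3 : 0 ≤ Cc * η := mul_nonneg ((hcc0 k t).trans (hccb k t ht')) hη
      rw [Real.norm_eq_abs, abs_le]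
      constructor
      · apply le_min
        · linarith [abs_nonneg (ℓ t * w t)]
        · linarith [neg_abs_le (ℓ t * w t)]
      · refine (min_le_right _ _).trans ?_
        linarith [le_abs_self (ℓ t * w t)]
    · exact hLi.abs.add (by simp)
    · refine Eventually.of_forall fun t ht => ?_
      rw [uIoc_of_le hT.le] at ht
      have ht' : t ∈ Icc 0 T := Ioc_subset_Icc_self ht
      apply tendsto_order.mpr
      constructor
      · intro a ha
        filter_upwards [hkey t ht' a ha] with k hk
        exact lt_min hk ha
      · intro a ha
        exact Eventually.of_forall fun k => (min_le_right _ _).trans_lt ha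
  have hle : ∀ k, ∫ t in (0:ℝ)..T, min (h k t) (ℓ t * w t) ≤ 0 := by
    intro k
    refine le_trans ?_ (hhint k)
    apply intervalIntegral.integral_mono_on hT.le _ (hhi k) fun t _ => min_le_left _ _
    rw [intervalIntegrable_iff]
    exact (hhi k).def'.inf hLi.def'
  exact absurd (le_of_tendsto' hm hle) (not_le.mpr hLpos)


/-- `T`-periodic extension of a path on `[0,T]`. -/
noncomputable def pex (T : ℝ) (Z : ℝ → ℂ) (t : ℝ) : ℂ := Z (T * Int.fract (t / T))

lemma pex_cont {T : ℝ} {Z : ℝ → ℂ} (hZ : Continuous Z) (h : Z T = Z 0) : Continuous (pex T Z) := by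
  have h1 : Continuous ((fun u => Z (T * u)) ∘ Int.fract) :=
    ContinuousOn.comp_fract'' (by fun_prop) (by simp [h])
  exact h1.comp (continuous_id.div_const T)

lemma pex_per {T : ℝ} (hT : 0 < T) (Z : ℝ → ℂ) (t : ℝ) : pex T Z (t + T) = pex T Z t := by
  unfold pex
  rw [add_div, div_self hT.ne', Int.fract_add_one]

lemma pex_mem {T : ℝ} (hT : 0 < T) (t : ℝ) : T * Int.fract (t / T) ∈ Icc 0 T :=
  ⟨mul_nonneg hT.le (Int.fract_nonneg _), by
    have := (Int.fract_lt_one (t / T)).le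
    nlinarith⟩

lemma pex_eq {T : ℝ} (hT : 0 < T) {Z : ℝ → ℂ} (h : Z T = Z 0) {t : ℝ} (ht : t ∈ Icc 0 T) :
    pex T Z t = Z t := by
  unfold pex
  rcases ht.2.eq_or_lt with h1 | h1
  · rw [h1, div_self hT.ne', Int.fract_one, mul_zero, h]
  · rw [Int.fract_eq_self.mpr ⟨div_nonneg ht.1 hT.le, (div_lt_one hT).mpr h1⟩]
    congr 1; field_simp

lemma pex_sol {F : ℝ → ℂ → ℂ} (hF : Continuous (Function.uncurry F)) {T : ℝ} (hT : 0 < T)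
    (hFp : ∀ t z, F (t + T) z = F t z) {Z : ℝ → ℂ} (hZ : Continuous Z) (h : Z T = Z 0)
    (hs : ∀ t ∈ Icc (0 : ℝ) T, Z t = Z 0 + ∫ s in (0 : ℝ)..t, F s (Z s)) (a t : ℝ) :
    pex T Z t = pex T Z a + ∫ s in a..t, F s (pex T Z s) := by
  have hc := pex_cont hZ h
  set G : ℝ → ℂ := fun s => F s (pex T Z s) with hG
  have hGc : Continuous G := hF.comp (continuous_id.prodMk hc)
  have hGp : Function.Periodic G T := fun s => by
    simp only [hG]; rw [hFp, pex_per hT]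
  have hGe : ∀ t ∈ Icc 0 T, ∫ s in (0:ℝ)..t, G s = ∫ s in (0:ℝ)..t, F s (Z s) := by
    intro t ht
    apply intervalIntegral.integral_congr
    intro s hs
    rw [uIcc_of_le ht.1] at hs
    simp only [hG]
    rw [pex_eq hT h ⟨hs.1, hs.2.trans ht.2⟩]
  have hG0 : ∫ s in (0:ℝ)..T, G s = 0 := by
    rw [hGe T ⟨hT.le, le_refl _⟩]
    have := hs T ⟨hT.le, le_refl _⟩
    rw [h] at this
    simpa using this
  have hdp : Function.Periodic (fun t => pex T Z t - (Z 0 + ∫ s in (0:ℝ)..t, G s)) T := by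
    intro t
    simp only
    rw [pex_per hT, hGp.intervalIntegral_add_eq_add 0 t (fun _ _ => hGc.intervalIntegrable _ _),
      zero_add, hG0, add_zero]
  have hall : ∀ t, pex T Z t = Z 0 + ∫ s in (0:ℝ)..t, G s := by
    intro t
    obtain ⟨y, hy, hty⟩ := hdp.exists_mem_Ico₀ hT t
    have hy' := Ico_subset_Icc_self hy
    rw [pex_eq hT h hy', hGe y hy', ← hs y hy', sub_self, sub_eq_zero] at hty
    exact hty
  rw [hall t, hall a, add_assoc, intervalIntegral.integral_add_adjacent_intervals
    (hGc.intervalIntegrable _ _) (hGc.intervalIntegrable _ _)]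

lemma exists_periodic {f : ℝ → ℝ → ℝ} (hf : Continuous (Function.uncurry f)) {K : ℝ} (hK : 0 ≤ K)
    (hG : ∀ t x, 0 ≤ x → |f t x| ≤ K * (1 + x)) {T R : ℝ} (hT : 0 < T) (hR : 0 < R)
    (hper : ∀ t x, f (t + T) x = f t x)
    (hno : ∀ Z : ℝ → ℂ, IS f 0 0 T Z → ‖Z 0‖ = R → ∀ l : ℝ, 1 ≤ l → Z T ≠ l * Z 0) :
    ∃ Z : ℝ → ℂ, (∀ t, Z (t + T) = Z t) ∧ ∀ a b, a ≤ b → IS f 0 a b Z := by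
  set Ls : ℕ → ℝ := fun k => 1 / ((k:ℝ) + 1) with hLs
  have hLs1 : ∀ k, Ls k ∈ Ioc (0:ℝ) 1 := fun k =>
    ⟨by simp only [hLs]; positivity, by
      simp only [hLs]; rw [div_le_one (by positivity)]; linarith [(Nat.cast_nonneg k : (0:ℝ) ≤ k)]⟩
  have hLs0 : Tendsto Ls atTop (nhds 0) := tendsto_one_div_add_atTop_nhds_zero_nat
  have h00 : (0:ℝ) ∈ Icc 0 T := ⟨le_refl _, hT.le⟩
  have hTT : T ∈ Icc 0 T := ⟨hT.le, le_refl _⟩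
  have hev : ∀ᶠ k in atTop, ∀ Z : ℝ → ℂ, Continuous Z →
      (∀ t ∈ Icc (0 : ℝ) T, Z t = Z 0 + ∫ s in (0 : ℝ)..t, FFf f (Ls k) s (Z s)) →
      ‖Z 0‖ = R → ∀ l : ℝ, 1 ≤ l → Z T ≠ l * Z 0 := by
    by_contra hcon
    rw [not_eventually] at hcon
    obtain ⟨φ, hφ, hbad⟩ := extraction_of_frequently_atTop hcon
    push Not at hbad
    choose Zk hZc hZs hZR l hl hZl using hbad
    obtain ⟨M, hM, ψ, hψ, Z, hI, hlim⟩ := IS_compact hf hK hG hT (fun k => Ls (φ k)) (fun k => hLs1 _)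
      (hLs0.comp hφ.tendsto_atTop) Zk (fun k => ⟨hZc k, hZs k⟩) (fun k => (hZR k).le)
    have h0 := hlim 0 h00
    have h1 := hlim T hTT
    have hZ0 : ‖Z 0‖ = R := by
      refine tendsto_nhds_unique h0.norm ?_
      simp only [hZR]; exact tendsto_const_nhds
    have hlk : ∀ k, l k = ‖Zk k T‖ / R := by
      intro k
      rw [hZl k, norm_mul, hZR, Complex.norm_of_nonneg (by linarith [hl k])]
      field_simp
    have hll : Tendsto (fun k => l (ψ k)) atTop (nhds (‖Z T‖ / R)) := by
      refine (h1.norm.div_const R).congr fun k => (hlk _).symm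
    have hl1 : 1 ≤ ‖Z T‖ / R := ge_of_tendsto' hll fun k => hl _
    refine hno Z hI hZ0 _ hl1 (tendsto_nhds_unique h1 ?_)
    refine (((Complex.continuous_ofReal.tendsto _).comp hll).mul h0).congr fun k => ?_
    simp only [Function.comp]
    rw [hZl]
  obtain ⟨k₀, hk₀⟩ := eventually_atTop.mp hev
  set Lk : ℕ → ℝ := fun k => Ls (k + k₀)
  have hL0 : Tendsto Lk atTop (nhds 0) := hLs0.comp (tendsto_add_atTop_nat k₀)
  have hsol := fun k : ℕ => ode_dichotomy (FFf f (Lk k)) (FFf_cont hf (hLs1 _).1)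
    (by positivity : 0 ≤ 18 * K + 9) (FFf_growth hK hG (hLs1 _).1 (hLs1 _).2) hT hR
    (hk₀ (k + k₀) (Nat.le_add_left _ _))
  choose Zk hZc hZs hZR hZT using hsol
  obtain ⟨M, hM, ψ, hψ, Z, hI, hlim⟩ := IS_compact hf hK hG hT Lk (fun k => hLs1 _)
      hL0 Zk (fun k => ⟨hZc k, hZs k⟩) hZR
  have hZ0 : Z T = Z 0 := by
    refine tendsto_nhds_unique (hlim T hTT) ?_
    simp only [hZT]
    exact hlim 0 h00
  refine ⟨pex T Z, pex_per hT Z, fun a b _ => ?_⟩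
  refine IS_limit hf (fun k => Lk (ψ k)) (fun k => Ioc_subset_Icc_self (hLs1 _))
    (hL0.comp hψ.tendsto_atTop) (fun k => pex T (Zk (ψ k))) (fun k => ?_) (M := M) ?_ _
    (pex_cont hI.cont hZ0) ?_
  · apply IsSolL.toIS hf (hLs1 _).1
    refine ⟨pex_cont (hZc _) (hZT _), fun t _ => ?_⟩
    refine pex_sol (FFf_cont hf (hLs1 _).1) hT ?_ (hZc _) (hZT _) (hZs _) a t
    intro t z
    simp only [FFf, hper]
  · intro k t _
    exact hM _ _ (pex_mem hT t)
  · intro t _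
    exact hlim _ (pex_mem hT t)


lemma bounce_aux {f : ℝ → ℝ → ℝ} (hf : Continuous (Function.uncurry f)) {Z : ℝ → ℂ}
    (hI : ∀ a b, a ≤ b → IS f 0 a b Z) {t0 : ℝ} (h0 : XXf 0 (Z t0) = 0) :
    Tendsto (fun t => XXf 0 (Z t) / |t - t0|) (nhdsWithin t0 {t0}ᶜ) (nhds √(AAf 0 (Z t0))) := by
  have hB0 : BBf 0 (Z t0) = 0 := by rw [← XXf_sq, h0]; ring
  have hC0 : (Z t0).im = 0 := by
    have := AB0 (Z t0); rw [hB0] at this; simpa using this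
  have hdB : ∀ t, HasDerivAt (fun t => BBf 0 (Z t)) (Z t).im t := fun t =>
    (hI (t-1) (t+1) (by linarith)).derivB ⟨by linarith, by linarith⟩
  have hdC := (hI (t0-1) (t0+1) (by linarith)).derivC hf (t := t0) ⟨by linarith, by linarith⟩
  rw [h0, zero_mul, mul_zero, sub_zero, hasDerivAt_iff_tendsto_slope] at hdC
  have h1 : Tendsto (fun t => BBf 0 (Z t) / (t - t0) ^ 2) (nhdsWithin t0 {t0}ᶜ) (nhds (AAf 0 (Z t0))) := by
    refine HasDerivAt.lhopital_zero_nhdsNE (f' := fun t => (Z t).im) (g' := fun t => 2 * (t - t0))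
      (Eventually.of_forall hdB) ?_ ?_ ?_ ?_ ?_
    · refine Eventually.of_forall fun t => ?_
      have := ((hasDerivAt_id t).sub_const t0).pow 2
      exact (this.congr_deriv (by simp) : HasDerivAt (fun t => (t - t0) ^ 2) (2 * (t - t0)) t)
    · filter_upwards [self_mem_nhdsWithin] with t ht
      exact mul_ne_zero two_ne_zero (sub_ne_zero.mpr ht)
    · have := (hdB t0).continuousAt.tendsto.mono_left (nhdsWithin_le_nhds (s := {t0}ᶜ))
      rwa [hB0] at this
    · have : Continuous fun t : ℝ => (t - t0) ^ 2 := by fun_prop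
      have := (this.tendsto t0).mono_left (nhdsWithin_le_nhds (s := {t0}ᶜ))
      simpa using this
    · have := hdC.div_const 2
      rw [mul_div_cancel_left₀ _ two_ne_zero] at this
      refine this.congr fun t => ?_
      rw [slope_def_field, hC0, sub_zero, div_div, mul_comm]
  refine ((Real.continuous_sqrt.tendsto _).comp h1).congr fun t => ?_
  simp only [Function.comp]
  rw [Real.sqrt_div (BBf_nonneg 0 _), Real.sqrt_sq_eq_abs]; rfl

lemma bounce_deriv {f : ℝ → ℝ → ℝ} (hf : Continuous (Function.uncurry f)) {Z : ℝ → ℂ}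
    (hI : ∀ a b, a ≤ b → IS f 0 a b Z) {t0 : ℝ} (h0 : XXf 0 (Z t0) = 0) :
    HasDerivWithinAt (fun t => XXf 0 (Z t)) (-√(AAf 0 (Z t0))) (Iic t0) t0 ∧
    HasDerivWithinAt (fun t => XXf 0 (Z t)) (√(AAf 0 (Z t0))) (Ici t0) t0 := by
  have h := bounce_aux hf hI h0
  constructor
  · rw [hasDerivWithinAt_iff_tendsto_slope, Iic_sdiff_right]
    have h1 := (h.mono_left (nhdsWithin_mono t0 (fun t (ht : t < t0) => ht.ne))).neg
    refine h1.congr' ?_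
    filter_upwards [self_mem_nhdsWithin] with t ht
    rw [slope_def_field, h0, sub_zero, abs_of_neg (sub_neg.mpr ht), div_neg, neg_neg]
  · rw [hasDerivWithinAt_iff_tendsto_slope, Ici_sdiff_left]
    have h1 := (h.mono_left (nhdsWithin_mono t0 (fun t (ht : t0 < t) => ht.ne')))
    refine h1.congr' ?_
    filter_upwards [self_mem_nhdsWithin] with t ht
    rw [slope_def_field, h0, sub_zero, abs_of_pos (sub_pos.mpr ht)]

lemma bounce_conv {f : ℝ → ℝ → ℝ} (hf : Continuous (Function.uncurry f)) {Z : ℝ → ℂ}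
    {a b : ℝ} (hab : a < b) (hI : IS f 0 a b Z) (h0 : ∀ t ∈ Ioo a b, XXf 0 (Z t) = 0)
    {t : ℝ} (ht : t ∈ Ioo a b) : 0 ≤ f t 0 := by
  have hc := fX_cont (L := 0) hf hI.cont
  set G : ℝ → ℝ := fun r => f r (XXf 0 (Z r)) with hG
  have hd1 : ∀ s, HasDerivAt (fun s => ∫ r in a..s, G r) (G s) s := fun s =>
    (hc.integral_hasStrictDerivAt a s).hasDerivAt
  have hc1 : Continuous (fun s => ∫ r in a..s, G r) :=
    continuous_iff_continuousAt.mpr fun s => (hd1 s).continuousAt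
  have hd2 : ∀ s, HasDerivAt (fun t => ∫ s in a..t, ∫ r in a..s, G r) (∫ r in a..s, G r) s := fun s =>
    (hc1.integral_hasStrictDerivAt a s).hasDerivAt
  have hconv : ConvexOn ℝ (Ioo a b) (fun t => ∫ s in a..t, ∫ r in a..s, G r) := by
    refine (hI.conv.subset Ioo_subset_Icc_self (convex_Ioo a b)).congr ?_
    intro s hs
    simp only [h0 s hs, zero_add]
    rfl
  have hm := hconv.monotoneOn_deriv (fun s _ => (hd2 s).differentiableAt)
  have he : deriv (fun t => ∫ s in a..t, ∫ r in a..s, G r) = fun s => ∫ r in a..s, G r :=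
    funext fun s => (hd2 s).deriv
  rw [he] at hm
  have h3 := hm.derivWithin_nonneg (x := t)
  rw [(hd1 t).hasDerivWithinAt.derivWithin (isOpen_Ioo.uniqueDiffWithinAt ht)] at h3
  simpa [hG, h0 t ht] using h3

lemma bounce_main {f g : ℝ → ℝ → ℝ} (hf : Continuous (Function.uncurry f)) {Z : ℝ → ℂ}
    (hfg : ∀ t x, 0 ≤ x → f t x = g t x)
    (hI : ∀ a b, a ≤ b → IS f 0 a b Z) : IsBouncingSolution 0 g (fun t => XXf 0 (Z t)) := by
  have hZ := (hI 0 0 le_rfl).cont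
  have hxc : Continuous fun t => XXf 0 (Z t) := XXf0_cont.comp hZ
  have hx0 : ∀ t, 0 ≤ XXf 0 (Z t) := fun t => Real.sqrt_nonneg _
  refine ⟨hxc, hx0, ?_, ?_, ?_, ?_⟩
  · intro t0 h0
    have hd : ∀ s, 0 < XXf 0 (Z s) → HasDerivAt (fun t => XXf 0 (Z t)) ((Z s).im / (2 * XXf 0 (Z s))) s := by
      intro s hs
      have hB : BBf 0 (Z s) ≠ 0 := by rw [← XXf_sq]; positivity
      exact ((hI (s-1) (s+1) (by linarith)).derivB (t := s) ⟨by linarith, by linarith⟩).sqrt hB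
    refine ⟨fun s => (Z s).im / (2 * XXf 0 (Z s)), ?_, ?_⟩
    · filter_upwards [hxc.continuousAt.eventually (lt_mem_nhds h0)] with s hs
      exact hd s hs
    · have hdC := (hI (t0-1) (t0+1) (by linarith)).derivC hf (t := t0) ⟨by linarith, by linarith⟩
      have := hdC.div ((hd t0 h0).const_mul 2) (by positivity)
      refine this.congr_deriv ?_
      have hAB := AB0 (Z t0)
      rw [← XXf_sq] at hAB
      rw [← hfg t0 _ (hx0 t0)]
      set X := XXf 0 (Z t0) with hX
      have hXn : X ≠ 0 := h0.ne'
      field_simp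
      linear_combination (-1) * hAB
  · intro t0 h0 _
    refine ⟨-√(AAf 0 (Z t0)), (bounce_deriv hf hI h0).1, ?_⟩
    rw [neg_neg]; exact (bounce_deriv hf hI h0).2
  · intro t0 v h0 hv hor
    have hA : √(AAf 0 (Z t0)) ≠ 0 := by
      intro hA
      have hbd := bounce_deriv hf hI h0
      rw [hA, neg_zero] at hbd
      apply hv
      rcases hor with h | h
      · exact (uniqueDiffWithinAt_Iic t0).eq_deriv _ h hbd.1
      · exact (uniqueDiffWithinAt_Ici t0).eq_deriv _ h hbd.2
    have hA' : 0 < √(AAf 0 (Z t0)) := lt_of_le_of_ne (Real.sqrt_nonneg _) hA.symm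
    filter_upwards [(bounce_aux hf hI h0).eventually (lt_mem_nhds hA')] with s hs
    rcases (hx0 s).eq_or_lt with h | h
    · rw [← h, zero_div] at hs; exact absurd hs (lt_irrefl _)
    · exact h
  · intro a b hab h0 t ht
    rw [← hfg t 0 le_rfl]
    exact bounce_conv hf hab (hI a b hab.le) h0 ht


lemma psi_eq {T : ℝ} (hT : 0 < T) {j : ℕ} (hj : 0 < j) (t β : ℝ) :
    psiEig T j (t + β / ((j : ℝ) * π / T)) = |sin ((j : ℝ) * π / T * t + β)| := by
  have hj' : (0:ℝ) < j := by exact_mod_cast hj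
  have hpi := Real.pi_pos
  unfold psiEig muEig
  rw [Real.sqrt_sq (by positivity)]
  set u := (t + β / ((j : ℝ) * π / T)) / (T / (j : ℝ)) with hu
  have h1 : (j : ℝ) * π / T * (Int.fract u * (T / (j : ℝ))) = π * Int.fract u := by
    field_simp
  have h2 : (j : ℝ) * π / T * t + β = π * Int.fract u + (⌊u⌋ : ℤ) * π := by
    have h3 : Int.fract u = u - ⌊u⌋ := rfl
    rw [h3]
    have h4 : π * u = (j : ℝ) * π / T * t + β := by rw [hu]; field_simp
    linear_combination -h4
  rw [h1, h2, Real.sin_add_int_mul_pi, abs_mul, abs_zpow, abs_neg, abs_one, one_zpow, one_mul,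
    abs_of_nonneg]
  apply Real.sin_nonneg_of_nonneg_of_le_pi
  · have := Int.fract_nonneg u; positivity
  · have := (Int.fract_lt_one u).le; nlinarith

lemma ev_liminf {u : ℝ → ℝ} {m c : ℝ} (hm : ∀ᶠ x in atTop, m ≤ u x) (hc : c < liminf u atTop) :
    ∀ᶠ x in atTop, c ≤ u x := by
  rw [Filter.liminf_eq] at hc
  obtain ⟨a, ha, hca⟩ := exists_lt_of_lt_csSup ⟨m, hm⟩ hc
  filter_upwards [ha] with x hx
  linarith

lemma ev_limsup {u : ℝ → ℝ} {m c : ℝ} (hm : ∀ᶠ x in atTop, u x ≤ m) (hc : limsup u atTop < c) :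
    ∀ᶠ x in atTop, u x ≤ c := by
  rw [Filter.limsup_eq] at hc
  obtain ⟨a, ha, hca⟩ := exists_lt_of_csInf_lt ⟨m, hm⟩ hc
  filter_upwards [ha] with x hx
  linarith

lemma J_eq {f : ℝ → ℝ → ℝ} (hf : Continuous (Function.uncurry f)) {T : ℝ} (hT : 0 < T)
    {Z : ℝ → ℂ} (hI : IS f 0 0 T Z) (hpos : ∀ t ∈ Icc 0 T, Z t ≠ 0) {ω σ : ℝ} (hω : 0 < ω)
    (hσ : σ ^ 2 = 1) :
    (∫ s in 0..T, KK f ω s (Z s)) = 2 * ω * T + 2 * ω * σ *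
      ∫ s in 0..T, DD (fun t x => σ * (f t x - ω ^ 2 * x)) ω s (Z s) := by
  have hc := (hI.angle hf hT hpos hω).1
  have h1 : (∫ s in 0..T, DD (fun t x => σ * (f t x - ω ^ 2 * x)) ω s (Z s)) =
      ∫ s in 0..T, (σ / (2 * ω)) * (KK f ω s (Z s) - 2 * ω) := by
    refine intervalIntegral.integral_congr fun s hs => ?_
    rw [uIcc_of_le hT.le] at hs
    rw [KK_eq f hω s (hpos s hs)]
    unfold DD
    field_simp
    ring
  have hi : IntervalIntegrable (fun s => KK f ω s (Z s)) MeasureTheory.volume 0 T :=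
    ContinuousOn.intervalIntegrable (by rwa [uIcc_of_le hT.le])
  rw [h1, intervalIntegral.integral_const_mul, intervalIntegral.integral_sub hi (by simp),
    intervalIntegral.integral_const, smul_eq_mul]
  field_simp
  rw [hσ]
  ring

theorem statement2
    (T : ℝ) (hT : 0 < T)
    (g : ℝ → ℝ → ℝ)
    (hg_cont : ContinuousOn (fun q : ℝ × ℝ => g q.1 q.2) (univ ×ˢ Ici (0 : ℝ)))
    (hg_per : ∀ t x, g (t + T) x = g t x)
    (N : ℕ) (hN : 0 < N) (η : ℝ)
    (hη : ∀ t ∈ Icc (0 : ℝ) T, ∀ x : ℝ, 0 < x →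
      muEig T N * x - η ≤ g t x ∧ g t x ≤ muEig T (N + 1) * x + η)
    (hLL1 : ∀ τ ∈ Icc (0 : ℝ) T,
      (∫ t in (0 : ℝ)..T,
        (limsup (fun x : ℝ => g t x - muEig T (N + 1) * x) atTop) *
          psiEig T (N + 1) (t + τ)) < 0)
    (hLL2 : ∀ τ ∈ Icc (0 : ℝ) T,
      (∫ t in (0 : ℝ)..T,
        (liminf (fun x : ℝ => g t x - muEig T N * x) atTop) *
          psiEig T N (t + τ)) > 0) :
    ∃ x : ℝ → ℝ, IsBouncingSolution 0 g x ∧ ∀ t, x (t + T) = x t := by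
  have hpi := Real.pi_pos
  have hN' : (1:ℝ) ≤ N := by exact_mod_cast hN
  set f : ℝ → ℝ → ℝ := fun t x => g t (max x 0) with hfdef
  have hf : Continuous (Function.uncurry f) := by
    have : Continuous fun q : ℝ × ℝ => (q.1, max q.2 0) := by fun_prop
    exact hg_cont.comp_continuous this (fun q => ⟨mem_univ _, mem_Ici.mpr (le_max_right _ _)⟩)
  have hfg : ∀ t x, 0 ≤ x → f t x = g t x := fun t x hx => by simp only [hfdef, max_eq_left hx]
  have hper : ∀ t x, f (t + T) x = f t x := fun t x => hg_per t _
  -- bounds for all times and `x ≥ 0`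
  have hb0 : ∀ t ∈ Icc (0:ℝ) T, ∀ x, 0 ≤ x →
      muEig T N * x - η ≤ f t x ∧ f t x ≤ muEig T (N + 1) * x + η := by
    intro t ht x hx
    have hfc : Continuous (f t) := hf.comp (Continuous.prodMk_right t)
    have hx' : x ∈ closure (Ioi (0:ℝ)) := by rw [closure_Ioi]; exact hx
    constructor
    · refine closure_minimal (s := Ioi (0:ℝ)) (t := {y | muEig T N * y - η ≤ f t y}) ?_
        (isClosed_le (by fun_prop) hfc) hx'
      intro y (hy : 0 < y)
      rw [mem_ofPred_eq]
      rw [hfg t y hy.le]; exact (hη t ht y hy).1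
    · refine closure_minimal (s := Ioi (0:ℝ)) (t := {y | f t y ≤ muEig T (N + 1) * y + η}) ?_
        (isClosed_le hfc (by fun_prop)) hx'
      intro y (hy : 0 < y)
      rw [mem_ofPred_eq]
      rw [hfg t y hy.le]; exact (hη t ht y hy).2
  have hb : ∀ t x, 0 ≤ x → muEig T N * x - η ≤ f t x ∧ f t x ≤ muEig T (N + 1) * x + η := by
    intro t x hx
    have hp : Function.Periodic (fun t => f t x) T := fun t => hper t x
    obtain ⟨y, hy, hty⟩ := hp.exists_mem_Ico₀ hT t
    change f t x = f y x at hty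
    rw [hty]
    exact hb0 y (Ico_subset_Icc_self hy) x hx
  have hη0 : 0 ≤ η := by
    have := hb 0 0 le_rfl
    simp only [mul_zero] at this
    linarith [this.1, this.2]
  set ω₁ : ℝ := (N : ℝ) * π / T with hω₁
  set ω₂ : ℝ := ((N + 1 : ℕ) : ℝ) * π / T with hω₂
  have h1 : 0 < ω₁ := by positivity
  have h2 : 0 < ω₂ := by positivity
  have h12 : ω₁ ≤ ω₂ := by
    rw [hω₁, hω₂]; gcongr; simp
  have hm1 : muEig T N = ω₁ ^ 2 := rfl
  have hm2 : muEig T (N + 1) = ω₂ ^ 2 := rfl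
  rw [hm1, hm2] at hb
  rw [hm1] at hLL2
  rw [hm2] at hLL1
  have hsq : ω₁ ^ 2 ≤ ω₂ ^ 2 := by gcongr
  have hT1 : π = ω₁ * T / N := by rw [hω₁]; field_simp
  have hw1 : ω₁ * T = π * N := by rw [hω₁]; field_simp
  have hw2 : ω₂ * T = π * (N + 1) := by rw [hω₂]; push_cast; field_simp
  have hp1 := sq_nonneg ω₁
  have hp2 := sq_nonneg ω₂
  have hG : ∀ t x, 0 ≤ x → |f t x| ≤ (ω₂ ^ 2 + η) * (1 + x) := by
    intro t x hx
    obtain ⟨ha, hc⟩ := hb t x hx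
    have := mul_nonneg hη0 hx
    have := mul_nonneg hp1 hx
    rw [abs_le]; constructor <;> nlinarith
  obtain ⟨R₁, hR₁, hL1⟩ := LL_main hf (by positivity) hG hT h1 (σ := 1) (by norm_num) hη0
    (K := ω₂ ^ 2 + 2 * η) (by positivity) (fun t x => 1 * (f t x - ω₁ ^ 2 * x)) (fun _ _ => rfl)
    (fun t x hx => by linarith [(hb t x hx).1])
    (fun t x hx => by
      have := mul_nonneg hη0 hx
      have := mul_nonneg hp1 hx
      nlinarith [(hb t x hx).2])
    (fun t => liminf (fun x : ℝ => g t x - ω₁ ^ 2 * x) atTop)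
    (by
      intro t _ c hc
      have hm : ∀ᶠ x in atTop, -η ≤ g t x - ω₁ ^ 2 * x := by
        filter_upwards [eventually_ge_atTop 0] with x hx
        rw [← hfg t x hx]; linarith [(hb t x hx).1]
      filter_upwards [ev_liminf hm hc, eventually_ge_atTop 0] with x h hx
      rw [hfg t x hx, one_mul]; exact h)
    (by
      intro β hβ
      have hτ : β / ω₁ ∈ Icc 0 T := by
        refine ⟨div_nonneg hβ.1 h1.le, ?_⟩
        rw [div_le_iff₀ h1, mul_comm, hw1]
        nlinarith [hβ.2]
      have := hLL2 _ hτ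
      simpa only [hω₁, psi_eq hT hN] using this)
  obtain ⟨R₂, hR₂, hL2⟩ := LL_main hf (by positivity) hG hT h2 (σ := -1) (by norm_num) hη0
    (K := ω₂ ^ 2 + 2 * η) (by positivity) (fun t x => -1 * (f t x - ω₂ ^ 2 * x)) (fun _ _ => rfl)
    (fun t x hx => by linarith [(hb t x hx).2])
    (fun t x hx => by
      have := mul_nonneg hη0 hx
      have := mul_nonneg hp1 hx
      nlinarith [(hb t x hx).1])
    (fun t => -limsup (fun x : ℝ => g t x - ω₂ ^ 2 * x) atTop)
    (by
      intro t _ c hc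
      have hm : ∀ᶠ x in atTop, g t x - ω₂ ^ 2 * x ≤ η := by
        filter_upwards [eventually_ge_atTop 0] with x hx
        rw [← hfg t x hx]; linarith [(hb t x hx).2]
      filter_upwards [ev_limsup (c := -c) hm (by linarith), eventually_ge_atTop 0] with x h hx
      rw [hfg t x hx]; linarith)
    (by
      intro β hβ
      have hτ : β / ω₂ ∈ Icc 0 T := by
        refine ⟨div_nonneg hβ.1 h2.le, ?_⟩
        rw [div_le_iff₀ h2, mul_comm, hw2]
        nlinarith [hβ.2]
      have := hLL1 _ hτ
      simp only [neg_mul, intervalIntegral.integral_neg]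
      rw [neg_pos]
      simpa only [hω₂, psi_eq hT (Nat.succ_pos N)] using this)
  have hno : ∀ Z : ℝ → ℂ, IS f 0 0 T Z → ‖Z 0‖ = max R₁ R₂ → ∀ l : ℝ, 1 ≤ l → Z T ≠ l * Z 0 := by
    intro Z hI hR l hl hZ
    obtain ⟨hpos, hD1⟩ := hL1 Z hI (hR ▸ le_max_left _ _)
    obtain ⟨-, hD2⟩ := hL2 Z hI (hR ▸ le_max_right _ _)
    obtain ⟨n, hn1, hn2⟩ := J_const hf hT hI hpos (by linarith) hZ h1 h12
    rw [J_eq hf hT hI hpos h1 (σ := 1) (by norm_num)] at hn1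
    rw [J_eq hf hT hI hpos h2 (σ := -1) (by norm_num)] at hn2
    have e1 := mul_pos h1 hD1
    have e2 := mul_pos h2 hD2
    have hlt1 : π * (N:ℝ) < π * n := by linarith
    have hlt2 : π * (n:ℝ) < π * (N + 1) := by linarith
    have l1 : ((N:ℤ):ℝ) < n := by
      have := lt_of_mul_lt_mul_left hlt1 hpi.le
      exact_mod_cast this
    have l2 : (n:ℝ) < ((N + 1 : ℤ) : ℝ) := by
      have := lt_of_mul_lt_mul_left hlt2 hpi.le
      push_cast; exact this
    have l1' : (N:ℤ) < n := by exact_mod_cast l1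
    have l2' : n < (N:ℤ) + 1 := by exact_mod_cast l2
    omega
  obtain ⟨Z, hZp, hZ⟩ := exists_periodic hf (by positivity) hG hT
    (lt_max_of_lt_left hR₁) hper hno
  exact ⟨fun t => XXf 0 (Z t), bounce_main hf hfg hZ, fun t => by simp only [hZp]⟩
end

section
/- Let R0 > 0, T > 0, L0 > 0, δ > 0 and let f : ℝ × [R0,∞) → ℝ be continuous and T-periodic in its first variable, satisfying: there exist constants μ̌ ≤ μ̂ and a nonnegative integer N with (Nπ/T)² < μ̌, μ̂ < ((N+1)π/T)², and μ̌ ≤ liminf_{ρ→+∞} f(t,ρ)/ρ ≤ limsup_{ρ→+∞} f(t,ρ)/ρ ≤ μ̂ uniformly in t. Then there exist a positive integer n̄ and an open bounded set Ξ ⊂ (−R0/2, +∞) × ℝ such that every T-periodic solution x of x'' + g_n(L,t,x) = 0 with n > n̄ and L ∈ [0,L0] satisfies (x(t),x'(t)) ∈ Ξ for every t ∈ [0,T]. -/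
open Real Filter Set

/-- `g(L,t,r) = −L²/(r+R0)³ + f(t, r+R0)`. -/
noncomputable def gFun (R0 : ℝ) (f : ℝ → ℝ → ℝ) (L t r : ℝ) : ℝ :=
  -(L ^ 2) / (r + R0) ^ 3 + f t (r + R0)

/-- The approximating nonlinearity `g_n`. -/
noncomputable def gApprox (R0 δ : ℝ) (f : ℝ → ℝ → ℝ) (n : ℕ) (L t x : ℝ) : ℝ :=
  if 1 / (n : ℝ) ≤ x then gFun R0 f L t x
  else if 0 < x then (n : ℝ) * x * (gFun R0 f L t x + δ) - δ
  else (n : ℝ) * x - δ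

noncomputable def kap (a b x : ℝ) : ℝ := a * (max x 0) ^ 2 + b * (min x 0) ^ 2

lemma kap_of_nonneg {a b x : ℝ} (h : 0 ≤ x) : kap a b x = a * x ^ 2 := by
  simp [kap, max_eq_left h, min_eq_right h]

lemma kap_of_nonpos {a b x : ℝ} (h : x ≤ 0) : kap a b x = b * x ^ 2 := by
  simp [kap, max_eq_right h, min_eq_left h]

lemma kap_continuous (a b : ℝ) : Continuous (kap a b) := by
  unfold kap; fun_prop

lemma kap_mul {a b r x : ℝ} (hr : 0 ≤ r) : kap a b (r * x) = r ^ 2 * kap a b x := by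
  rcases le_total 0 x with h | h
  · rw [kap_of_nonneg h, kap_of_nonneg (mul_nonneg hr h)]; ring
  · rw [kap_of_nonpos h, kap_of_nonpos (mul_nonpos_of_nonneg_of_nonpos hr h)]; ring

lemma kap_hasDerivAt (a b x : ℝ) :
    HasDerivAt (kap a b) (2 * (a * max x 0 + b * min x 0)) x := by
  have key : ∀ c : ℝ, HasDerivAt (fun y : ℝ => c * y ^ 2) (2 * (c * x)) x := by
    intro c
    have := (hasDerivAt_pow 2 x).const_mul c
    refine this.congr_deriv ?_
    push_cast; ring
  rcases lt_trichotomy x 0 with h | h | h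
  · have := (key b).congr_of_eventuallyEq (f₁ := kap a b) (by
      filter_upwards [gt_mem_nhds h] with y hy
      exact kap_of_nonpos hy.le)
    simpa [max_eq_right h.le, min_eq_left h.le] using this
  · subst h
    have h1 : HasDerivWithinAt (kap a b) 0 (Ici 0) 0 := by
      have := (key a).hasDerivWithinAt (s := Ici 0)
      simp only [mul_zero] at this
      exact this.congr (fun y hy => kap_of_nonneg hy) (kap_of_nonneg le_rfl)
    have h2 : HasDerivWithinAt (kap a b) 0 (Iic 0) 0 := by
      have := (key b).hasDerivWithinAt (s := Iic 0)
      simp only [mul_zero] at this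
      exact this.congr (fun y hy => kap_of_nonpos hy) (kap_of_nonpos le_rfl)
    have := h2.union h1
    rw [Iic_union_Ici, hasDerivWithinAt_univ] at this
    simpa using this
  · have := (key a).congr_of_eventuallyEq (f₁ := kap a b) (by
      filter_upwards [lt_mem_nhds h] with y hy
      exact kap_of_nonneg hy.le)
    simpa [max_eq_left h.le, min_eq_right h.le] using this

lemma kap_pos {a b y x : ℝ} (ha : 0 < a) (hb : 0 < b) (h : 0 < y ^ 2 + x ^ 2) :
    0 < y ^ 2 + kap a b x := by
  have hy := sq_nonneg y
  rcases le_total 0 x with hx | hx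
  · rw [kap_of_nonneg hx]
    by_cases h0 : x = 0
    · subst h0; simpa using h
    · have := sq_pos_of_ne_zero h0
      positivity
  · rw [kap_of_nonpos hx]
    by_cases h0 : x = 0
    · subst h0; simpa using h
    · have := sq_pos_of_ne_zero h0
      positivity

noncomputable def wt (a b θ : ℝ) : ℝ := (sin θ ^ 2 + kap a b (cos θ))⁻¹

lemma wt_den_pos {a b : ℝ} (ha : 0 < a) (hb : 0 < b) (θ : ℝ) :
    0 < sin θ ^ 2 + kap a b (cos θ) :=
  kap_pos ha hb (by rw [sin_sq_add_cos_sq]; norm_num)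

lemma wt_continuous {a b : ℝ} (ha : 0 < a) (hb : 0 < b) : Continuous (wt a b) := by
  unfold wt
  refine Continuous.inv₀ ?_ (fun θ => (wt_den_pos ha hb θ).ne')
  have := kap_continuous a b
  fun_prop

lemma wt_periodic (a b : ℝ) : Function.Periodic (wt a b) (2 * π) := by
  intro θ
  simp [wt]

lemma half_integral {a : ℝ} (ha : 0 < a) :
    ∫ θ in (-(π / 2))..(π / 2), (sin θ ^ 2 + a * cos θ ^ 2)⁻¹ = π / √a := by
  have hs : 0 < √a := Real.sqrt_pos.2 ha
  have hsq : √a ^ 2 = a := Real.sq_sqrt ha.le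
  have hpos : ∀ θ : ℝ, 0 < sin θ ^ 2 + a * cos θ ^ 2 := by
    intro θ
    have := wt_den_pos ha ha θ
    rcases le_total 0 (cos θ) with h | h
    · rwa [kap_of_nonneg h] at this
    · rwa [kap_of_nonpos h] at this
  have hcont : Continuous (fun θ : ℝ => (sin θ ^ 2 + a * cos θ ^ 2)⁻¹) :=
    Continuous.inv₀ (by fun_prop) (fun θ => (hpos θ).ne')
  have hpi := Real.pi_pos
  rw [intervalIntegral.integral_eq_sub_of_hasDerivAt_of_tendsto
    (f := fun θ => arctan (tan θ / √a) / √a) (fa := (-(π / 2)) / √a) (fb := (π / 2) / √a)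
    (by linarith) ?_ (hcont.intervalIntegrable _ _) ?_ ?_]
  · ring
  · intro θ hθ
    have hc : 0 < cos θ := cos_pos_of_mem_Ioo hθ
    have h1 := (((hasDerivAt_tan hc.ne').div_const (√a)).arctan).div_const (√a)
    refine h1.congr_deriv ?_
    have := hpos θ
    rw [tan_eq_sin_div_cos]
    have h2 : 0 < 1 + (sin θ / cos θ / √a) ^ 2 := by positivity
    have h3 : 1 + (sin θ / cos θ / √a) ^ 2 = (sin θ ^ 2 + a * cos θ ^ 2) / (a * cos θ ^ 2) := by
      rw [div_pow, div_pow, hsq]; field_simp; ring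
    rw [h3]
    field_simp
    rw [hsq]
  · refine Tendsto.div_const ?_ _
    have h1 : Tendsto arctan atBot (nhds (-(π / 2))) :=
      tendsto_arctan_atBot.mono_right nhdsWithin_le_nhds
    exact h1.comp (tendsto_tan_neg_pi_div_two.atBot_div_const hs)
  · refine Tendsto.div_const ?_ _
    have h1 : Tendsto arctan atTop (nhds (π / 2)) :=
      tendsto_arctan_atTop.mono_right nhdsWithin_le_nhds
    exact h1.comp (tendsto_tan_pi_div_two.atTop_div_const hs)

lemma wt_integral {a b : ℝ} (ha : 0 < a) (hb : 0 < b) :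
    ∫ θ in (0:ℝ)..(2 * π), wt a b θ = π / √a + π / √b := by
  have hpi := Real.pi_pos
  have hc := wt_continuous ha hb
  have h := (wt_periodic a b).intervalIntegral_add_eq (-(π / 2)) 0
  rw [zero_add] at h
  rw [← h, ← intervalIntegral.integral_add_adjacent_intervals (b := π / 2)
    (hc.intervalIntegrable _ _) (hc.intervalIntegrable _ _)]
  congr 1
  · rw [← half_integral ha]
    apply intervalIntegral.integral_congr
    intro θ hθ
    rw [uIcc_of_le (by linarith)] at hθ
    simp only [wt]
    rw [kap_of_nonneg (cos_nonneg_of_mem_Icc hθ)]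
  · rw [← half_integral hb]
    have h1 := intervalIntegral.integral_comp_add_right (a := -(π / 2)) (b := π / 2) (wt a b) π
    rw [show -(π / 2) + 2 * π = π / 2 + π by ring, show π / 2 = -(π / 2) + π by ring]
    rw [show -(π / 2) + π + π = π / 2 + π by ring, ← h1]
    rw [show -(π / 2) + π = π / 2 by ring]
    apply intervalIntegral.integral_congr
    intro θ hθ
    rw [uIcc_of_le (by linarith)] at hθ
    simp only [wt]
    rw [cos_add_pi, sin_add_pi, kap_of_nonpos (by linarith [cos_nonneg_of_mem_Icc hθ])]
    ring

noncomputable def Qf (a b θ : ℝ) : ℝ := ∫ s in (0:ℝ)..θ, wt a b s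

lemma Qf_hasDerivAt {a b : ℝ} (ha : 0 < a) (hb : 0 < b) (θ : ℝ) :
    HasDerivAt (Qf a b) (wt a b θ) θ :=
  ((wt_continuous ha hb).integral_hasStrictDerivAt 0 θ).hasDerivAt

lemma Qf_add {a b : ℝ} (ha : 0 < a) (hb : 0 < b) (θ : ℝ) (k : ℤ) :
    Qf a b (θ + k * (2 * π)) - Qf a b θ = k * (π / √a + π / √b) := by
  have hc := wt_continuous ha hb
  unfold Qf
  rw [intervalIntegral.integral_interval_sub_left (hc.intervalIntegrable _ _)
    (hc.intervalIntegrable _ _)]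
  have := (wt_periodic a b).intervalIntegral_add_zsmul_eq k θ (fun _ _ => hc.intervalIntegrable _ _)
  rw [(wt_periodic a b).intervalIntegral_add_eq θ 0, zero_add, wt_integral ha hb] at this
  simpa only [zsmul_eq_mul] using this

lemma mono_aux {T c : ℝ} {h h' : ℝ → ℝ}
    (hd : ∀ t ∈ Icc (0:ℝ) T, HasDerivWithinAt h (h' t) (Icc 0 T) t)
    (hc : ∀ t ∈ Icc (0:ℝ) T, c ≤ h' t) : ∀ s ∈ Icc (0:ℝ) T, ∀ t ∈ Icc (0:ℝ) T, s ≤ t →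
    c * (t - s) ≤ h t - h s := by
  intro s hs t ht hst
  have hm : MonotoneOn (fun t => h t - c * t) (Icc 0 T) := by
    refine monotoneOn_of_hasDerivWithinAt_nonneg (f' := fun t => h' t - c) (convex_Icc 0 T) ?_ ?_ ?_
    · have : ContinuousOn h (Icc 0 T) := fun t ht => (hd t ht).continuousWithinAt
      fun_prop
    · intro t ht
      have ht' := interior_subset ht
      have h1 : HasDerivWithinAt (fun t : ℝ => c * t) c (Icc 0 T) t := by
        simpa using ((hasDerivAt_id t).const_mul c).hasDerivWithinAt (s := Icc 0 T)
      exact ((hd t ht').sub h1).mono interior_subset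
    · intro t ht
      have := hc t (interior_subset ht)
      simpa using this
  have := hm hs ht hst
  simp only at this
  linarith

lemma phase {T : ℝ} (hT : 0 < T) {x x' G : ℝ → ℝ}
    (hx : ∀ t ∈ Icc (0:ℝ) T, HasDerivWithinAt x (x' t) (Icc 0 T) t)
    (hx' : ∀ t ∈ Icc (0:ℝ) T, HasDerivWithinAt x' (-(G t)) (Icc 0 T) t)
    (hG : ContinuousOn G (Icc 0 T))
    (hpos : ∀ t ∈ Icc (0:ℝ) T, 0 < x' t ^ 2 + x t ^ 2)
    (h0 : x 0 = x T) (h0' : x' 0 = x' T) :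
    ∃ k : ℤ, ∀ a b c : ℝ, 0 < a → 0 < b →
      ((∀ t ∈ Icc (0:ℝ) T, x' t ^ 2 + x t * G t ≤ c * (x' t ^ 2 + kap a b (x t))) →
        k * (π / √a + π / √b) ≤ c * T) ∧
      ((∀ t ∈ Icc (0:ℝ) T, c * (x' t ^ 2 + kap a b (x t)) ≤ x' t ^ 2 + x t * G t) →
        c * T ≤ k * (π / √a + π / √b)) := by
  have m0 : (0:ℝ) ∈ Icc 0 T := ⟨le_rfl, hT.le⟩
  have mT : T ∈ Icc 0 T := ⟨hT.le, le_rfl⟩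
  set z : ℝ → ℂ := fun t => ⟨x t, x' t⟩ with hz
  set z' : ℝ → ℂ := fun t => ⟨x' t, -(G t)⟩ with hz'
  have zeq : z = fun t => (x t : ℂ) + (x' t : ℂ) * Complex.I := by
    ext t; exact Complex.mk_eq_add_mul_I _ _
  have zeq' : z' = fun t => (x' t : ℂ) + ((-(G t) : ℝ) : ℂ) * Complex.I := by
    ext t; exact Complex.mk_eq_add_mul_I _ _
  have hzd : ∀ t ∈ Icc (0:ℝ) T, HasDerivWithinAt z (z' t) (Icc 0 T) t := by
    intro t ht
    rw [zeq, zeq']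
    exact (hx t ht).ofReal_comp.add ((hx' t ht).ofReal_comp.mul_const _)
  have hxc : ContinuousOn x (Icc 0 T) := fun t ht => (hx t ht).continuousWithinAt
  have hxc' : ContinuousOn x' (Icc 0 T) := fun t ht => (hx' t ht).continuousWithinAt
  have hzc : ContinuousOn z (Icc 0 T) := fun t ht => (hzd t ht).continuousWithinAt
  have hzc' : ContinuousOn z' (Icc 0 T) := by
    rw [zeq']
    exact (Complex.continuous_ofReal.comp_continuousOn hxc').add
      ((Complex.continuous_ofReal.comp_continuousOn hG.neg).mul continuousOn_const)
  have hz0 : ∀ t ∈ Icc (0:ℝ) T, z t ≠ 0 := by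
    intro t ht h
    have h1 := hpos t ht
    have h2 : x t = 0 := congrArg Complex.re h
    have h3 : x' t = 0 := congrArg Complex.im h
    rw [h2, h3] at h1
    simp at h1
  have hqc : ContinuousOn (fun t => z' t / z t) (Icc 0 T) := hzc'.div hzc hz0
  obtain ⟨q, hqcont, hq⟩ : ∃ q : ℝ → ℂ, Continuous q ∧ ∀ t ∈ Icc (0:ℝ) T, q t = z' t / z t := by
    refine ⟨IccExtend hT.le ((Icc 0 T).domRestrict (fun t => z' t / z t)), ?_, ?_⟩
    · exact (continuousOn_iff_continuous_domRestrict.1 hqc).Icc_extend'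
    · intro t ht
      rw [IccExtend_of_mem hT.le _ ht]; rfl
  set w : ℝ → ℂ := fun t => ∫ s in (0:ℝ)..t, q s with hw
  have hwd : ∀ t, HasDerivAt w (q t) t := fun t =>
    (hqcont.integral_hasStrictDerivAt 0 t).hasDerivAt
  have hw0 : w 0 = 0 := by simp [hw]
  have hconst : ∀ t ∈ Icc (0:ℝ) T, z t * Complex.exp (-(w t)) = z 0 := by
    have hd : ∀ t ∈ Icc (0:ℝ) T,
        HasDerivWithinAt (fun t => z t * Complex.exp (-(w t))) 0 (Icc 0 T) t := by
      intro t ht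
      have h1 := (hzd t ht).mul ((hwd t).neg.cexp.hasDerivWithinAt (s := Icc 0 T))
      refine h1.congr_deriv ?_
      rw [hq t ht]
      have := hz0 t ht
      field_simp
      simp
    intro t ht
    have := constant_of_has_deriv_right_zero (fun t ht => (hd t ht).continuousWithinAt)
      (fun t ht => (hd t (Ico_subset_Icc_self ht)).mono_of_mem_nhdsWithin
        (Icc_mem_nhdsGE_of_mem ht)) t ht
    rw [this, hw0]; simp
  have hzw : ∀ t ∈ Icc (0:ℝ) T, z t = z 0 * Complex.exp (w t) := by
    intro t ht
    rw [← hconst t ht, mul_assoc, ← Complex.exp_add]; simp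
  set θ : ℝ → ℝ := fun t => (z 0).arg + (w t).im with hθ
  set r : ℝ → ℝ := fun t => ‖z 0‖ * Real.exp (w t).re with hr
  have hrpos : ∀ t, 0 < r t := fun t => mul_pos (norm_pos_iff.2 (hz0 0 m0)) (Real.exp_pos _)
  have hpol : ∀ t ∈ Icc (0:ℝ) T, z t = (r t : ℂ) * Complex.exp ((θ t : ℂ) * Complex.I) := by
    intro t ht
    rw [hzw t ht]
    conv_lhs => rw [← Complex.norm_mul_exp_arg_mul_I (z 0), ← Complex.re_add_im (w t)]
    simp only [hr, hθ]
    push_cast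
    rw [add_mul, Complex.exp_add, Complex.exp_add]
    ring
  have hxr : ∀ t ∈ Icc (0:ℝ) T, x t = r t * cos (θ t) := by
    intro t ht
    have := congrArg Complex.re (hpol t ht)
    rw [Complex.re_ofReal_mul, Complex.exp_ofReal_mul_I_re] at this
    exact this
  have hxr' : ∀ t ∈ Icc (0:ℝ) T, x' t = r t * sin (θ t) := by
    intro t ht
    have := congrArg Complex.im (hpol t ht)
    rw [Complex.im_ofReal_mul, Complex.exp_ofReal_mul_I_im] at this
    exact this
  have hθd : ∀ t ∈ Icc (0:ℝ) T, HasDerivWithinAt θ (-(x' t ^ 2 + x t * G t) / (r t) ^ 2)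
      (Icc 0 T) t := by
    intro t ht
    have h1 : HasDerivAt (fun t => (w t).im) (q t).im t :=
      (Complex.imCLM.hasFDerivAt.comp_hasDerivAt t (hwd t))
    have h2 := (h1.const_add (z 0).arg).hasDerivWithinAt (s := Icc 0 T)
    refine h2.congr_deriv ?_
    rw [hq t ht, Complex.div_im]
    have h3 : Complex.normSq (z t) = r t ^ 2 := by
      rw [Complex.normSq_apply]
      change x t * x t + x' t * x' t = _
      rw [hxr t ht, hxr' t ht]
      linear_combination (r t)^2 * sin_sq_add_cos_sq (θ t)
    rw [h3]
    change -(G t) * x t / _ - x' t * x' t / _ = _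
    ring
  obtain ⟨k, hk⟩ : ∃ k : ℤ, θ T = θ 0 + k * (2 * π) := by
    have h1 := hzw T mT
    have h2 : z T = z 0 := by simp only [hz]; rw [h0, h0']
    rw [h2] at h1
    have h3 : Complex.exp (w T) = 1 := by
      have := hz0 0 m0
      exact mul_left_cancel₀ this (by rw [← h1, mul_one])
    obtain ⟨k, hk⟩ := Complex.exp_eq_one_iff.1 h3
    refine ⟨k, ?_⟩
    simp only [hθ, hw0, hk]
    simp
  refine ⟨-k, fun a b c ha hb => ?_⟩
  have hQd : ∀ t ∈ Icc (0:ℝ) T, HasDerivWithinAt (fun t => Qf a b (θ t))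
      (-((x' t ^ 2 + x t * G t) / (x' t ^ 2 + kap a b (x t)))) (Icc 0 T) t := by
    intro t ht
    have h1 := (Qf_hasDerivAt ha hb (θ t)).comp_hasDerivWithinAt t (hθd t ht)
    refine h1.congr_deriv ?_
    have h2 : x' t ^ 2 + kap a b (x t) = r t ^ 2 * (sin (θ t) ^ 2 + kap a b (cos (θ t))) := by
      rw [hxr t ht, hxr' t ht, kap_mul (hrpos t).le]; ring
    rw [h2, wt]
    have h3 := wt_den_pos ha hb (θ t)
    have h4 := hrpos t
    generalize x' t ^ 2 + x t * G t = A
    field_simp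
  have hQT := Qf_add ha hb (θ 0) k
  rw [← hk] at hQT
  have hSpos : ∀ t ∈ Icc (0:ℝ) T, 0 < x' t ^ 2 + kap a b (x t) := fun t ht =>
    kap_pos ha hb (hpos t ht)
  push_cast
  constructor
  · intro h
    have := mono_aux (c := -c) hQd (fun t ht => by
      rw [neg_le_neg_iff, div_le_iff₀ (hSpos t ht)]
      exact h t ht) 0 m0 T mT hT.le
    linarith
  · intro h
    have := mono_aux (c := c) (fun t ht => (hQd t ht).neg) (fun t ht => by
      rw [neg_neg, le_div_iff₀ (hSpos t ht)]
      exact h t ht) 0 m0 T mT hT.le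
    simp only [Pi.neg_apply] at this
    linarith

lemma g_bounds {R0 T L0 δ lo hi M : ℝ} (hR0 : 0 < R0) (hδ : 0 < δ) (hlo0 : 0 < lo) (hhi0 : 0 < hi)
    (hM : R0 ≤ M) {f : ℝ → ℝ → ℝ}
    (hf_cont : ContinuousOn (fun q : ℝ × ℝ => f q.1 q.2) (univ ×ˢ Ici R0))
    (hlo : ∀ t ρ : ℝ, M ≤ ρ → lo < f t ρ / ρ)
    (hhi : ∀ t ρ : ℝ, M ≤ ρ → f t ρ / ρ < hi) :
    ∃ B : ℝ, δ ≤ B ∧ ∀ n : ℕ, 1 ≤ n → ∀ L ∈ Icc (0:ℝ) L0, ∀ t ∈ Icc (0:ℝ) T, ∀ x : ℝ, 0 ≤ x →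
      lo * x - B ≤ gApprox R0 δ f n L t x ∧ gApprox R0 δ f n L t x ≤ hi * x + B := by
  obtain ⟨C0, hC0⟩ : ∃ C : ℝ, ∀ q ∈ (Icc (0:ℝ) T) ×ˢ (Icc R0 M), ‖f q.1 q.2‖ ≤ C :=
    (isCompact_Icc.prod isCompact_Icc).exists_bound_of_continuousOn
      (hf_cont.mono (prod_mono (subset_univ _) (fun y hy => hy.1)))
  obtain ⟨C, hC0', hC⟩ : ∃ C : ℝ, 0 ≤ C ∧ ∀ t ∈ Icc (0:ℝ) T, ∀ ρ ∈ Icc R0 M, |f t ρ| ≤ C :=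
    ⟨max C0 0, le_max_right _ _, fun t ht ρ hρ =>
      le_trans (hC0 (t, ρ) ⟨ht, hρ⟩) (le_max_left _ _)⟩
  have hM0 : 0 < M := lt_of_lt_of_le hR0 hM
  have hfb : ∀ t ∈ Icc (0:ℝ) T, ∀ x : ℝ, 0 ≤ x →
      lo * x - (C + lo * M) ≤ f t (x + R0) ∧ f t (x + R0) ≤ hi * x + (C + hi * R0) := by
    intro t ht x hx
    have hloM : 0 < lo * M := by positivity
    have hhiR : 0 < hi * R0 := by positivity
    have hloR : 0 < lo * R0 := by positivity
    have hhix : 0 ≤ hi * x := by positivity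
    rcases le_total M (x + R0) with h | h
    · have hp : 0 < x + R0 := by linarith
      have h1 := (lt_div_iff₀ hp).1 (hlo t _ h)
      have h2 := (div_lt_iff₀ hp).1 (hhi t _ h)
      constructor <;> nlinarith
    · have h1 := abs_le.1 (hC t ht (x + R0) ⟨by linarith, h⟩)
      have h2 : lo * x ≤ lo * M := by gcongr; linarith
      constructor <;> linarith
  set D := L0 ^ 2 / R0 ^ 3 with hD
  have hD0 : 0 ≤ D := by positivity
  have hloM : 0 < lo * M := by positivity
  have hhiR : 0 < hi * R0 := by positivity
  have hgb : ∀ L ∈ Icc (0:ℝ) L0, ∀ t ∈ Icc (0:ℝ) T, ∀ x : ℝ, 0 ≤ x →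
      lo * x - (C + lo * M + D) ≤ gFun R0 f L t x ∧ gFun R0 f L t x ≤ hi * x + (C + hi * R0) := by
    intro L hL t ht x hx
    have h1 := hfb t ht x hx
    have h2 : L ^ 2 / (x + R0) ^ 3 ≤ D := by
      rw [hD]
      have := hL.1
      have := hL.2
      gcongr
      linarith
    have h3 : 0 ≤ L ^ 2 / (x + R0) ^ 3 := by positivity
    unfold gFun
    rw [neg_div]
    constructor <;> linarith
  refine ⟨C + lo * M + hi * R0 + D + δ + lo, by linarith, ?_⟩
  intro n hn L hL t ht x hx
  have hn' : (1:ℝ) ≤ n := by exact_mod_cast hn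
  have hn0 : (0:ℝ) < n := by linarith
  have h1 := hgb L hL t ht x hx
  have hhix : 0 ≤ hi * x := by positivity
  unfold gApprox
  split_ifs with c1 c2
  · constructor <;> linarith
  · push Not at c1
    have hs1 : (n:ℝ) * x < 1 := by rwa [lt_div_iff₀ hn0, mul_comm] at c1
    have hs0 : 0 < (n:ℝ) * x := by positivity
    have hx1 : x ≤ 1 := by nlinarith
    have hlox : lo * x ≤ lo := by nlinarith
    set s := (n:ℝ) * x
    set g := gFun R0 f L t x
    have e : s * (g + δ) - δ = s * g + (1 - s) * (-δ) := by ring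
    rw [e]
    set Bl := lo * x - (C + lo * M + hi * R0 + D + δ + lo)
    set Bh := hi * x + (C + lo * M + hi * R0 + D + δ + lo)
    have a1 : Bl ≤ g := by simp only [Bl]; linarith
    have a2 : Bl ≤ -δ := by simp only [Bl]; linarith
    have a3 : g ≤ Bh := by simp only [Bh]; linarith
    have a4 : -δ ≤ Bh := by simp only [Bh]; linarith
    constructor
    · nlinarith [mul_le_mul_of_nonneg_left a1 hs0.le,
        mul_le_mul_of_nonneg_left a2 (sub_nonneg.2 hs1.le)]
    · nlinarith [mul_le_mul_of_nonneg_left a3 hs0.le,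
        mul_le_mul_of_nonneg_left a4 (sub_nonneg.2 hs1.le)]
  · have : x = 0 := le_antisymm (not_lt.1 c2) hx
    subst this
    constructor <;> linarith

lemma gApprox_nonpos {R0 δ : ℝ} {f : ℝ → ℝ → ℝ} {n : ℕ} (hn : 1 ≤ n) {L t x : ℝ} (hx : x ≤ 0) :
    gApprox R0 δ f n L t x = n * x - δ := by
  have hn0 : (0:ℝ) < n := by exact_mod_cast hn
  have : 0 < 1 / (n:ℝ) := by positivity
  unfold gApprox
  rw [if_neg (by linarith), if_neg (by linarith)]

lemma gApprox_eq {R0 δ : ℝ} {f : ℝ → ℝ → ℝ} {n : ℕ} (hn : 1 ≤ n) (L t x : ℝ) :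
    gApprox R0 δ f n L t x = min 1 (max 0 ((n:ℝ) * x)) * (gFun R0 f L t (max x 0) + δ) - δ
      + min ((n:ℝ) * x) 0 := by
  have hn0 : (0:ℝ) < n := by exact_mod_cast hn
  rcases le_or_gt x 0 with hx | hx
  · rw [gApprox_nonpos hn hx]
    have : (n:ℝ) * x ≤ 0 := mul_nonpos_of_nonneg_of_nonpos hn0.le hx
    rw [max_eq_left this, min_eq_left this]
    simp; ring
  · have h1 : 0 < (n:ℝ) * x := by positivity
    rw [max_eq_right h1.le, min_eq_right h1.le, max_eq_left hx.le]
    unfold gApprox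
    split_ifs with c1
    · rw [div_le_iff₀ hn0, mul_comm] at c1
      rw [min_eq_left c1]; ring
    · push Not at c1
      rw [lt_div_iff₀ hn0, mul_comm] at c1
      rw [min_eq_right c1.le]; ring

lemma gApprox_cont {R0 T δ : ℝ} (hR0 : 0 < R0) {f : ℝ → ℝ → ℝ}
    (hf_cont : ContinuousOn (fun q : ℝ × ℝ => f q.1 q.2) (univ ×ˢ Ici R0))
    {n : ℕ} (hn : 1 ≤ n) (L : ℝ) {x : ℝ → ℝ} (hx : ContinuousOn x (Icc 0 T)) :
    ContinuousOn (fun t => gApprox R0 δ f n L t (x t)) (Icc 0 T) := by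
  simp only [gApprox_eq hn]
  have h1 : ContinuousOn (fun t => f t (max (x t) 0 + R0)) (Icc 0 T) := by
    have h2 : ContinuousOn (fun t => (t, max (x t) 0 + R0)) (Icc 0 T) := by fun_prop
    exact hf_cont.comp h2 (fun t _ => ⟨mem_univ _, by simp⟩)
  have h3 : ContinuousOn (fun t => gFun R0 f L t (max (x t) 0)) (Icc 0 T) := by
    unfold gFun
    refine ContinuousOn.add (ContinuousOn.div continuousOn_const (by fun_prop) ?_) h1
    intro t _
    have : 0 ≤ max (x t) 0 := le_max_right _ _
    positivity
  fun_prop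

lemma small_aux {B ε a : ℝ} (hB : 0 < B) (hε : 0 < ε) (ha : 0 < a) :
    ∃ M0 : ℝ, 0 < M0 ∧ ∀ b x y : ℝ, 1 ≤ b → M0 ≤ y ^ 2 + kap 1 b x →
      B * |x| ≤ ε * (y ^ 2 + kap a b x) := by
  set m := min 1 a with hm
  have hm0 : 0 < m := lt_min one_pos ha
  refine ⟨(B / (ε * m)) ^ 2, by positivity, fun b x y hb hM => ?_⟩
  have hS : m * (y ^ 2 + kap 1 b x) ≤ y ^ 2 + kap a b x := by
    have h1 : m ≤ 1 := min_le_left _ _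
    have h2 : m ≤ a := min_le_right _ _
    have hy := sq_nonneg y
    have hx2 := sq_nonneg x
    rcases le_total 0 x with h | h
    · rw [kap_of_nonneg h, kap_of_nonneg h]; nlinarith
    · rw [kap_of_nonpos h, kap_of_nonpos h]
      have : 0 ≤ b * x ^ 2 := by positivity
      nlinarith
  have hE : |x| ^ 2 ≤ y ^ 2 + kap 1 b x := by
    have hy := sq_nonneg y
    have hx2 := sq_nonneg x
    rw [sq_abs]
    rcases le_total 0 x with h | h
    · rw [kap_of_nonneg h]; nlinarith
    · rw [kap_of_nonpos h]; nlinarith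
  set E := y ^ 2 + kap 1 b x
  have h1 : B = ε * m * (B / (ε * m)) := by field_simp
  set u := B / (ε * m)
  have hem : 0 < ε * m := by positivity
  have h2 : u * |x| ≤ E := by nlinarith [sq_nonneg (u - |x|)]
  calc B * |x| = ε * m * (u * |x|) := by rw [h1]; ring
    _ ≤ ε * m * E := by gcongr
    _ = ε * (m * E) := by ring
    _ ≤ _ := by gcongr

lemma gron {T C : ℝ} {E E' : ℝ → ℝ}  (hC : 0 ≤ C)
    (hd : ∀ t ∈ Icc (0:ℝ) T, HasDerivWithinAt E (E' t) (Icc 0 T) t)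
    (hE : ∀ t ∈ Icc (0:ℝ) T, 0 ≤ E t)
    (hb : ∀ t ∈ Icc (0:ℝ) T, |E' t| ≤ C * (E t + 1)) :
    ∀ s ∈ Icc (0:ℝ) T, ∀ t ∈ Icc (0:ℝ) T, E t + 1 ≤ (E s + 1) * Real.exp (C * T) := by
  have hexp : ∀ c t : ℝ, HasDerivWithinAt (fun t => Real.exp (c * t)) (Real.exp (c * t) * c)
      (Icc 0 T) t := by
    intro c t
    have : HasDerivAt (fun t : ℝ => c * t) c t := by
      simpa using (hasDerivAt_id t).const_mul c
    exact this.exp.hasDerivWithinAt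
  have hd1 : ∀ c : ℝ, ∀ t ∈ Icc (0:ℝ) T,
      HasDerivWithinAt (fun t => (E t + 1) * Real.exp (c * t))
        ((E' t + c * (E t + 1)) * Real.exp (c * t)) (Icc 0 T) t := by
    intro c t ht
    refine (((hd t ht).add_const 1).mul (hexp c t)).congr_deriv ?_
    ring
  intro s hs t ht
  have key : ∀ d : ℝ, d ≤ T → (E s + 1) * Real.exp (C * d) ≤ (E s + 1) * Real.exp (C * T) := by
    intro d hd
    have := hE s hs
    gcongr
  rcases le_total s t with h | h
  · have := mono_aux (c := 0) (fun t ht => (hd1 (-C) t ht).neg) (fun t ht => by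
      have := (abs_le.1 (hb t ht)).2
      have h2 := Real.exp_pos (-C * t)
      rw [← neg_mul]
      apply mul_nonneg _ h2.le
      linarith) s hs t ht h
    simp only [Pi.neg_apply] at this
    refine le_trans ?_ (key (t - s) (by linarith [hs.1, ht.2]))
    have e : C * (t - s) = -C * s - (-C * t) := by ring
    rw [e, Real.exp_sub, ← mul_div_assoc, le_div_iff₀ (Real.exp_pos _)]
    linarith
  · have := mono_aux (c := 0) (fun t ht => (hd1 C t ht)) (fun t ht => by
      have := (abs_le.1 (hb t ht)).1
      have h2 := Real.exp_pos (C * t)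
      apply mul_nonneg _ h2.le
      linarith) t ht s hs h
    refine le_trans ?_ (key (s - t) (by linarith [ht.1, hs.2]))
    have e : C * (s - t) = C * s - (C * t) := by ring
    rw [e, Real.exp_sub, ← mul_div_assoc, le_div_iff₀ (Real.exp_pos _)]
    linarith

set_option maxHeartbeats 1000000 in
theorem statement6
    (R0 T L0 δ : ℝ) (hR0 : 0 < R0) (hT : 0 < T) (hL0 : 0 < L0) (hδ : 0 < δ)
    (f : ℝ → ℝ → ℝ)
    (hf_cont : ContinuousOn (fun q : ℝ × ℝ => f q.1 q.2) (univ ×ˢ Ici R0))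
    (hf_per : ∀ t ρ, f (t + T) ρ = f t ρ)
    (μlo μhi : ℝ) (N : ℕ) (hμ : μlo ≤ μhi)
    (h1 : ((N : ℝ) * π / T) ^ 2 < μlo)
    (h2 : μhi < (((N : ℝ) + 1) * π / T) ^ 2)
    (hlo : ∀ ε > (0 : ℝ), ∃ M : ℝ, R0 ≤ M ∧ ∀ t ρ : ℝ, M ≤ ρ → μlo - ε < f t ρ / ρ)
    (hhi : ∀ ε > (0 : ℝ), ∃ M : ℝ, R0 ≤ M ∧ ∀ t ρ : ℝ, M ≤ ρ → f t ρ / ρ < μhi + ε) :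
    ∃ nbar : ℕ, 0 < nbar ∧ ∃ Ξ : Set (ℝ × ℝ),
      IsOpen Ξ ∧ Bornology.IsBounded Ξ ∧ Ξ ⊆ Ioi (-R0 / 2) ×ˢ (univ : Set ℝ) ∧
      ∀ n : ℕ, nbar < n → ∀ L ∈ Icc (0 : ℝ) L0, ∀ x x' : ℝ → ℝ,
        (∀ t ∈ Icc (0 : ℝ) T,
          HasDerivWithinAt x (x' t) (Icc (0 : ℝ) T) t ∧
          HasDerivWithinAt x' (-(gApprox R0 δ f n L t (x t))) (Icc (0 : ℝ) T) t) →
        x 0 = x T → x' 0 = x' T →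
        ∀ t ∈ Icc (0 : ℝ) T, (x t, x' t) ∈ Ξ := by

  have hpi := Real.pi_pos
  obtain ⟨lo, hlo1, hlo2⟩ := exists_between h1
  obtain ⟨hi, hhi1, hhi2⟩ := exists_between h2
  have hlo0 : 0 < lo := lt_of_le_of_lt (sq_nonneg _) hlo1
  have hhi0 : 0 < hi := by linarith
  obtain ⟨M1, hM1, hlo'⟩ := hlo (μlo - lo) (by linarith)
  obtain ⟨M2, hM2, hhi'⟩ := hhi (hi - μhi) (by linarith)
  obtain ⟨B, hδB, hB⟩ := g_bounds (T := T) (L0 := L0) (M := max M1 M2) hR0 hδ hlo0 hhi0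
    (le_trans hM1 (le_max_left _ _)) hf_cont
    (fun t ρ h => by have := hlo' t ρ (le_trans (le_max_left _ _) h); linarith)
    (fun t ρ h => by have := hhi' t ρ (le_trans (le_max_right _ _) h); linarith)
  have hB0 : 0 < B := by linarith
  have hslo : 0 < √lo := Real.sqrt_pos.2 hlo0
  have hshi : 0 < √hi := Real.sqrt_pos.2 hhi0
  have hsl : (N:ℝ) * π / T < √lo := by
    apply Real.lt_sqrt_of_sq_lt hlo1
  have hsh : √hi < ((N:ℝ) + 1) * π / T := by
    rw [Real.sqrt_lt' (by positivity)]; exact hhi2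
  have hl : (N:ℝ) * (π / √lo) < T := by
    rw [div_lt_iff₀ hT] at hsl
    rw [← mul_div_assoc, div_lt_iff₀ hslo]; linarith
  have hh : T < ((N:ℝ) + 1) * (π / √hi) := by
    rw [lt_div_iff₀ hT] at hsh
    rw [← mul_div_assoc, lt_div_iff₀ hshi]; linarith
  obtain ⟨ε, hε0, hεl, hεh⟩ : ∃ ε : ℝ, 0 < ε ∧ (N:ℝ) * (π / √lo) < (1 - ε) * T ∧
      (1 + ε) * T < ((N:ℝ) + 1) * (π / √hi) := by
    have t1 : Tendsto (fun ε : ℝ => (1 - ε) * T) (nhdsWithin 0 (Ioi 0)) (nhds T) := by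
      have : Continuous (fun ε : ℝ => (1 - ε) * T) := by fun_prop
      simpa using (this.tendsto 0).mono_left nhdsWithin_le_nhds
    have t2 : Tendsto (fun ε : ℝ => (1 + ε) * T) (nhdsWithin 0 (Ioi 0)) (nhds T) := by
      have : Continuous (fun ε : ℝ => (1 + ε) * T) := by fun_prop
      simpa using (this.tendsto 0).mono_left nhdsWithin_le_nhds
    obtain ⟨ε, h⟩ := ((eventually_mem_nhdsWithin (a := (0:ℝ)) (s := Ioi 0)).and
      ((t1.eventually (lt_mem_nhds hl)).and (t2.eventually (gt_mem_nhds hh)))).exists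
    exact ⟨ε, h.1, h.2.1, h.2.2⟩
  obtain ⟨Ma, hMa0, hMa⟩ := small_aux hB0 hε0 hlo0
  obtain ⟨Mb, hMb0, hMb⟩ := small_aux hB0 hε0 hhi0
  set M := max Ma Mb with hM
  have hM0 : 0 < M := lt_of_lt_of_le hMa0 (le_max_left _ _)
  set C := (1 + hi) + B with hC
  have hC0 : 0 ≤ C := by positivity
  set K := (M + 1) * Real.exp (C * T) with hK
  have hK0 : 0 < K := by positivity
  obtain ⟨n0, hn0⟩ : ∃ n0 : ℕ, ∀ n : ℕ, n0 ≤ n → (N:ℝ) * (π / √lo + π / √(n:ℝ)) < (1 - ε) * T ∧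
      K < n * (R0 / 2) ^ 2 := by
    have t0 : Tendsto (fun n : ℕ => √(n:ℝ)) atTop atTop :=
      Real.tendsto_sqrt_atTop.comp tendsto_natCast_atTop_atTop
    have t1 : Tendsto (fun n : ℕ => (N:ℝ) * (π / √lo + π / √(n:ℝ))) atTop
        (nhds ((N:ℝ) * (π / √lo + 0))) :=
      ((t0.const_div_atTop π).const_add _).const_mul _
    rw [add_zero] at t1
    have t2 : Tendsto (fun n : ℕ => (n:ℝ) * (R0 / 2) ^ 2) atTop atTop :=
      tendsto_natCast_atTop_atTop.atTop_mul_const (by positivity)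
    exact eventually_atTop.1 ((t1.eventually (gt_mem_nhds hεl)).and (t2.eventually_gt_atTop K))
  refine ⟨n0 + 1, by omega, Ioo (-R0 / 2) (K + 1) ×ˢ Ioo (-(K + 1)) (K + 1),
    isOpen_Ioo.prod isOpen_Ioo, (Metric.isBounded_Ioo _ _).prod (Metric.isBounded_Ioo _ _),
    prod_mono (fun y hy => hy.1) (subset_univ _), ?_⟩
  intro n hn L hL x x' hsol hx0 hx0'
  have hn1 : 1 ≤ n := by omega
  have hn1' : (1:ℝ) ≤ n := by exact_mod_cast hn1
  have hnpos : (0:ℝ) < n := by linarith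
  obtain ⟨hnA, hnB⟩ := hn0 n (by omega)
  set G : ℝ → ℝ := fun t => gApprox R0 δ f n L t (x t) with hG
  have hxd : ∀ t ∈ Icc (0:ℝ) T, HasDerivWithinAt x (x' t) (Icc 0 T) t := fun t ht => (hsol t ht).1
  have hxd' : ∀ t ∈ Icc (0:ℝ) T, HasDerivWithinAt x' (-(G t)) (Icc 0 T) t :=
    fun t ht => (hsol t ht).2
  have hxc : ContinuousOn x (Icc 0 T) := fun t ht => (hxd t ht).continuousWithinAt
  have hGc : ContinuousOn G (Icc 0 T) := gApprox_cont hR0 hf_cont hn1 L hxc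
  set E : ℝ → ℝ := fun t => x' t ^ 2 + kap 1 n (x t) with hE
  set E' : ℝ → ℝ := fun t => 2 * x' t * ((max (x t) 0 + n * min (x t) 0) - G t) with hE'
  have hEd : ∀ t ∈ Icc (0:ℝ) T, HasDerivWithinAt E (E' t) (Icc 0 T) t := by
    intro t ht
    have e1 := (hxd' t ht).pow 2
    have e2 := (kap_hasDerivAt 1 n (x t)).comp_hasDerivWithinAt t (hxd t ht)
    refine (e1.add e2).congr_deriv ?_
    simp only [hE']
    push_cast
    ring
  have hkn : ∀ y : ℝ, 0 ≤ kap 1 n y := by intro y; unfold kap; positivity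
  have hE0 : ∀ t ∈ Icc (0:ℝ) T, 0 ≤ E t := by
    intro t _
    have := hkn (x t)
    simp only [hE]; positivity
  have hEb : ∀ t ∈ Icc (0:ℝ) T, |E' t| ≤ C * (E t + 1) := by
    intro t ht
    have hp : |(max (x t) 0 + n * min (x t) 0) - G t| ≤ (1 + hi) * max (x t) 0 + B := by
      rcases le_total 0 (x t) with h | h
      · rw [max_eq_left h, min_eq_right h]
        have := hB n hn1 L hL t ht (x t) h
        have hlx : 0 ≤ lo * x t := by positivity
        have hhx : 0 ≤ hi * x t := by positivity
        simp only [hG]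
        rw [abs_le]
        constructor <;> linarith [this.1, this.2]
      · simp only [hG]
        rw [max_eq_right h, min_eq_left h, gApprox_nonpos hn1 h]
        rw [show (0 + (n:ℝ) * x t - (n * x t - δ)) = δ by ring, abs_of_pos hδ]
        linarith
    have hq : (max (x t) 0) ^ 2 ≤ kap 1 n (x t) := by
      unfold kap
      have : 0 ≤ (n:ℝ) * (min (x t) 0) ^ 2 := by positivity
      linarith
    simp only [hE', hE, hC]
    rw [abs_mul, abs_mul, abs_two]
    set p := max (x t) 0 with hp'
    have hp0 : 0 ≤ p := le_max_right _ _
    have hs : |x' t| ^ 2 = x' t ^ 2 := sq_abs _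
    have ha := abs_nonneg (x' t)
    calc 2 * |x' t| * |p + ↑n * min (x t) 0 - G t|
        ≤ 2 * |x' t| * ((1 + hi) * p + B) := by gcongr
      _ = (1 + hi) * (2 * |x' t| * p) + B * (2 * |x' t|) := by ring
      _ ≤ (1 + hi) * (x' t ^ 2 + kap 1 n (x t) + 1) + B * (x' t ^ 2 + kap 1 n (x t) + 1) := by
          have := hkn (x t)
          gcongr
          · have hsq := sq_nonneg (|x' t| - p)
            rw [sub_sq] at hsq
            linarith
          · have hsq := sq_nonneg (|x' t| - 1)
            rw [sub_sq] at hsq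
            linarith
      _ = _ := by ring
  have hgr := gron hC0 hEd hE0 hEb
  have hEK : ∀ t ∈ Icc (0:ℝ) T, E t + 1 ≤ K := by
    by_contra hcon
    push Not at hcon
    obtain ⟨t0, ht0, hlt⟩ := hcon
    have hbig : ∀ s ∈ Icc (0:ℝ) T, M ≤ E s := by
      intro s hs
      have a1 := lt_of_lt_of_le hlt (hgr s hs t0 ht0)
      rw [hK] at a1
      have a2 := lt_of_mul_lt_mul_right a1 (Real.exp_pos _).le
      linarith
    have hpos : ∀ t ∈ Icc (0:ℝ) T, 0 < x' t ^ 2 + x t ^ 2 := by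
      intro t ht
      have a1 := hbig t ht
      by_contra hc
      have c1 := sq_nonneg (x' t)
      have c2 := sq_nonneg (x t)
      have b1 : x' t = 0 := pow_eq_zero_iff (two_ne_zero) |>.1 (by linarith)
      have b2 : x t = 0 := pow_eq_zero_iff (two_ne_zero) |>.1 (by linarith)
      simp only [hE, b1, b2, kap] at a1
      norm_num at a1
      linarith
    obtain ⟨k, hk⟩ := phase hT hxd hxd' hGc hpos hx0 hx0'
    have hup : ∀ t ∈ Icc (0:ℝ) T, x t * G t ≤ kap hi n (x t) + B * |x t| ∧
        kap lo n (x t) - B * |x t| ≤ x t * G t := by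
      intro t ht
      rcases le_total 0 (x t) with h | h
      · rw [kap_of_nonneg h, kap_of_nonneg h, abs_of_nonneg h]
        have := hB n hn1 L hL t ht (x t) h
        simp only [hG]
        constructor
        · linarith [mul_le_mul_of_nonneg_left this.2 h]
        · linarith [mul_le_mul_of_nonneg_left this.1 h]
      · rw [kap_of_nonpos h, kap_of_nonpos h, abs_of_nonpos h]
        simp only [hG]
        rw [gApprox_nonpos hn1 h]
        have a1 := mul_le_mul_of_nonpos_right hδB h
        have a2 := mul_nonpos_of_nonneg_of_nonpos hδ.le h
        have a3 := mul_nonpos_of_nonneg_of_nonpos hB0.le h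
        constructor <;> linarith
    have k1 := (hk hi n (1 + ε) hhi0 hnpos).1 (fun t ht => by
      have a1 := hMb n (x t) (x' t) hn1' (le_trans (le_max_right _ _) (hbig t ht))
      have a2 := (hup t ht).1
      linarith)
    have k2 := (hk lo n (1 - ε) hlo0 hnpos).2 (fun t ht => by
      have a1 := hMa n (x t) (x' t) hn1' (le_trans (le_max_left _ _) (hbig t ht))
      have a2 := (hup t ht).2
      linarith)
    have hsn : 0 < √(n:ℝ) := Real.sqrt_pos.2 hnpos
    have hpn : 0 < π / √(n:ℝ) := by positivity
    have hplo : 0 < π / √lo := by positivity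
    have hphi : 0 < π / √hi := by positivity
    rcases le_or_gt k (N:ℤ) with hkN | hkN
    · have : (k:ℝ) ≤ N := by exact_mod_cast hkN
      have := mul_le_mul_of_nonneg_right this (add_pos hplo hpn).le
      linarith
    · have : (N:ℝ) + 1 ≤ k := by exact_mod_cast hkN
      have b1 := mul_le_mul_of_nonneg_right this (add_pos hphi hpn).le
      have b2 : 0 < ((N:ℝ) + 1) * (π / √(n:ℝ)) := by positivity
      rw [mul_add ((N:ℝ) + 1)] at b1
      linarith
  intro t ht
  have hKt := hEK t ht
  simp only [hE] at hKt
  have hkt := hkn (x t)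
  have hv : x' t ^ 2 < (K + 1) ^ 2 := by nlinarith
  have hv' := abs_lt.1 (abs_lt_of_sq_lt_sq hv (by positivity))
  refine ⟨⟨?_, ?_⟩, hv'⟩
  · change -R0 / 2 < x t
    by_contra hc
    push Not at hc
    rw [kap_of_nonpos (by linarith)] at hKt
    have : (R0 / 2) ^ 2 ≤ x t ^ 2 := by nlinarith
    have := mul_le_mul_of_nonneg_left this hnpos.le
    nlinarith [sq_nonneg (x' t)]
  · change x t < K + 1
    by_contra hc
    push Not at hc
    rw [kap_of_nonneg (by linarith)] at hKt
    nlinarith [sq_nonneg (x' t)]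
end
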